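/- arXiv:2209.02657 — 2 statements merged into one kernel-verified Lean document; each statement's English description precedes it below -/
import Mathlib

section
/- Let n ≥ 2 and let q > 2 be a prime power. Let Σ be a nonempty family of hyperplanes of PG(2n+1,q) satisfying properties (P1^+) and (P2). Then there exists a nonsingular hyperbolic quadratic form φ on V = F^{2n+2}, with hyperbolic quadric Q = Q^+(2n+1,q), such that Σ is exactly the set of all hyperplanes of PG(2n+1,q) that are parabolic with respect to Q, i.e. that contain exactly (q^{2n}−1)/(q−1) points of Q. -/
/-!
The hyperplanes outside the family are regarded as a set `Q` of vectors of the dual space. (P1⁺)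
prescribes two values for the size of a hyperplane section of `Q`, and (P2) says that `Q` contains
every line on which it has three points; it remains to see that such a set is a hyperbolic quadric.

By (P1⁺) the Fourier transform of the indicator function of `Q` takes only two values away from
zero. Its second moment determines them and `#Q`, and then all the numbers `#(Q ∩ (Q + d))`. Hence a
subspace inside `Q` of dimension at most `n` extends inside `Q`, and a vector of `Q` outside a
generator (a subspace of dimension `n + 1` inside `Q`) is collinear with exactly a hyperplane of it.
This produces two complementary generators `A` and `B`. The relation `a + b ∈ Q` between `A` and `B`
is linear in each variable, and closure of `Q` under lines makes it the zero set of a bilinear form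
`T`, so `Q` is the zero set of the quadratic form `a + b ↦ T a b`. The polarity of this form carries
`Q` back to the original space, where the size of a section by a hyperplane tells whether the
hyperplane is a point of `Q`.
-/

section BilinearRelations

open AffineMap (lineMap)

variable {K A B : Type*} [Field K] [AddCommGroup A] [Module K A] [AddCommGroup B] [Module K B]

lemma exists_linearMap_eq_of_map_lineMap {t : K} (ht0 : t ≠ 0) (ht1 : t ≠ 1) {f : A → B}
    (h0 : f 0 = 0) (hf : ∀ u v (l : K), f (lineMap u v l) = lineMap (f u) (f v) l) :
    ∃ L : A →ₗ[K] B, ⇑L = f := by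
  have hsmul (c : K) (u : A) : f (c • u) = c • f u := by
    simpa [AffineMap.lineMap_apply, h0] using hf 0 u c
  have hadd (u v : A) : f (u + v) = f u + f v := by
    have := hf ((1 - t)⁻¹ • u) (t⁻¹ • v) t
    simpa [AffineMap.lineMap_apply_module, hsmul, smul_smul, ht0, sub_ne_zero.2 ht1.symm] using this
  exact ⟨⟨⟨f, hadd⟩, hsmul⟩, rfl⟩

lemma dual_eq_of_apply_eq_one {f g : Module.Dual K B} {b₀ : B} (hf : f b₀ = 1) (hg : g b₀ = 1)
    (h : ∀ b, f b = 0 → g b = 0) : f = g := by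
  ext b
  have := h (b - f b • b₀) (by simp [hf])
  simp only [map_sub, map_smul, hg, smul_eq_mul, mul_one, sub_eq_zero] at this
  exact this.symm

variable {R : A → B → Prop}

/-- The functional `θ a` cuts out the vectors related to the projection of `a` onto the affine
hyperplane `σ = 1`; normalizing its value at `b₀` makes it depend affinely on `a`. -/
lemma exists_dual_map_lineMap
    (hB : ∀ a, ∃ τ : Module.Dual K B, ∀ b, R a b ↔ τ b = 0)
    (hR : ∀ a b a' b', R a b → R a' b' → R (a' - a) (b' - b) →
      ∀ l : K, R (lineMap a a' l) (lineMap b b' l))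
    {σ : Module.Dual K A} {a₀ : A} {b₀ : B} (hσ : ∀ a, R a b₀ ↔ σ a = 0) (ha₀ : σ a₀ = 1) :
    ∃ θ : A → Module.Dual K B, (∀ a, θ a b₀ = 1) ∧
      (∀ a b, R (a + (1 - σ a) • a₀) b ↔ θ a b = 0) ∧
      ∀ a a' (l : K), θ (lineMap a a' l) = lineMap (θ a) (θ a') l := by
  have hθ (a : A) : ∃ θ : Module.Dual K B, θ b₀ = 1 ∧ ∀ b, R (a + (1 - σ a) • a₀) b ↔ θ b = 0 := by
    obtain ⟨τ, hτ⟩ := hB (a + (1 - σ a) • a₀)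
    have hτ₀ : τ b₀ ≠ 0 := by simp [← hτ, hσ, ha₀]
    exact ⟨(τ b₀)⁻¹ • τ, by simp [hτ₀], fun b ↦ by simp [hτ, hτ₀]⟩
  choose θ hθ₀ hθR using hθ
  refine ⟨θ, hθ₀, hθR, fun a a' l ↦ .symm ?_⟩
  refine dual_eq_of_apply_eq_one (b₀ := b₀) (by simp [AffineMap.lineMap_apply_module, hθ₀]) (hθ₀ _)
    fun b hb ↦ ?_
  have hab : R (a + (1 - σ a) • a₀) (b - θ a b • b₀) := by simp [hθR, hθ₀]
  have hab' : R (a' + (1 - σ a') • a₀) (b - θ a' b • b₀) := by simp [hθR, hθ₀]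
  have hsub : R (a' + (1 - σ a') • a₀ - (a + (1 - σ a) • a₀))
      (b - θ a' b • b₀ - (b - θ a b • b₀)) := by
    obtain ⟨τ, hτ⟩ := hB (a' + (1 - σ a') • a₀ - (a + (1 - σ a) • a₀))
    have hτ₀ : τ b₀ = 0 := by simp [← hτ, hσ, ha₀]
    simp [hτ, hτ₀]
  have hline := hR _ _ _ _ hab hab' hsub l
  rw [← hθR]
  convert hline using 1
  · simp only [AffineMap.lineMap_apply_module, map_add, map_smul, smul_eq_mul]
    module
  · simp only [AffineMap.lineMap_apply_module, LinearMap.add_apply, LinearMap.smul_apply,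
      smul_eq_mul] at hb
    rw [AffineMap.lineMap_apply_module, show (1 - l) • (b - θ a b • b₀) + l • (b - θ a' b • b₀) =
      b - ((1 - l) * θ a b + l * θ a' b) • b₀ by module, hb, zero_smul, sub_zero]

lemma exists_bilin_eq_zero_iff {t : K} (ht0 : t ≠ 0) (ht1 : t ≠ 1)
    (hA : ∀ b, ∃ σ : Module.Dual K A, ∀ a, R a b ↔ σ a = 0)
    (hB : ∀ a, ∃ τ : Module.Dual K B, ∀ b, R a b ↔ τ b = 0)
    (hR : ∀ a b a' b', R a b → R a' b' → R (a' - a) (b' - b) →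
      ∀ l : K, R (lineMap a a' l) (lineMap b b' l)) :
    ∃ T : A →ₗ[K] B →ₗ[K] K, ∀ a b, R a b ↔ T a b = 0 := by
  by_cases htriv : ∀ a b, R a b
  · exact ⟨0, by simpa using htriv⟩
  push Not at htriv
  obtain ⟨a₁, b₀, h₁⟩ := htriv
  obtain ⟨σ, hσ⟩ := hA b₀
  obtain ⟨a₀, ha₀⟩ : ∃ a₀, σ a₀ = 1 :=
    ⟨(σ a₁)⁻¹ • a₁, by simp [inv_mul_cancel₀ (mt (hσ a₁).2 h₁)]⟩
  obtain ⟨θ, hθ₀, hθR, hθ⟩ := exists_dual_map_lineMap hB hR hσ ha₀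
  obtain ⟨L, hL⟩ := exists_linearMap_eq_of_map_lineMap ht0 ht1 (f := fun a ↦ θ a - θ 0)
    (sub_self _) fun u v l ↦ by
      simp only [hθ]
      simp only [AffineMap.lineMap_apply_module]
      module
  replace hL (a : A) : L a = θ a - θ 0 := congr_fun hL a
  refine ⟨σ.smulRight (θ 0) + L, fun a b ↦ ?_⟩
  by_cases ha : σ a = 0
  · set b₁ := b - θ 0 b • b₀ with hb₁
    have h₀ : R a₀ b₁ := by simpa [hθ₀, hb₁] using (hθR 0 b₁).2 (by simp [hθ₀, hb₁])
    obtain ⟨τ, hτ⟩ := hB a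
    obtain ⟨ρ, hρ⟩ := hA b₁
    calc R a b ↔ R a b₁ := by simp [hτ, hb₁, (hτ b₀).1 ((hσ a).2 ha)]
      _ ↔ R (a + (1 - σ a) • a₀) b₁ := by simp [hρ, ha, (hρ a₀).1 h₀]
      _ ↔ (σ.smulRight (θ 0) + L) a b = 0 := by
        rw [hθR]
        simp [hb₁, hθ₀, hL, ha, sub_eq_zero]
  · obtain ⟨ρ, hρ⟩ := hA b
    set a' := (σ a)⁻¹ • a with ha'
    have hσa' : σ a' = 1 := by simp [ha', ha]
    have haa' : a = σ a • a' := by simp [ha', smul_smul, ha]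
    have hT : (σ.smulRight (θ 0) + L) a = σ a • θ a' := by
      conv_lhs => rw [haa']
      simp [hσa', hL]
    rw [hT, LinearMap.smul_apply, smul_eq_mul, mul_eq_zero, or_iff_right ha, ← hθR]
    simp [hρ, ha', ha]

end BilinearRelations

section QuasiQuadrics

open Finset
open scoped Classical

lemma exists_ne_zero_and_ne_one {K : Type*} [Field K] [Fintype K] (hK : 2 < Fintype.card K) :
    ∃ t : K, t ≠ 0 ∧ t ≠ 1 := by
  by_contra! h
  have : (univ : Finset K) ⊆ {0, 1} := fun t _ ↦ by simpa [or_iff_not_imp_left] using h t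
  exact (card_le_card this).not_gt (card_le_two.trans_lt hK)

lemma exists_dual_ne_zero_ker_eq {K A : Type*} [Field K] [AddCommGroup A] [Module K A]
    [Module.Finite K A] {P : Submodule K A} (hP : Module.finrank K P + 1 = Module.finrank K A) :
    ∃ σ : Module.Dual K A, σ ≠ 0 ∧ LinearMap.ker σ = P := by
  obtain ⟨σ, hσ, hle⟩ := Submodule.exists_le_ker_of_lt_top P <| lt_top_iff_ne_top.2 fun h ↦ by
    rw [h, finrank_top] at hP
    omega
  have := Module.Dual.finrank_ker_add_one_of_ne_zero hσ
  exact ⟨σ, hσ, (Submodule.eq_of_le_of_finrank_eq hle (by omega)).symm⟩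

section ExponentialSums

variable {F : Type*} [Field F]

lemma sum_addChar_dual {R M : Type*} [CommRing R] [IsDomain R] [AddCommGroup M] [Module F M]
    [Fintype M] {ψ : AddChar F R} (hψ : ψ ≠ 1) (f : Module.Dual F M) :
    ∑ m, ψ (f m) = if f = 0 then (Fintype.card M : R) else 0 := by
  split_ifs with hf
  · simp [hf]
  · refine AddChar.sum_eq_zero_of_ne_one (ψ := ψ.compAddMonoidHom f.toAddMonoidHom) fun h ↦ hψ ?_
    ext c
    obtain ⟨m, rfl⟩ := LinearMap.surjective hf c
    exact DFunLike.congr_fun h m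

lemma sum_sum_addChar_bilin {R M V ι : Type*} [CommRing R] [IsDomain R] [AddCommGroup M]
    [Module F M] [Fintype M] [AddCommGroup V] [Module F V] {ψ : AddChar F R} (hψ : ψ ≠ 1)
    (B : M →ₗ[F] V →ₗ[F] F) (s : Finset ι) (x : ι → V) :
    ∑ m, ∑ i ∈ s, ψ (B m (x i)) = Fintype.card M * #{i ∈ s | B.flip (x i) = 0} := by
  have hchar (i : ι) := sum_addChar_dual hψ (B.flip (x i))
  simp only [LinearMap.flip_apply] at hchar
  rw [sum_comm, sum_congr rfl fun i _ ↦ hchar i, ← sum_filter, sum_const, nsmul_eq_mul, mul_comm]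

lemma sum_sum_addChar_dual {R V ι : Type*} [CommRing R] [IsDomain R] [AddCommGroup V] [Module F V]
    [Fintype (Module.Dual F V)] {ψ : AddChar F R} (hψ : ψ ≠ 1) (s : Finset ι) (x : ι → V) :
    ∑ h : Module.Dual F V, ∑ i ∈ s, ψ (h (x i)) =
      Fintype.card (Module.Dual F V) * #{i ∈ s | x i = 0} := by
  have hflip (i : ι) : (LinearMap.id : Module.Dual F V →ₗ[F] _).flip (x i) = 0 ↔ x i = 0 := by
    rw [LinearMap.ext_iff]
    exact Module.forall_dual_apply_eq_zero_iff F (x i)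
  simpa only [LinearMap.id_apply, hflip] using sum_sum_addChar_bilin hψ LinearMap.id s x

variable {V : Type*} [AddCommGroup V] [Module F V] {Q : Finset V}

/-- The exponential sum `∑ v ∈ Q, ψ (h v)` of a cone `Q` along a functional `h`. It is the same
integer for every nontrivial additive character `ψ`; see `sum_addChar_eq_expSum`. -/
noncomputable def expSum (Q : Finset V) (h : Module.Dual F V) : ℤ :=
  #{v ∈ Q | h v = 0} - #{v ∈ Q | h v = 1}

lemma expSum_zero (Q : Finset V) : expSum Q (0 : Module.Dual F V) = #Q := by
  simp [expSum]

lemma card_filter_eq_of_ne_zero (hQ : ∀ (c : F), ∀ v ∈ Q, c • v ∈ Q) (h : Module.Dual F V)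
    {s t : F} (hs : s ≠ 0) (ht : t ≠ 0) : #{v ∈ Q | h v = s} = #{v ∈ Q | h v = t} := by
  have scale {a b : F} (ha : a ≠ 0) {v : V} (hv : v ∈ ({v ∈ Q | h v = a} : Finset V)) :
      (b * a⁻¹) • v ∈ ({v ∈ Q | h v = b} : Finset V) := by
    rw [mem_filter] at hv ⊢
    exact ⟨hQ _ _ hv.1, by simp [hv.2, ha]⟩
  refine card_nbij' (fun v ↦ (t * s⁻¹) • v) (fun v ↦ (s * t⁻¹) • v) (fun v hv ↦ scale hs hv)
    (fun v hv ↦ scale ht hv) ?_ ?_ <;>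
  · intro v _
    simp only [smul_smul]
    field_simp
    exact one_smul F v

lemma card_eq_card_filter_add [Fintype F] (hQ : ∀ (c : F), ∀ v ∈ Q, c • v ∈ Q)
    (h : Module.Dual F V) {t : F} (ht : t ≠ 0) :
    (#Q : ℤ) = #{v ∈ Q | h v = 0} + (Fintype.card F - 1) * #{v ∈ Q | h v = t} := by
  rw [card_eq_sum_card_fiberwise (f := h) (t := univ) (by simp), ← add_sum_erase _ _ (mem_univ 0),
    sum_congr rfl fun s hs ↦ card_filter_eq_of_ne_zero hQ h (ne_of_mem_erase hs) ht]
  simp [card_erase_of_mem, Nat.cast_sub Fintype.card_pos]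

variable [Finite F]

lemma sum_addChar_eq_expSum {R : Type*} [CommRing R] [IsDomain R] {ψ : AddChar F R} (hψ : ψ ≠ 1)
    (hQ : ∀ (c : F), ∀ v ∈ Q, c • v ∈ Q) (h : Module.Dual F V) :
    ∑ v ∈ Q, ψ (h v) = expSum Q h := by
  have := Fintype.ofFinite F
  have hfiber (s : F) : ∑ v ∈ Q with h v = s, ψ (h v) = #{v ∈ Q | h v = s} * ψ s := by
    rw [sum_congr rfl fun v hv ↦ by rw [(mem_filter.1 hv).2], sum_const, nsmul_eq_mul]
  have hψ_sum : ∑ s ∈ univ.erase 0, ψ s = -1 := by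
    have := AddChar.sum_eq_zero_of_ne_one hψ
    rwa [← add_sum_erase _ _ (mem_univ 0), AddChar.map_zero_eq_one, add_comm,
      ← eq_neg_iff_add_eq_zero] at this
  rw [← sum_fiberwise Q h, sum_congr rfl fun s _ ↦ hfiber s, ← add_sum_erase _ _ (mem_univ 0),
    sum_congr rfl fun s hs ↦ by
      rw [card_filter_eq_of_ne_zero hQ h (ne_of_mem_erase hs) one_ne_zero], ← mul_sum, hψ_sum]
  simp [expSum, sub_eq_add_neg]

lemma sum_expSum_mul_addChar [Fintype (Module.Dual F V)] {R : Type*} [CommRing R] [IsDomain R]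
    {ψ : AddChar F R} (hψ : ψ ≠ 1) (hQ : ∀ (c : F), ∀ v ∈ Q, c • v ∈ Q) (d : V) :
    ∑ h : Module.Dual F V, (expSum Q h : R) * ψ (h d) =
      Fintype.card (Module.Dual F V) * if d ∈ Q then 1 else 0 := by
  have hneg : -d ∈ Q ↔ d ∈ Q :=
    ⟨fun h ↦ by simpa using hQ (-1) _ h, fun h ↦ by simpa using hQ (-1) _ h⟩
  have hcard : #{v ∈ Q | v + d = 0} = if d ∈ Q then 1 else 0 := by
    simp only [add_eq_zero_iff_eq_neg]
    split_ifs with hd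
    · exact card_eq_one.2 ⟨-d, by ext v; simp +contextual [hneg, hd]⟩
    · exact card_filter_eq_zero_iff.2 fun v hv h ↦ hd (hneg.1 (h ▸ hv))
  have := sum_sum_addChar_dual hψ Q (· + d)
  simp only [map_add, AddChar.map_add_eq_mul, ← sum_mul, sum_addChar_eq_expSum hψ hQ, hcard] at this
  exact_mod_cast this

lemma sum_expSum_sq_mul_addChar [Fintype (Module.Dual F V)] {R : Type*} [CommRing R] [IsDomain R]
    {ψ : AddChar F R} (hψ : ψ ≠ 1) (hQ : ∀ (c : F), ∀ v ∈ Q, c • v ∈ Q) (d : V) :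
    ∑ h : Module.Dual F V, (expSum Q h : R) ^ 2 * ψ (h d) =
      Fintype.card (Module.Dual F V) * #{v ∈ Q | v + d ∈ Q} := by
  have hcard : #{p ∈ Q ×ˢ Q | p.1 + p.2 + d = 0} = #{v ∈ Q | v + d ∈ Q} := by
    refine card_nbij' Prod.fst (fun v ↦ (v, -(v + d))) ?_ ?_ ?_ fun v _ ↦ rfl
    · rintro ⟨v, w⟩ h
      obtain ⟨⟨hv, hw⟩, hvw⟩ := by simpa using h
      have : v + d = (-1 : F) • w := by
        rw [neg_one_smul, eq_neg_iff_add_eq_zero, add_right_comm, hvw]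
      simpa [hv, this] using hQ (-1) w hw
    · intro v h
      obtain ⟨hv, hvd⟩ := by simpa using h
      simpa [hv, add_comm] using hQ (-1) _ hvd
    · rintro ⟨v, w⟩ h
      obtain ⟨-, hvw⟩ := by simpa using h
      rw [add_right_comm] at hvw
      simp [neg_eq_of_add_eq_zero_right hvw]
  have := sum_sum_addChar_dual hψ (Q ×ˢ Q) fun p ↦ p.1 + p.2 + d
  simp only [map_add, AddChar.map_add_eq_mul, ← sum_mul, ← sum_mul_sum, sum_product,
    sum_addChar_eq_expSum hψ hQ, hcard] at this
  simpa only [sq] using this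

lemma sum_expSum_dualAnnihilator [Fintype (Module.Dual F V)] (hQ : ∀ (c : F), ∀ v ∈ Q, c • v ∈ Q)
    (C : Submodule F V) :
    ∑ h : C.dualAnnihilator, expSum Q (h : Module.Dual F V) =
      Fintype.card C.dualAnnihilator * #{v ∈ Q | v ∈ C} := by
  have hψ : AddChar.FiniteField.primitiveChar_to_Complex F ≠ 1 := by
    simpa using AddChar.FiniteField.primitiveChar_to_Complex_isPrimitive F one_ne_zero
  have hmem (v : V) : C.dualAnnihilator.subtype.flip v = 0 ↔ v ∈ C := by
    conv_rhs => rw [← Subspace.dualAnnihilator_dualCoannihilator_eq (W := C),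
      Submodule.mem_dualCoannihilator]
    exact ⟨fun h φ hφ ↦ DFunLike.congr_fun h ⟨φ, hφ⟩, fun h ↦ LinearMap.ext fun φ ↦ h φ φ.2⟩
  have := sum_sum_addChar_bilin (M := C.dualAnnihilator) hψ C.dualAnnihilator.subtype Q id
  simp only [id, hmem, Submodule.subtype_apply, sum_addChar_eq_expSum hψ hQ] at this
  exact_mod_cast this

lemma card_dual_mul_of_expSum_eq_or_eq [Fintype (Module.Dual F V)]
    (hQ : ∀ (c : F), ∀ v ∈ Q, c • v ∈ Q) {z w : ℤ}
    (hzw : ∀ h : Module.Dual F V, h ≠ 0 → expSum Q h = z ∨ expSum Q h = w) (d : V) :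
    (Fintype.card (Module.Dual F V) : ℤ) *
      (#{v ∈ Q | v + d ∈ Q} - (z + w) * (if d ∈ Q then 1 else 0)
        + z * w * (if d = 0 then 1 else 0)) = (#Q - z) * (#Q - w) := by
  set ψ := AddChar.FiniteField.primitiveChar_to_Complex F
  have hψ : ψ ≠ 1 := by
    simpa using AddChar.FiniteField.primitiveChar_to_Complex_isPrimitive F one_ne_zero
  have hdelta : ∑ h : Module.Dual F V, ψ (h d) =
      Fintype.card (Module.Dual F V) * if d = 0 then 1 else 0 := by
    simpa [filter_singleton, apply_ite] using sum_sum_addChar_dual hψ {d} id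
  have hsum : ∑ h : Module.Dual F V, (expSum Q h - z : ℂ) * (expSum Q h - w) * ψ (h d) =
      (#Q - z) * (#Q - w) := by
    rw [Fintype.sum_eq_single 0]
    · simp [expSum_zero]
    · intro h hh
      rcases hzw h hh with e | e <;> simp [e]
  have hexpand : ∑ h : Module.Dual F V, (expSum Q h - z : ℂ) * (expSum Q h - w) * ψ (h d) =
      ∑ h : Module.Dual F V, (expSum Q h : ℂ) ^ 2 * ψ (h d)
        - (z + w) * ∑ h : Module.Dual F V, (expSum Q h : ℂ) * ψ (h d)
        + z * w * ∑ h : Module.Dual F V, ψ (h d) := by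
    simp only [mul_sum, ← sum_sub_distrib, ← sum_add_distrib]
    exact sum_congr rfl fun h _ ↦ by ring
  rw [hsum, sum_expSum_sq_mul_addChar hψ hQ, sum_expSum_mul_addChar hψ hQ, hdelta] at hexpand
  have : ((#Q - z) * (#Q - w) : ℂ) = Fintype.card (Module.Dual F V) *
      (#{v ∈ Q | v + d ∈ Q} - (z + w) * (if d ∈ Q then 1 else 0)
        + z * w * (if d = 0 then 1 else 0)) := by
    rw [hexpand]; ring
  exact_mod_cast this.symm

end ExponentialSums

/-- A set `Q` of vectors of a `2 n + 2`-dimensional space over a finite field `F`, `n ≠ 0`, that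
looks like the set of singular vectors of a hyperbolic quadric: each hyperplane section has the size
of a parabolic or of a tangent section, and a line through the points `⟨u⟩`, `⟨v⟩`, `⟨u + v⟩`
of `Q` lies in `Q`. The zero vector is a member of `Q`, and `Q` is a `Finset` so that it can be
summed over. -/
structure IsHyperbolicQuasiQuadric (F : Type*) {V : Type*} [Field F] [Fintype F] [AddCommGroup V]
    [Module F V] (n : ℕ) (Q : Finset V) : Prop where
  ne_zero : n ≠ 0
  finrank_eq : Module.finrank F V = 2 * n + 2
  zero_mem : 0 ∈ Q
  line_mem : ∀ u ∈ Q, ∀ v ∈ Q, u + v ∈ Q → ∀ a b : F, a • u + b • v ∈ Q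
  card_section : ∀ h : Module.Dual F V, h ≠ 0 →
    (#{v ∈ Q | h v = 0} : ℤ) = (Fintype.card F ^ n) ^ 2 ∨
      (#{v ∈ Q | h v = 0} : ℤ) =
        Fintype.card F ^ n * (Fintype.card F ^ n + Fintype.card F - 1)

namespace IsHyperbolicQuasiQuadric

variable {F V : Type*} [Field F] [Fintype F] [AddCommGroup V] [Module F V] {n : ℕ} {Q : Finset V}

local notation "q" => (Fintype.card F : ℤ)

section Counting

lemma smul_mem (H : IsHyperbolicQuasiQuadric F n Q) (c : F) : ∀ v ∈ Q, c • v ∈ Q := fun v hv ↦ by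
  simpa using H.line_mem v hv 0 H.zero_mem (by simpa using hv) c 0

lemma finite_module (H : IsHyperbolicQuasiQuadric F n Q) : Module.Finite F V :=
  Module.finite_of_finrank_pos (by rw [H.finrank_eq]; omega)

lemma one_lt_card : 1 < q := by exact_mod_cast Fintype.one_lt_card

lemma card_le_pow (H : IsHyperbolicQuasiQuadric F n Q) : q ≤ q ^ n :=
  le_self_pow₀ one_lt_card.le H.ne_zero

lemma card_dual [Fintype (Module.Dual F V)] (H : IsHyperbolicQuasiQuadric F n Q) :
    (Fintype.card (Module.Dual F V) : ℤ) = q ^ 2 * (q ^ n) ^ 2 := by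
  have := H.finite_module
  rw [Module.card_eq_pow_finrank (K := F), Subspace.dual_finrank_eq, H.finrank_eq]
  push_cast
  ring

lemma exists_ne_zero_dual (H : IsHyperbolicQuasiQuadric F n Q) : ∃ h : Module.Dual F V, h ≠ 0 := by
  have := H.finite_module
  have : Nontrivial (Module.Dual F V) := Module.nontrivial_of_finrank_pos (R := F) <| by
    rw [Subspace.dual_finrank_eq, H.finrank_eq]
    omega
  exact exists_ne 0

lemma expSum_of_card_section (H : IsHyperbolicQuasiQuadric F n Q) (h : Module.Dual F V) :
    (q - 1) * expSum Q h = q * #{v ∈ Q | h v = 0} - #Q := by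
  rw [card_eq_card_filter_add H.smul_mem h one_ne_zero, expSum]
  ring

lemma exists_card_eq_and_expSum_eq (H : IsHyperbolicQuasiQuadric F n Q) :
    ∃ z : ℤ, #Q = q * (q ^ n) ^ 2 - (q - 1) * z ∧
      ∀ h : Module.Dual F V, h ≠ 0 → expSum Q h = z ∨ expSum Q h = z + q * q ^ n := by
  have hq : q - 1 ≠ 0 := by linarith [one_lt_card (F := F)]
  obtain ⟨z, hz⟩ : ∃ z : ℤ, #Q = q * (q ^ n) ^ 2 - (q - 1) * z := by
    obtain ⟨h, hh⟩ := H.exists_ne_zero_dual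
    have := H.expSum_of_card_section h
    rcases H.card_section h hh with e | e <;> rw [e] at this
    · exact ⟨expSum Q h, by linarith⟩
    · exact ⟨expSum Q h - q * q ^ n, by linarith⟩
  refine ⟨z, hz, fun h hh ↦ ?_⟩
  have := H.expSum_of_card_section h
  rcases H.card_section h hh with e | e <;> rw [e, hz] at this
  · exact Or.inl (mul_left_cancel₀ hq (by linarith))
  · exact Or.inr (mul_left_cancel₀ hq (by linarith))

/-- With `Y = q ^ n`, the count at `d = 0` is a cubic in `z` with roots `-Y` and
`-(q - 1) * Y ^ 2 / (Y + 1)`, the latter not an integer. -/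
lemma eq_neg_of_second_moment {c Y z : ℤ} (hc : 1 < c) (hY : c ≤ Y)
    (h : Y ^ 2 * (c * Y ^ 2 - (c - 1) * z - (2 * z + c * Y) + z * (z + c * Y)) =
      (Y ^ 2 - z) * (Y ^ 2 - z - Y)) : z = -Y := by
  have hfactor : (Y - 1) * ((z + Y) * ((Y + 1) * z + (c - 1) * Y ^ 2)) = 0 := by
    linear_combination h
  rcases mul_eq_zero.1 ((mul_eq_zero.1 hfactor).resolve_left (by linarith)) with hz | hz
  · linarith
  · have hdvd : Y + 1 ∣ c - 1 := ⟨-z - (c - 1) * (Y - 1), by linear_combination hz⟩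
    linarith [Int.le_of_dvd (by linarith) hdvd]

lemma card_eq_and_expSum_eq (H : IsHyperbolicQuasiQuadric F n Q) :
    #Q = q ^ n * (q * q ^ n + q - 1) ∧
      ∀ h : Module.Dual F V, h ≠ 0 → expSum Q h = -q ^ n ∨ expSum Q h = (q - 1) * q ^ n := by
  have := H.finite_module
  have : Finite (Module.Dual F V) := Module.finite_of_finite F
  have := Fintype.ofFinite (Module.Dual F V)
  obtain ⟨z, hz, hW⟩ := H.exists_card_eq_and_expSum_eq
  have key := card_dual_mul_of_expSum_eq_or_eq H.smul_mem hW 0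
  simp only [H.zero_mem, add_zero, filter_mem_eq_inter, inter_self, if_true, hz, H.card_dual] at key
  have hq : q ^ 2 ≠ 0 := by have := one_lt_card (F := F); positivity
  obtain rfl : z = -q ^ n := eq_neg_of_second_moment one_lt_card H.card_le_pow
    (mul_left_cancel₀ hq (by linear_combination key))
  exact ⟨by linarith, fun h hh ↦ (hW h hh).imp_right (by intro e; linarith)⟩

lemma card_eq (H : IsHyperbolicQuasiQuadric F n Q) : (#Q : ℤ) = q ^ n * (q * q ^ n + q - 1) :=
  H.card_eq_and_expSum_eq.1

lemma card_translate (H : IsHyperbolicQuasiQuadric F n Q) {d : V} (hd : d ≠ 0) :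
    (#{v ∈ Q | v + d ∈ Q} : ℤ) = q ^ n * (q ^ n + 1 + (q - 2) * if d ∈ Q then 1 else 0) := by
  have := H.finite_module
  have : Finite (Module.Dual F V) := Module.finite_of_finite F
  have := Fintype.ofFinite (Module.Dual F V)
  obtain ⟨hcard, hW⟩ := H.card_eq_and_expSum_eq
  have key := card_dual_mul_of_expSum_eq_or_eq H.smul_mem hW d
  rw [H.card_dual, hcard, if_neg hd] at key
  have hq : q ^ 2 * (q ^ n) ^ 2 ≠ 0 := by have := one_lt_card (F := F); positivity
  exact mul_left_cancel₀ hq (by linear_combination key)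

lemma card_translate_of_mem (H : IsHyperbolicQuasiQuadric F n Q) {d : V} (hd : d ≠ 0)
    (hdQ : d ∈ Q) :
    (#{v ∈ Q | v + d ∈ Q} : ℤ) = q ^ n * (q ^ n + q - 1) := by
  rw [H.card_translate hd, if_pos hdQ]
  ring

lemma card_translate_of_notMem (H : IsHyperbolicQuasiQuadric F n Q) {d : V} (hdQ : d ∉ Q) :
    (#{v ∈ Q | v + d ∈ Q} : ℤ) = q ^ n * (q ^ n + 1) := by
  rw [H.card_translate (by rintro rfl; exact hdQ H.zero_mem), if_neg hdQ]
  ring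

end Counting

section SingularSubspaces

variable {C : Submodule F V}

lemma card_filter_mem_submodule (hC : (C : Set V) ⊆ Q) :
    (#{v ∈ Q | v ∈ C} : ℤ) = q ^ Module.finrank F C := by
  have : Finite C := Q.finite_toSet.subset hC
  have := Fintype.ofFinite C
  rw [← Fintype.card_of_subtype (p := (· ∈ C)) {v ∈ Q | v ∈ C} fun v ↦ by
    simpa using fun hv : v ∈ C ↦ hC hv]
  exact_mod_cast Module.card_eq_pow_finrank (K := F) (V := C)

lemma finrank_le_of_subset (H : IsHyperbolicQuasiQuadric F n Q) (hC : (C : Set V) ⊆ Q) :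
    Module.finrank F C ≤ n + 1 := by
  have := H.finite_module
  have : Finite (Module.Dual F V) := Module.finite_of_finite F
  have := Fintype.ofFinite (Module.Dual F V)
  have hq := one_lt_card (F := F)
  have hrank : Module.finrank F C + Module.finrank F C.dualAnnihilator = 2 * n + 2 := by
    rw [Subspace.finrank_add_finrank_dualAnnihilator_eq, H.finrank_eq]
  have hD : (Fintype.card C.dualAnnihilator : ℤ) = q ^ Module.finrank F C.dualAnnihilator := by
    exact_mod_cast Module.card_eq_pow_finrank (K := F) (V := C.dualAnnihilator)
  have hsum := sum_expSum_dualAnnihilator H.smul_mem C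
  rw [card_filter_mem_submodule hC, hD, ← pow_add, add_comm (Module.finrank F _), hrank,
    Fintype.sum_eq_add_sum_compl 0, Submodule.coe_zero, expSum_zero, H.card_eq] at hsum
  have hbound : ∑ h ∈ {(0 : C.dualAnnihilator)}ᶜ, expSum Q (h : Module.Dual F V) ≤
      (q ^ Module.finrank F C.dualAnnihilator - 1) * ((q - 1) * q ^ n) := by
    refine (sum_le_card_nsmul _ _ ((q - 1) * q ^ n) fun h hh ↦ ?_).trans_eq ?_
    · rcases H.card_eq_and_expSum_eq.2 h (by simpa using hh) with e | e <;> rw [e]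
      nlinarith [pow_pos (zero_lt_one.trans hq) n]
    · rw [card_compl, card_singleton, nsmul_eq_mul, Nat.cast_sub Fintype.card_pos, hD, Nat.cast_one]
  have hle : q ^ n * ((q - 1) * q ^ (n + 1)) ≤
      q ^ n * ((q - 1) * q ^ Module.finrank F C.dualAnnihilator) := by
    rw [show q ^ (2 * n + 2) = q ^ n * (q ^ 2 * q ^ n) by ring] at hsum
    rw [pow_succ]
    linarith
  have := (pow_le_pow_iff_right₀ hq).1 <| le_of_mul_le_mul_left
    (le_of_mul_le_mul_left hle (pow_pos (zero_lt_one.trans hq) n)) (sub_pos.2 hq)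
  omega

lemma sup_span_singleton_subset (H : IsHyperbolicQuasiQuadric F n Q) (hC : (C : Set V) ⊆ Q) {y : V}
    (hy : y ∈ Q) (hyC : ∀ c ∈ C, y + c ∈ Q) : ((C ⊔ F ∙ y : Submodule F V) : Set V) ⊆ Q := by
  intro v hv
  obtain ⟨c, hc, _, ha, rfl⟩ := Submodule.mem_sup.1 hv
  obtain ⟨a, rfl⟩ := Submodule.mem_span_singleton.1 ha
  simpa [add_comm] using H.line_mem y hy c (hC hc) (hyC c hc) a 1

lemma mem_of_forall_add_mem (H : IsHyperbolicQuasiQuadric F n Q) (hC : (C : Set V) ⊆ Q)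
    (hCn : Module.finrank F C = n + 1) {y : V} (hy : y ∈ Q) (hyC : ∀ c ∈ C, y + c ∈ Q) : y ∈ C := by
  have := H.finite_module
  by_contra h
  have := H.finrank_le_of_subset (H.sup_span_singleton_subset hC hy hyC)
  rw [Submodule.finrank_sup_span_singleton h] at this
  omega

lemma add_add_mem (H : IsHyperbolicQuasiQuadric F n Q) (hF : 2 < Fintype.card F) {y c d : V}
    (hy : y ∈ Q) (hc : c ∈ Q) (hd : d ∈ Q) (hyc : y + c ∈ Q) (hyd : y + d ∈ Q) (hcd : c + d ∈ Q) :
    y + (c + d) ∈ Q := by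
  obtain ⟨t, ht0, ht1⟩ := exists_ne_zero_and_ne_one hF
  have ht : 1 - t ≠ 0 := sub_ne_zero.2 ht1.symm
  -- Both points lie on lines of `Q` through `y`, and so do their sum and `y + (c + d) = u + t • v`.
  set u := (1 - t)⁻¹ • y + c with hu
  set v := -(1 - t)⁻¹ • y + t⁻¹ • d with hv
  have huQ : u ∈ Q := by simpa using H.line_mem y hy c hc hyc (1 - t)⁻¹ 1
  have hvQ : v ∈ Q := H.line_mem y hy d hd hyd _ _
  have huv : u + v ∈ Q := by
    rw [show u + v = (1 : F) • c + t⁻¹ • d by rw [hu, hv]; module]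
    exact H.line_mem c hc d hd hcd _ _
  have : y + (c + d) = (1 : F) • u + t • v := by
    rw [show (1 : F) • u + t • v = ((1 - t) * (1 - t)⁻¹) • y + c + (t * t⁻¹) • d by
      rw [hu, hv]; module, mul_inv_cancel₀ ht, mul_inv_cancel₀ ht0]
    module
  rw [this]
  exact H.line_mem u huQ v hvQ huv _ _

/-- The subspace of those vectors of a totally singular subspace `C` that are collinear with the
vector `y` of `Q`. -/
def perp (H : IsHyperbolicQuasiQuadric F n Q) (hF : 2 < Fintype.card F) (hC : (C : Set V) ⊆ Q)
    {y : V} (hy : y ∈ Q) : Submodule F V where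
  carrier := {c | c ∈ C ∧ y + c ∈ Q}
  zero_mem' := ⟨C.zero_mem, by simpa using hy⟩
  add_mem' := fun ⟨hc, hyc⟩ ⟨hd, hyd⟩ ↦
    ⟨C.add_mem hc hd, H.add_add_mem hF hy (hC hc) (hC hd) hyc hyd (hC (C.add_mem hc hd))⟩
  smul_mem' := fun a c ⟨hc, hyc⟩ ↦
    ⟨C.smul_mem a hc, by simpa using H.line_mem y hy c (hC hc) hyc 1 a⟩

lemma mem_perp (H : IsHyperbolicQuasiQuadric F n Q) (hF : 2 < Fintype.card F)
    (hC : (C : Set V) ⊆ Q) {y : V} (hy : y ∈ Q) {c : V} :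
    c ∈ H.perp hF hC hy ↔ c ∈ C ∧ y + c ∈ Q := Iff.rfl

lemma perp_le (H : IsHyperbolicQuasiQuadric F n Q) (hF : 2 < Fintype.card F)
    (hC : (C : Set V) ⊆ Q) {y : V} (hy : y ∈ Q) : H.perp hF hC hy ≤ C := fun _ hc ↦ hc.1

lemma card_collinear (H : IsHyperbolicQuasiQuadric F n Q) (hF : 2 < Fintype.card F)
    (hC : (C : Set V) ⊆ Q) {y : V} (hy : y ∈ Q) :
    (#{c ∈ Q | c ∈ C ∧ y + c ∈ Q} : ℤ) = q ^ Module.finrank F (H.perp hF hC hy) := by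
  simpa only [mem_perp] using card_filter_mem_submodule fun _ hc ↦ hC (H.perp_le hF hC hy hc)

lemma sum_card_collinear (H : IsHyperbolicQuasiQuadric F n Q) (hC : (C : Set V) ⊆ Q) :
    ∑ y ∈ Q, (#{c ∈ Q | c ∈ C ∧ y + c ∈ Q} : ℤ) =
      #Q + (q ^ Module.finrank F C - 1) * (q ^ n * (q ^ n + q - 1)) := by
  have h0 : (0 : V) ∈ ({c ∈ Q | c ∈ C} : Finset V) := by simp [H.zero_mem]
  have hswap : ∑ y ∈ Q, #{c ∈ Q | c ∈ C ∧ y + c ∈ Q} =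
      ∑ c ∈ Q with c ∈ C, #{y ∈ Q | y + c ∈ Q} := by
    simp only [← filter_filter]
    exact sum_card_bipartiteAbove_eq_sum_card_bipartiteBelow fun y c ↦ y + c ∈ Q
  have hcount : ∀ c ∈ ({c ∈ Q | c ∈ C} : Finset V).erase 0,
      (#{y ∈ Q | y + c ∈ Q} : ℤ) = q ^ n * (q ^ n + q - 1) := fun c hc ↦ by
    rw [mem_erase, mem_filter] at hc
    exact H.card_translate_of_mem hc.1 hc.2.1
  rw [← Nat.cast_sum, hswap, Nat.cast_sum, ← add_sum_erase _ _ h0, sum_congr rfl hcount, sum_const,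
    card_erase_of_mem h0, nsmul_eq_mul, Nat.cast_sub (card_pos.2 ⟨0, h0⟩),
    card_filter_mem_submodule hC]
  simp

lemma sum_card_collinear_sub (H : IsHyperbolicQuasiQuadric F n Q) (hC : (C : Set V) ⊆ Q) :
    ∑ y ∈ Q with y ∉ C, (q * #{c ∈ Q | c ∈ C ∧ y + c ∈ Q} - q ^ Module.finrank F C) =
      (q - 1) * ((q * q ^ n - q ^ Module.finrank F C) * (q ^ n + q ^ Module.finrank F C)) := by
  have hmem : ∑ y ∈ Q with y ∈ C, (#{c ∈ Q | c ∈ C ∧ y + c ∈ Q} : ℤ) =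
      q ^ Module.finrank F C * q ^ Module.finrank F C := by
    rw [← card_filter_mem_submodule hC, ← nsmul_eq_mul, ← sum_const]
    refine sum_congr rfl fun y hy ↦ ?_
    congr 2 with c
    simpa using fun _ hc ↦ hC (C.add_mem (mem_filter.1 hy).2 hc)
  have hsum := sum_filter_add_sum_filter_not Q (· ∈ C)
    fun y ↦ (#{c ∈ Q | c ∈ C ∧ y + c ∈ Q} : ℤ)
  have hcard : (#{v ∈ Q | v ∈ C} + #{v ∈ Q | v ∉ C} : ℤ) = #Q := by
    exact_mod_cast card_filter_add_card_filter_not (s := Q) (· ∈ C)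
  rw [hmem, H.sum_card_collinear hC, H.card_eq] at hsum
  rw [card_filter_mem_submodule hC, H.card_eq] at hcard
  rw [sum_sub_distrib, ← mul_sum, sum_const, nsmul_eq_mul]
  linear_combination q * hsum - q ^ Module.finrank F C * hcard

lemma card_mul_card_collinear_le (H : IsHyperbolicQuasiQuadric F n Q) (hF : 2 < Fintype.card F)
    (hC : (C : Set V) ⊆ Q) {y : V} (hy : y ∈ Q) (hyC : ¬∀ c ∈ C, y + c ∈ Q) :
    q * #{c ∈ Q | c ∈ C ∧ y + c ∈ Q} ≤ q ^ Module.finrank F C := by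
  have := H.finite_module
  have hlt : H.perp hF hC hy < C := by
    refine (H.perp_le hF hC hy).lt_of_not_ge fun hle ↦ hyC fun c hc ↦ (hle hc).2
  rw [H.card_collinear hF hC hy, ← pow_succ']
  exact pow_le_pow_right₀ one_lt_card.le (Submodule.finrank_lt_finrank_of_lt hlt)

lemma exists_forall_add_mem (H : IsHyperbolicQuasiQuadric F n Q) (hF : 2 < Fintype.card F)
    (hC : (C : Set V) ⊆ Q) (hCn : Module.finrank F C ≤ n) :
    ∃ y ∈ Q, y ∉ C ∧ ∀ c ∈ C, y + c ∈ Q := by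
  by_contra! h
  have hsum := H.sum_card_collinear_sub hC
  have hle : ∑ y ∈ Q with y ∉ C,
      (q * #{c ∈ Q | c ∈ C ∧ y + c ∈ Q} - q ^ Module.finrank F C) ≤ 0 := by
    refine sum_nonpos fun y hy ↦ sub_nonpos.2 ?_
    rw [mem_filter] at hy
    exact H.card_mul_card_collinear_le hF hC hy.1 (by simpa using h y hy.1 hy.2)
  have hq := one_lt_card (F := F)
  have hpow : q ^ Module.finrank F C ≤ q ^ n := pow_le_pow_right₀ hq.le hCn
  have hY : 0 < q ^ n := by positivity
  have : 0 < q * q ^ n - q ^ Module.finrank F C := by nlinarith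
  have : 0 < (q - 1) * ((q * q ^ n - q ^ Module.finrank F C) * (q ^ n + q ^ Module.finrank F C)) :=
    mul_pos (by linarith) (mul_pos this (by positivity))
  linarith

lemma exists_generator (H : IsHyperbolicQuasiQuadric F n Q) (hF : 2 < Fintype.card F) :
    ∃ A : Submodule F V, (A : Set V) ⊆ Q ∧ Module.finrank F A = n + 1 := by
  have := H.finite_module
  have : Finite V := Module.finite_of_finite F
  obtain ⟨A, hA⟩ := (Set.toFinite {A : Submodule F V | (A : Set V) ⊆ Q}).exists_maximal
    ⟨⊥, by simpa using H.zero_mem⟩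
  refine ⟨A, hA.1, (H.finrank_le_of_subset hA.1).eq_of_not_lt fun hlt ↦ ?_⟩
  obtain ⟨y, hy, hyA, hperp⟩ := H.exists_forall_add_mem hF hA.1 (Nat.lt_succ_iff.1 hlt)
  exact hyA <| hA.2 (H.sup_span_singleton_subset hA.1 hy hperp) le_sup_left <|
    Submodule.mem_sup_right (Submodule.mem_span_singleton_self y)

lemma finrank_perp (H : IsHyperbolicQuasiQuadric F n Q) (hF : 2 < Fintype.card F)
    (hC : (C : Set V) ⊆ Q) (hCn : Module.finrank F C = n + 1) {y : V} (hy : y ∈ Q) (hyC : y ∉ C) :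
    Module.finrank F (H.perp hF hC hy) = n := by
  have hterm : ∀ x ∈ ({y ∈ Q | y ∉ C} : Finset V),
      q * #{c ∈ Q | c ∈ C ∧ x + c ∈ Q} - q ^ Module.finrank F C ≤ 0 := fun x hx ↦ by
    rw [mem_filter] at hx
    exact sub_nonpos.2 <| H.card_mul_card_collinear_le hF hC hx.1
      fun h ↦ hx.2 (H.mem_of_forall_add_mem hC hCn hx.1 h)
  have hsum := H.sum_card_collinear_sub hC
  rw [hCn, ← pow_succ', sub_self, zero_mul, mul_zero, ← hCn,
    sum_eq_zero_iff_of_nonpos hterm] at hsum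
  have := hsum y (by simp [hy, hyC])
  rw [H.card_collinear hF hC hy, ← pow_succ', sub_eq_zero, hCn] at this
  simpa using pow_right_injective₀ (by positivity) one_lt_card.ne' this

end SingularSubspaces

section Generators

lemma exists_dual_eq_zero_iff (H : IsHyperbolicQuasiQuadric F n Q) (hF : 2 < Fintype.card F)
    {C : Submodule F V} (hC : (C : Set V) ⊆ Q) (hCn : Module.finrank F C = n + 1) {y : V}
    (hy : y ∈ Q) : ∃ σ : Module.Dual F C, ∀ c : C, y + c ∈ Q ↔ σ c = 0 := by
  have := H.finite_module
  by_cases hyC : y ∈ C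
  · exact ⟨0, fun c ↦ by simpa using hC (C.add_mem hyC c.2)⟩
  have hrank : Module.finrank F ((H.perp hF hC hy).comap C.subtype) + 1 = Module.finrank F C := by
    rw [(Submodule.comapSubtypeEquivOfLe (H.perp_le hF hC hy)).finrank_eq,
      H.finrank_perp hF hC hCn hy hyC, hCn]
  obtain ⟨σ, -, hσ⟩ := exists_dual_ne_zero_ker_eq hrank
  exact ⟨σ, fun c ↦ by simp [← LinearMap.mem_ker, hσ, mem_perp]⟩

lemma exists_ne_zero_and_add_notMem (H : IsHyperbolicQuasiQuadric F n Q) (hF : 2 < Fintype.card F)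
    {h : Module.Dual F V} (hh : h ≠ 0) {d : V} (hd : d ≠ 0) (hdQ : d ∈ Q) :
    ∃ y ∈ Q, h y ≠ 0 ∧ y + d ∉ Q := by
  by_contra! hcon
  have hcover : (#Q : ℤ) ≤ #{y ∈ Q | h y = 0} + #{y ∈ Q | y + d ∈ Q} := by
    refine mod_cast (card_le_card fun y hy ↦ ?_).trans (card_union_le _ _)
    by_cases hy0 : h y = 0
    · simp [hy, hy0]
    · simp [hy, hcon y hy hy0]
  have hF' : 3 ≤ q := by exact_mod_cast hF
  have hY := H.card_le_pow
  have hsection : (#{y ∈ Q | h y = 0} : ℤ) ≤ q ^ n * (q ^ n + q - 1) := by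
    rcases H.card_section h hh with e | e <;> rw [e]
    nlinarith
  rw [H.card_translate_of_mem hd hdQ, H.card_eq] at hcover
  have : q ^ n * (q * q ^ n + q - 1) ≤ q ^ n * (2 * (q ^ n + q - 1)) := by linarith
  have := le_of_mul_le_mul_left this (by linarith)
  nlinarith

lemma exists_generator_inf_lt (H : IsHyperbolicQuasiQuadric F n Q) (hF : 2 < Fintype.card F)
    {A B : Submodule F V} (hA : (A : Set V) ⊆ Q) (hB : (B : Set V) ⊆ Q)
    (hAn : Module.finrank F A = n + 1) (hBn : Module.finrank F B = n + 1) (hAB : A ⊓ B ≠ ⊥) :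
    ∃ B' : Submodule F V, (B' : Set V) ⊆ Q ∧ Module.finrank F B' = n + 1 ∧ A ⊓ B' < A ⊓ B := by
  have := H.finite_module
  obtain ⟨d, ⟨hdA, hdB⟩, hd⟩ := Submodule.exists_mem_ne_zero_of_ne_bot hAB
  obtain ⟨h, hh, hABh⟩ : ∃ h : Module.Dual F V, h ≠ 0 ∧ A ⊔ B ≤ LinearMap.ker h := by
    refine Submodule.exists_le_ker_of_lt_top _ (lt_top_iff_ne_top.2 fun htop ↦ hAB ?_)
    have := Submodule.finrank_sup_add_finrank_inf_eq A B
    rw [htop, finrank_top, H.finrank_eq] at this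
    exact Submodule.finrank_eq_zero.1 (by omega)
  obtain ⟨y, hy, hhy, hyd⟩ := H.exists_ne_zero_and_add_notMem hF hh hd (hA hdA)
  have hyB : y ∉ B := fun hyB ↦ hyd (hB (B.add_mem hyB hdB))
  set P := H.perp hF hB hy
  have hPB : P ≤ B := H.perp_le hF hB hy
  have hyP : y ∉ P := fun hyP ↦ hyB (hPB hyP)
  have hmem_P {a : V} (haA : a ∈ A) (ha : a ∈ P ⊔ F ∙ y) : a ∈ P := by
    obtain ⟨p, hp, t, rfl⟩ := by simpa [Submodule.mem_sup, Submodule.mem_span_singleton] using ha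
    have hhp : h p = 0 := hABh (Submodule.mem_sup_right (hPB hp))
    have hha : h (p + t • y) = 0 := hABh (Submodule.mem_sup_left haA)
    obtain rfl : t = 0 := by simpa [hhp, hhy] using hha
    simpa using hp
  refine ⟨P ⊔ F ∙ y, H.sup_span_singleton_subset (fun _ hc ↦ hB (hPB hc)) hy fun c hc ↦ hc.2, ?_,
    lt_of_le_not_ge (fun a ha ↦ ⟨ha.1, hPB (hmem_P ha.1 ha.2)⟩) ?_⟩
  · rw [Submodule.finrank_sup_span_singleton hyP, H.finrank_perp hF hB hBn hy hyB]
  · exact fun hle ↦ hyd (hmem_P hdA (hle ⟨hdA, hdB⟩).2).2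

lemma exists_isCompl_generators (H : IsHyperbolicQuasiQuadric F n Q) (hF : 2 < Fintype.card F) :
    ∃ A B : Submodule F V, (A : Set V) ⊆ Q ∧ (B : Set V) ⊆ Q ∧ Module.finrank F A = n + 1 ∧
      Module.finrank F B = n + 1 ∧ IsCompl A B := by
  have := H.finite_module
  obtain ⟨A, hA, hAn⟩ := H.exists_generator hF
  obtain ⟨B, ⟨hB, hBn⟩, hmin⟩ := exists_minimalFor_of_wellFoundedLT
    (fun B : Submodule F V ↦ (B : Set V) ⊆ Q ∧ Module.finrank F B = n + 1) (A ⊓ ·) ⟨A, hA, hAn⟩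
  have hdisj : Disjoint A B := disjoint_iff.2 <| by
    by_contra hAB
    obtain ⟨B', hB', hB'n, hlt⟩ := H.exists_generator_inf_lt hF hA hB hAn hBn hAB
    exact hlt.not_ge (hmin ⟨hB', hB'n⟩ hlt.le)
  refine ⟨A, B, hA, hB, hAn, hBn, (Submodule.isCompl_iff_disjoint A B ?_).2 hdisj⟩
  rw [hAn, hBn, H.finrank_eq]
  omega

end Generators

section QuadraticForm

lemma exists_quadraticForm (H : IsHyperbolicQuasiQuadric F n Q) (hF : 2 < Fintype.card F) :
    ∃ ψ : QuadraticForm F V, ∀ v, v ∈ Q ↔ ψ v = 0 := by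
  obtain ⟨A, B, hA, hB, hAn, hBn, hAB⟩ := H.exists_isCompl_generators hF
  obtain ⟨t, ht0, ht1⟩ := exists_ne_zero_and_ne_one hF
  have hline (a : A) (b : B) (a' : A) (b' : B) (h : (a : V) + b ∈ Q) (h' : (a' : V) + b' ∈ Q)
      (hsub : ((a' - a : A) : V) + (b' - b : B) ∈ Q) (l : F) :
      (AffineMap.lineMap a a' l : V) + AffineMap.lineMap b b' l ∈ Q := by
    have hneg : -((a : V) + b) ∈ Q := by
      simpa only [neg_one_smul] using H.smul_mem (-1) _ h
    have := H.line_mem _ h' _ hneg (by convert hsub using 1; push_cast; abel) l (l - 1)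
    convert this using 1
    simp only [AffineMap.lineMap_apply_module, Submodule.coe_add, Submodule.coe_smul]
    module
  obtain ⟨T, hT⟩ := exists_bilin_eq_zero_iff (R := fun (a : A) (b : B) ↦ (a : V) + b ∈ Q) ht0 ht1
    (fun b ↦ by simpa only [add_comm] using H.exists_dual_eq_zero_iff hF hA hAn (hB b.2))
    (fun a ↦ H.exists_dual_eq_zero_iff hF hB hBn (hA a.2)) hline
  refine ⟨LinearMap.BilinMap.toQuadraticMap <|
    T.compl₁₂ (A.projectionOnto B hAB) (B.projectionOnto A hAB.symm), fun v ↦ ?_⟩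
  rw [LinearMap.BilinMap.toQuadraticMap_apply, LinearMap.compl₁₂_apply, ← hT]
  exact iff_of_eq <| congr_arg (· ∈ Q) (Submodule.projection_add_projection_eq_self hAB v).symm

variable {ψ : QuadraticForm F V}

lemma polarBilin_ne_zero (H : IsHyperbolicQuasiQuadric F n Q) (hψ : ∀ v, v ∈ Q ↔ ψ v = 0) {d : V}
    (hd : d ≠ 0) : ψ.polarBilin d ≠ 0 := by
  intro h
  have hadd (v : V) : ψ (v + d) = ψ v + ψ d := by
    have : QuadraticMap.polar ψ d v = 0 := LinearMap.congr_fun h v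
    rw [QuadraticMap.polar_comm, QuadraticMap.polar] at this
    linear_combination this
  have hq := one_lt_card (F := F)
  have hY : 0 < q ^ n := by positivity
  by_cases hdQ : d ∈ Q
  · have hcard := H.card_translate_of_mem hd hdQ
    rw [filter_true_of_mem fun v hv ↦ by simp_all, H.card_eq] at hcard
    nlinarith [mul_left_cancel₀ hY.ne' hcard]
  · have hcard := H.card_translate_of_notMem hdQ
    rw [filter_false_of_mem fun v hv ↦ by simp_all, card_empty, Nat.cast_zero] at hcard
    have : 0 < q ^ n * (q ^ n + 1) := by positivity
    linarith

lemma notMem_iff_card_polar_eq (H : IsHyperbolicQuasiQuadric F n Q) (hψ : ∀ v, v ∈ Q ↔ ψ v = 0)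
    {d : V} (hd : d ≠ 0) :
    d ∉ Q ↔ (#{v ∈ Q | ψ.polarBilin d v = 0} : ℤ) = (q ^ n) ^ 2 := by
  have hpolar (v : V) (hv : v ∈ Q) : v + d ∈ Q ↔ ψ.polarBilin d v = -ψ d := by
    rw [QuadraticMap.polarBilin_apply_apply, QuadraticMap.polar_comm, QuadraticMap.polar, hψ,
      (hψ v).1 hv, sub_zero, sub_eq_neg_self]
  have hq := one_lt_card (F := F)
  by_cases hdQ : d ∈ Q
  · have hcard := H.card_translate_of_mem hd hdQ
    rw [filter_congr hpolar, (hψ d).1 hdQ, neg_zero] at hcard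
    have hY : 0 < q ^ n := by positivity
    rw [hcard, not_iff_comm]
    simp only [hdQ, iff_true]
    nlinarith
  · have hcard := H.card_translate_of_notMem hdQ
    rw [filter_congr hpolar] at hcard
    have := card_eq_card_filter_add H.smul_mem (ψ.polarBilin d) (neg_ne_zero.2 (mt (hψ d).2 hdQ))
    rw [hcard, H.card_eq] at this
    simp only [hdQ, not_false_eq_true, true_iff]
    linear_combination -this

end QuadraticForm

end IsHyperbolicQuasiQuadric

section Hyperplanes

variable {F V : Type*} [Field F] [AddCommGroup V] [Module F V]

lemma span_singleton_eq_iff_mem {p : Submodule F V} (hp : Module.finrank F p = 1) {x : V}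
    (hx : x ≠ 0) : F ∙ x = p ↔ x ∈ p := by
  refine ⟨fun h ↦ h ▸ Submodule.mem_span_singleton_self x, fun h ↦ ?_⟩
  have := Module.finite_of_finrank_eq_succ hp
  exact Submodule.eq_of_le_of_finrank_eq ((Submodule.span_singleton_le_iff_mem x p).2 h)
    (by rw [finrank_span_singleton hx, hp])

lemma ker_eq_iff_mem_dualAnnihilator [Module.Finite F V] {π : Submodule F V}
    (hπ : Module.finrank F π + 1 = Module.finrank F V) {h : Module.Dual F V} (hh : h ≠ 0) :
    LinearMap.ker h = π ↔ h ∈ π.dualAnnihilator := by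
  rw [Submodule.mem_dualAnnihilator]
  refine ⟨fun hker w hw ↦ LinearMap.mem_ker.1 (hker ▸ hw), fun hle ↦ ?_⟩
  have := Module.Dual.finrank_ker_add_one_of_ne_zero hh
  exact (Submodule.eq_of_le_of_finrank_eq hle (by omega)).symm

variable [Fintype F]

lemma card_filter_span_singleton_mem [Fintype V] {P : Set (Submodule F V)}
    (hP : ∀ p ∈ P, Module.finrank F p = 1) :
    #{x : V | x ≠ 0 ∧ F ∙ x ∈ P} = (Fintype.card F - 1) * P.ncard := by
  have hfiber : ∀ p ∈ P.toFinset, #{x ∈ ({x : V | x ≠ 0 ∧ F ∙ x ∈ P} : Finset V) | F ∙ x = p} =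
      Fintype.card F - 1 := by
    intro p hp
    rw [Set.mem_toFinset] at hp
    have : ({x ∈ ({x : V | x ≠ 0 ∧ F ∙ x ∈ P} : Finset V) | F ∙ x = p} : Finset V) =
        ({x : V | x ∈ p} : Finset V).erase 0 := by
      ext x
      simp only [mem_filter, mem_univ, true_and, mem_erase, and_assoc]
      refine and_congr_right fun hx ↦ ?_
      rw [← span_singleton_eq_iff_mem (hP p hp) hx]
      exact ⟨And.right, fun h ↦ ⟨h ▸ hp, h⟩⟩
    rw [this, card_erase_of_mem (by simp), ← Fintype.card_subtype,
      Module.card_eq_pow_finrank (K := F) (V := p), hP p hp, pow_one]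
  rw [card_eq_sum_card_fiberwise (f := (F ∙ ·)) (t := P.toFinset) fun x hx ↦ by simp_all,
    sum_const_nat hfiber, mul_comm, Set.ncard_eq_toFinset_card']

lemma card_filter_ker_mem [Module.Finite F V] [Fintype (Module.Dual F V)] {P : Set (Submodule F V)}
    (hP : ∀ π ∈ P, Module.finrank F π + 1 = Module.finrank F V) :
    #{h : Module.Dual F V | h ≠ 0 ∧ LinearMap.ker h ∈ P} = (Fintype.card F - 1) * P.ncard := by
  have hann : ∀ π ∈ P, Module.finrank F π.dualAnnihilator = 1 := fun π hπ ↦ by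
    have := Subspace.finrank_add_finrank_dualAnnihilator_eq π
    have := hP π hπ
    omega
  have hinj : Function.Injective (Submodule.dualAnnihilator : Submodule F V → _) :=
    fun _ _ ↦ Subspace.dualAnnihilator_inj.1
  rw [← Set.ncard_image_of_injective P hinj,
    ← card_filter_span_singleton_mem (by simpa using hann)]
  congr 1
  ext h
  simp only [mem_filter, mem_univ, true_and, Set.mem_image]
  refine and_congr_right fun hh ↦ ⟨fun hker ↦ ⟨_, hker, ?_⟩, ?_⟩
  · rw [eq_comm, span_singleton_eq_iff_mem (hann _ hker) hh,
      ← ker_eq_iff_mem_dualAnnihilator (hP _ hker) hh]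
  · rintro ⟨π, hπ, hspan⟩
    rwa [(ker_eq_iff_mem_dualAnnihilator (hP π hπ) hh).2
      (hspan ▸ Submodule.mem_span_singleton_self h)]

lemma card_filter_apply_eq_zero [Fintype V] {f : Module.Dual F V} (hf : f ≠ 0) :
    #{v : V | f v = 0} * Fintype.card F = Fintype.card F ^ Module.finrank F V := by
  have : Module.Finite F V := Module.Finite.of_finite
  rw [← Module.Dual.finrank_ker_add_one_of_ne_zero hf, pow_succ,
    ← Module.card_eq_pow_finrank (K := F) (V := LinearMap.ker f), ← Fintype.card_subtype]
  rfl

lemma card_filter_span_pair_notMem_le [Fintype V] {Q : Finset V}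
    (hQ : ∀ (c : F), ∀ v ∈ Q, c • v ∈ Q) {u v : V} (hu : u ∈ Q) (hv : v ∈ Q) (huv : u + v ∈ Q) :
    #{x | x ∈ Submodule.span F {u, v} ∧ x ∉ Q} ≤ (Fintype.card F - 1) * (Fintype.card F - 2) := by
  have hsub : ({x | x ∈ Submodule.span F {u, v} ∧ x ∉ Q} : Finset V) ⊆
      (univ.erase (0 : F)).offDiag.image fun c ↦ c.1 • u + c.2 • v := by
    intro x hx
    simp only [mem_filter, mem_univ, true_and] at hx
    obtain ⟨⟨s, t, rfl⟩, hst⟩ := hx.imp_left Submodule.mem_span_pair.1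
    refine mem_image.2 ⟨(s, t), mem_offDiag.2 ⟨?_, ?_, ?_⟩, rfl⟩
    · refine mem_erase.2 ⟨?_, mem_univ _⟩
      rintro rfl
      exact hst (by simpa using hQ t v hv)
    · refine mem_erase.2 ⟨?_, mem_univ _⟩
      rintro rfl
      exact hst (by simpa using hQ s u hu)
    · rintro (rfl : s = t)
      exact hst (by simpa using hQ s _ huv)
  refine (card_le_card hsub).trans (card_image_le.trans_eq ?_)
  rw [offDiag_card, card_erase_of_mem (mem_univ _), card_univ, ← Nat.mul_sub_one, Nat.sub_sub]

lemma ncard_singular_points [Fintype V] (φ : QuadraticForm F V) (π : Submodule F V) :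
    (Fintype.card F - 1) * {p : Submodule F V |
      Module.finrank F p = 1 ∧ p ≤ π ∧ ∀ v ∈ p, φ v = 0}.ncard + 1 = #{v | v ∈ π ∧ φ v = 0} := by
  rw [← card_filter_span_singleton_mem fun p hp ↦ hp.1,
    ← card_erase_add_one (s := {v | v ∈ π ∧ φ v = 0}) (a := 0) (by simp)]
  congr 2
  ext x
  simp only [mem_filter, mem_univ, true_and, mem_erase]
  refine and_congr_right fun hx ↦ ?_
  simp only [Set.mem_ofPred_eq, finrank_span_singleton hx, true_and,
    Submodule.span_singleton_le_iff_mem, Submodule.mem_span_singleton, forall_exists_index,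
    forall_apply_eq_imp_iff, QuadraticMap.map_smul, smul_eq_mul]
  exact and_congr_right fun _ ↦ ⟨fun h ↦ by simpa using h 1, fun h c ↦ by simp [h]⟩

end Hyperplanes

section HyperplaneFamilies

variable {F V : Type*} [Field F] [AddCommGroup V] [Module F V] [Fintype (Module.Dual F V)]
  {S : Set (Submodule F V)}

/-- The hyperplanes outside the family `S`, as a set of vectors of the dual space: the functionals
whose kernel is not a member of `S`, together with the zero functional. -/
noncomputable def nonmemberFunctionals (S : Set (Submodule F V)) : Finset (Module.Dual F V) :=
  {h | h = 0 ∨ LinearMap.ker h ∉ S}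

lemma mem_nonmemberFunctionals {h : Module.Dual F V} :
    h ∈ nonmemberFunctionals S ↔ h = 0 ∨ LinearMap.ker h ∉ S := by
  simp [nonmemberFunctionals]

lemma notMem_nonmemberFunctionals {h : Module.Dual F V} :
    h ∉ nonmemberFunctionals S ↔ h ≠ 0 ∧ LinearMap.ker h ∈ S := by
  simp [mem_nonmemberFunctionals]

lemma smul_mem_nonmemberFunctionals (c : F) :
    ∀ h ∈ nonmemberFunctionals S, c • h ∈ nonmemberFunctionals S := by
  intro h hh
  rw [mem_nonmemberFunctionals] at hh ⊢
  rcases eq_or_ne c 0 with rfl | hc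
  · simp
  · simpa [hc, LinearMap.ker_smul] using hh

variable [Fintype F]

lemma card_filter_notMem_nonmemberFunctionals [Module.Finite F V]
    (hS : ∀ π ∈ S, Module.finrank F π + 1 = Module.finrank F V) (W : Submodule F V) :
    #{h | W ≤ LinearMap.ker h ∧ h ∉ nonmemberFunctionals S} =
      (Fintype.card F - 1) * {π ∈ S | W ≤ π}.ncard := by
  rw [← card_filter_ker_mem fun π hπ ↦ hS π hπ.1]
  congr 1
  ext h
  simp only [mem_filter, mem_univ, true_and, notMem_nonmemberFunctionals, Set.mem_ofPred_eq]
  tauto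

lemma card_section_nonmemberFunctionals_add [Module.Finite F V]
    (hS : ∀ π ∈ S, Module.finrank F π + 1 = Module.finrank F V) {x : V} (hx : x ≠ 0) :
    (#{h ∈ nonmemberFunctionals S | Module.evalEquiv F V x h = 0} +
      (Fintype.card F - 1) * {π ∈ S | F ∙ x ≤ π}.ncard) * Fintype.card F =
        Fintype.card F ^ Module.finrank F V := by
  have hx' : Module.evalEquiv F V x ≠ 0 := (Module.evalEquiv F V).map_ne_zero_iff.2 hx
  rw [← card_filter_notMem_nonmemberFunctionals hS, ← Subspace.dual_finrank_eq (K := F) (V := V),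
    ← card_filter_apply_eq_zero hx',
    ← card_filter_add_card_filter_not (s := {h | Module.evalEquiv F V x h = 0})
      (· ∈ nonmemberFunctionals S)]
  congr 3 <;> ext h
  · simp only [mem_filter, mem_univ, true_and, and_comm]
  · simp only [mem_filter, mem_univ, true_and, Submodule.span_singleton_le_iff_mem]
    rfl

variable {n : ℕ}

lemma card_section_nonmemberFunctionals (hV : Module.finrank F V = 2 * n + 2)
    (hS : ∀ π ∈ S, Module.finrank F π = 2 * n + 1)
    (hP1 : ∀ p : Submodule F V, Module.finrank F p = 1 →
      {π ∈ S | p ≤ π}.ncard = Fintype.card F ^ n * (Fintype.card F ^ n - 1) ∨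
        {π ∈ S | p ≤ π}.ncard = Fintype.card F ^ (2 * n))
    {e : Module.Dual F (Module.Dual F V)} (he : e ≠ 0) :
    (#{h ∈ nonmemberFunctionals S | e h = 0} : ℤ) = (Fintype.card F ^ n) ^ 2 ∨
      (#{h ∈ nonmemberFunctionals S | e h = 0} : ℤ) =
        Fintype.card F ^ n * (Fintype.card F ^ n + Fintype.card F - 1) := by
  have := Module.finite_of_finrank_pos (R := F) (M := V) (by omega)
  obtain ⟨x, rfl⟩ := (Module.evalEquiv F V).surjective e
  have hx : x ≠ 0 := by
    rintro rfl
    exact he (map_zero _)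
  have hcard := card_section_nonmemberFunctionals_add (fun π hπ ↦ by rw [hS π hπ, hV]) hx
  rw [hV, pow_succ, Nat.mul_left_inj Fintype.card_ne_zero] at hcard
  have hq : 1 ≤ Fintype.card F := Fintype.card_pos
  have hY : 1 ≤ Fintype.card F ^ n := Nat.one_le_pow _ _ hq
  zify [hq] at hcard
  rcases hP1 _ (finrank_span_singleton hx) with hncard | hncard
  · right
    zify [hY] at hncard
    rw [hncard] at hcard
    linear_combination hcard
  · left
    zify at hncard
    rw [hncard] at hcard
    linear_combination hcard

lemma line_mem_nonmemberFunctionals (hF : 2 < Fintype.card F)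
    (hV : Module.finrank F V = 2 * n + 2) (hS : ∀ π ∈ S, Module.finrank F π = 2 * n + 1)
    (hP2 : ∀ W : Submodule F V, Module.finrank F W = 2 * n →
      (∃ π ∈ S, W ≤ π) → Fintype.card F - 1 ≤ {π ∈ S | W ≤ π}.ncard) {u v : Module.Dual F V}
    (hu : u ∈ nonmemberFunctionals S) (hv : v ∈ nonmemberFunctionals S)
    (huv : u + v ∈ nonmemberFunctionals S) (a b : F) :
    a • u + b • v ∈ nonmemberFunctionals S := by
  have := Module.finite_of_finrank_pos (R := F) (M := V) (by omega)
  rcases eq_or_ne u 0 with rfl | hu0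
  · simpa using smul_mem_nonmemberFunctionals b v hv
  by_cases hdep : ∃ c : F, c • u = v
  · obtain ⟨c, rfl⟩ := hdep
    simpa only [smul_smul, ← add_smul] using smul_mem_nonmemberFunctionals (a + b * c) u hu
  by_contra hab
  set W := (Submodule.span F {u, v}).dualCoannihilator with hWdef
  have hW : Module.finrank F W = 2 * n := by
    have hspan := finrank_span_eq_card ((LinearIndependent.pair_iff' hu0).2 (by simpa using hdep))
    rw [Matrix.range_cons_cons_empty, Fintype.card_fin] at hspan
    have := Subspace.finrank_add_finrank_dualCoannihilator_eq (Submodule.span F {u, v})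
    rw [← hWdef] at this
    omega
  have hle (h : Module.Dual F V) : W ≤ LinearMap.ker h ↔ h ∈ Submodule.span F {u, v} := by
    rw [← Subspace.dualCoannihilator_dualAnnihilator_eq (W := Submodule.span F {u, v}),
      Submodule.mem_dualAnnihilator]
    rfl
  have hmany := hP2 W hW ⟨_, (notMem_nonmemberFunctionals.1 hab).2,
    (hle _).2 (Submodule.mem_span_pair.2 ⟨a, b, rfl⟩)⟩
  have hfew := card_filter_span_pair_notMem_le smul_mem_nonmemberFunctionals hu hv huv
  simp only [← hle] at hfew
  rw [card_filter_notMem_nonmemberFunctionals fun π hπ ↦ by rw [hS π hπ, hV]] at hfew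
  have := Nat.le_of_mul_le_mul_left hfew (by omega)
  omega

lemma isHyperbolicQuasiQuadric_nonmemberFunctionals (hn : n ≠ 0) (hF : 2 < Fintype.card F)
    (hV : Module.finrank F V = 2 * n + 2) (hS : ∀ π ∈ S, Module.finrank F π = 2 * n + 1)
    (hP1 : ∀ p : Submodule F V, Module.finrank F p = 1 →
      {π ∈ S | p ≤ π}.ncard = Fintype.card F ^ n * (Fintype.card F ^ n - 1) ∨
        {π ∈ S | p ≤ π}.ncard = Fintype.card F ^ (2 * n))
    (hP2 : ∀ W : Submodule F V, Module.finrank F W = 2 * n →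
      (∃ π ∈ S, W ≤ π) → Fintype.card F - 1 ≤ {π ∈ S | W ≤ π}.ncard) :
    IsHyperbolicQuasiQuadric F n (nonmemberFunctionals S) where
  ne_zero := hn
  finrank_eq := by rw [Subspace.dual_finrank_eq, hV]
  zero_mem := mem_nonmemberFunctionals.2 (Or.inl rfl)
  line_mem _ hu _ hv huv := line_mem_nonmemberFunctionals hF hV hS hP2 hu hv huv
  card_section _ := card_section_nonmemberFunctionals hV hS hP1

end HyperplaneFamilies

section DualQuadric

variable {F V : Type*} [Field F] [AddCommGroup V] [Module F V]

lemma exists_equiv_apply_eq_polarBilin [Module.Finite F V] {ψ : QuadraticForm F (Module.Dual F V)}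
    (hψ : ∀ d ≠ 0, ψ.polarBilin d ≠ 0) :
    ∃ P : Module.Dual F V ≃ₗ[F] V, ∀ d h, h (P d) = ψ.polarBilin d h := by
  have hinj : Function.Injective ψ.polarBilin :=
    (injective_iff_map_eq_zero _).2 fun d ↦ not_imp_not.1 (hψ d)
  refine ⟨(LinearEquiv.ofInjectiveOfFinrankEq ψ.polarBilin hinj
    Subspace.dual_finrank_eq.symm).trans (Module.evalEquiv F V).symm, fun d h ↦ ?_⟩
  rw [LinearEquiv.trans_apply, Module.apply_evalEquiv_symm_apply]
  rfl

lemma eq_zero_of_polar_comp_symm_eq_zero {ψ : QuadraticForm F (Module.Dual F V)}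
    (hψ : ∀ d ≠ 0, ψ.polarBilin d ≠ 0) (P : Module.Dual F V ≃ₗ[F] V) {x : V}
    (hx : ∀ y, QuadraticMap.polar (ψ.comp P.symm.toLinearMap) x y = 0) : x = 0 := by
  by_contra hx0
  refine hψ (P.symm x) (by simpa using hx0) (LinearMap.ext fun h ↦ ?_)
  simpa [QuadraticMap.polar] using hx (P h)

variable [Fintype F] {n : ℕ} {Q : Finset (Module.Dual F V)}
  {ψ : QuadraticForm F (Module.Dual F V)} {P : Module.Dual F V ≃ₗ[F] V}

lemma notMem_iff_ncard_singular_points_eq (H : IsHyperbolicQuasiQuadric F n Q)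
    (hψ : ∀ h, h ∈ Q ↔ ψ h = 0) (hP : ∀ d h, h (P d) = ψ.polarBilin d h) {d : Module.Dual F V}
    (hd : d ≠ 0) :
    d ∉ Q ↔ {p : Submodule F V | Module.finrank F p = 1 ∧ p ≤ LinearMap.ker d ∧
      ∀ v ∈ p, ψ.comp P.symm.toLinearMap v = 0}.ncard =
        (Fintype.card F ^ (2 * n) - 1) / (Fintype.card F - 1) := by
  have := H.finite_module
  have : Finite (Module.Dual F V) := Module.finite_of_finite F
  have : Finite V := .of_equiv _ P.toEquiv
  have := Fintype.ofFinite V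
  have hbij : #{v | v ∈ LinearMap.ker d ∧ ψ.comp P.symm.toLinearMap v = 0} =
      #{h ∈ Q | ψ.polarBilin d h = 0} := by
    refine card_equiv P.symm.toEquiv fun v ↦ ?_
    obtain ⟨h, rfl⟩ := P.surjective v
    simp [hψ, hP, QuadraticMap.polar_comm, and_comm]
  rw [H.notMem_iff_card_polar_eq hψ hd, ← hbij, ← ncard_singular_points]
  have hdvd : Fintype.card F - 1 ∣ Fintype.card F ^ (2 * n) - 1 := by
    simpa using Nat.sub_dvd_pow_sub_pow (Fintype.card F) 1 (2 * n)
  have hq : 0 < Fintype.card F - 1 := Nat.sub_pos_of_lt Fintype.one_lt_card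
  have hpow : 0 < Fintype.card F ^ (2 * n) := pow_pos Fintype.card_pos _
  rw [eq_comm (b := _ / _), Nat.div_eq_iff_eq_mul_right hq hdvd, ← pow_mul, mul_comm n 2]
  norm_cast
  omega

end DualQuadric

theorem stmt_0_general {F V : Type*} [Field F] [Fintype F] [AddCommGroup V] [Module F V] {n : ℕ}
    (hn : n ≠ 0) (hF : 2 < Fintype.card F) (hV : Module.finrank F V = 2 * n + 2)
    (S : Set (Submodule F V)) (hS : ∀ π ∈ S, Module.finrank F π = 2 * n + 1)
    (hP1 : ∀ p : Submodule F V, Module.finrank F p = 1 →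
      {π ∈ S | p ≤ π}.ncard = Fintype.card F ^ n * (Fintype.card F ^ n - 1) ∨
        {π ∈ S | p ≤ π}.ncard = Fintype.card F ^ (2 * n))
    (hP2 : ∀ W : Submodule F V, Module.finrank F W = 2 * n →
      (∃ π ∈ S, W ≤ π) → Fintype.card F - 1 ≤ {π ∈ S | W ≤ π}.ncard) :
    ∃ φ : QuadraticForm F V,
      (∀ x, (∀ y, φ (x + y) - φ x - φ y = 0) → x = 0) ∧
      (∃ W : Submodule F V, Module.finrank F W = n + 1 ∧ ∀ v ∈ W, φ v = 0) ∧
      S = {π : Submodule F V | Module.finrank F π = 2 * n + 1 ∧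
        {p : Submodule F V | Module.finrank F p = 1 ∧ p ≤ π ∧ ∀ v ∈ p, φ v = 0}.ncard =
          (Fintype.card F ^ (2 * n) - 1) / (Fintype.card F - 1)} := by
  have := Module.finite_of_finrank_pos (R := F) (M := V) (by omega)
  have : Finite (Module.Dual F V) := Module.finite_of_finite F
  have := Fintype.ofFinite (Module.Dual F V)
  have H := isHyperbolicQuasiQuadric_nonmemberFunctionals hn hF hV hS hP1 hP2
  obtain ⟨ψ, hψ⟩ := H.exists_quadraticForm hF
  obtain ⟨W, hWQ, hWn⟩ := H.exists_generator hF
  obtain ⟨P, hP⟩ := exists_equiv_apply_eq_polarBilin fun _ ↦ H.polarBilin_ne_zero hψ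
  have hmem {π : Submodule F V} (hπ : Module.finrank F π = 2 * n + 1) :
      π ∈ S ↔ {p : Submodule F V | Module.finrank F p = 1 ∧ p ≤ π ∧
        ∀ v ∈ p, ψ.comp P.symm.toLinearMap v = 0}.ncard =
          (Fintype.card F ^ (2 * n) - 1) / (Fintype.card F - 1) := by
    obtain ⟨d, hd, rfl⟩ := exists_dual_ne_zero_ker_eq (P := π) (by omega)
    rw [← notMem_iff_ncard_singular_points_eq H hψ hP hd, notMem_nonmemberFunctionals,
      and_iff_right hd]
  refine ⟨ψ.comp P.symm.toLinearMap,
    fun x ↦ eq_zero_of_polar_comp_symm_eq_zero (fun _ ↦ H.polarBilin_ne_zero hψ) P,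
    ⟨W.map P.toLinearMap, (P.finrank_map_eq W).trans hWn, ?_⟩, ?_⟩
  · rintro _ ⟨w, hw, rfl⟩
    simpa using (hψ w).1 (hWQ hw)
  · ext π
    exact ⟨fun hπ ↦ ⟨hS π hπ, (hmem (hS π hπ)).1 hπ⟩, fun ⟨hπ, hcard⟩ ↦ (hmem hπ).2 hcard⟩

end QuasiQuadrics

/-- For `n ≥ 2` and prime power `q > 2`, a nonempty family `S` of hyperplanes
of `PG(2n+1,q)` satisfying (P1⁺) and (P2) is the family of parabolic hyperplanes of some
nonsingular hyperbolic quadric `Q⁺(2n+1,q)`. -/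
theorem stmt_0 (n : ℕ) (hn : 2 ≤ n)
    (F : Type) [Field F] [Fintype F] (q : ℕ) (hq : Fintype.card F = q) (hq2 : 2 < q)
    (S : Set (Submodule F (Fin (2*n+2) → F)))
    (hS : S.Nonempty)
    (hhyp : ∀ π ∈ S, Module.finrank F π = 2*n+1)
    (hP1 : ∀ p : Submodule F (Fin (2*n+2) → F), Module.finrank F p = 1 →
      {π ∈ S | p ≤ π}.ncard = q^n * (q^n - 1) ∨ {π ∈ S | p ≤ π}.ncard = q^(2*n))
    (hP2 : ∀ W : Submodule F (Fin (2*n+2) → F), Module.finrank F W = 2*n →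
      (∃ π ∈ S, W ≤ π) → q - 1 ≤ {π ∈ S | W ≤ π}.ncard) :
    ∃ φ : QuadraticForm F (Fin (2*n+2) → F),
      (∀ x, (∀ y, φ (x + y) - φ x - φ y = 0) → x = 0) ∧
      (∃ W : Submodule F (Fin (2*n+2) → F), Module.finrank F W = n+1 ∧ ∀ v ∈ W, φ v = 0) ∧
      S = {π : Submodule F (Fin (2*n+2) → F) | Module.finrank F π = 2*n+1 ∧
        {p : Submodule F (Fin (2*n+2) → F) |
          Module.finrank F p = 1 ∧ p ≤ π ∧ ∀ v ∈ p, φ v = 0}.ncard = (q^(2*n) - 1)/(q - 1)} := by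
  subst hq
  exact stmt_0_general (by omega) hq2 (by simp) S hhyp hP1 hP2
end

section
/- Let n ≥ 2 and let q > 2 be a prime power. Let Σ be a nonempty family of hyperplanes of PG(2n+1,q) satisfying properties (P1^−) and (P2). Then there exists a nonsingular elliptic quadratic form φ on V = F^{2n+2}, with elliptic quadric Q = Q^−(2n+1,q), such that Σ is exactly the set of all hyperplanes of PG(2n+1,q) that are parabolic with respect to Q, i.e. that contain exactly (q^{2n}−1)/(q−1) points of Q. -/
/-!
In the dual space let `Z` be the cone over the points that correspond to the hyperplanes outside
`S`. By (P2) a line with three points on `Z` lies on `Z`, and by (P1⁻) a hyperplane meets `Z` in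
one of the two numbers of vectors that occur for an elliptic quadric.

Two points of the cone are perpendicular if the line joining them lies on the cone, that is, if
their sum is in `Z`, so the number of vectors perpendicular to `p` is the autocorrelation of the
indicator function of `Z` at `p`. Fourier analysis expresses it by the hyperplane sections, and it
does not depend on the point `p`. Counting cosets of a maximal totally singular subspace then shows
that a point is perpendicular to one or to all points of a line on `Z`, and by counting again the
points perpendicular to `p` are those in a tangent hyperplane.

Let `W` be the intersection of the tangent hyperplanes at two nonperpendicular points `x` and `y`.
Stereographic projection from `x` describes `Z` by a function on `W` which is affine along every
line whose direction is one of its zeros. Such a function, if its zeros span `W`, is a quadratic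
form, and so `Z` is the zero set of a quadratic form. Its polarity carries it back to the original
space, where the larger sections are those by the hyperplanes in `S`.
-/

namespace EllipticQuadric

open Module

/-- The set of vectors lying on the points of a point set of a projective space which contains
every line that meets it in at least three points. Perpendicularity of `x, y ∈ Z`, that is, the
line `⟨x, y⟩` being contained in the point set, is then expressed by `x + y ∈ Z`. -/
structure LineClosedCone (F : Type*) {V : Type*} [Field F] [AddCommGroup V] [Module F V]
    (Z : Set V) : Prop where
  zero_mem : (0 : V) ∈ Z
  smul_mem : ∀ (c : F) {z : V}, z ∈ Z → c • z ∈ Z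
  add_smul_mem : ∀ {x y : V}, x ∈ Z → y ∈ Z → x + y ∈ Z → ∀ c : F, x + c • y ∈ Z

/-- The vectors of the cone `Z` perpendicular to `p`. -/
def perp {V : Type*} [AddCommGroup V] (Z : Set V) (p : V) : Set V := {z ∈ Z | z + p ∈ Z}

lemma exists_ne_zero_ne {F : Type*} [Field F] (hF : 2 < Nat.card F) (b : F) :
    ∃ c : F, c ≠ 0 ∧ c ≠ b := by
  have : Finite F := Nat.finite_of_card_ne_zero (by omega)
  have hlt : ({0, b} : Set F).ncard < (Set.univ : Set F).ncard := by
    rw [Set.ncard_univ]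
    exact (Set.ncard_insert_le 0 {b}).trans_lt (by simpa using hF)
  obtain ⟨c, -, hc⟩ := Set.exists_mem_notMem_of_ncard_lt_ncard hlt
  exact ⟨c, by grind, by grind⟩

namespace LineClosedCone
variable {F V : Type*} [Field F] [AddCommGroup V] [Module F V] {Z : Set V}
  (h : LineClosedCone F Z) {x y z r : V}
include h

lemma smul_add_smul_mem (hx : x ∈ Z) (hy : y ∈ Z) (hxy : x + y ∈ Z) (a b : F) :
    a • x + b • y ∈ Z := by
  rcases eq_or_ne a 0 with rfl | ha
  · simpa using h.smul_mem b hy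
  · have hmem := h.smul_mem a (h.add_smul_mem hx hy hxy (a⁻¹ * b))
    rwa [smul_add, smul_smul, mul_inv_cancel_left₀ ha] at hmem

lemma smul_add_mem (hx : x ∈ Z) (hy : y ∈ Z) (hxy : x + y ∈ Z) (a : F) : a • x + y ∈ Z := by
  simpa using h.smul_add_smul_mem hx hy hxy a 1

lemma add_mem_of_smul_add_smul_mem (hx : x ∈ Z) (hy : y ∈ Z) {a b : F} (ha : a ≠ 0) (hb : b ≠ 0)
    (hxy : a • x + b • y ∈ Z) : x + y ∈ Z := by
  simpa [smul_smul, ha, hb] using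
    h.smul_add_smul_mem (h.smul_mem a hx) (h.smul_mem b hy) hxy a⁻¹ b⁻¹

lemma add_smul_add_mem (hz : z ∈ Z) (hx : x ∈ Z) (hzx : z + x ∈ Z) (c : F) :
    z + c • x + x ∈ Z := by
  have e : z + c • x + x = z + (c + 1) • x := by module
  exact e ▸ h.add_smul_mem hz hx hzx _

/-- In the plane of the triangle, the point `⟨x + y + r⟩` lies on the line joining a third point
of one side to a third point of another, and this line meets the remaining side. -/
lemma triangle (hF : 2 < Nat.card F) (hx : x ∈ Z) (hy : y ∈ Z) (hr : r ∈ Z)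
    (hxy : x + y ∈ Z) (hxr : x + r ∈ Z) (hyr : y + r ∈ Z) : x + y + r ∈ Z := by
  obtain ⟨c, hc0, hc1⟩ := exists_ne_zero_ne hF (1 : F)
  have hxy' : x + c • y ∈ Z := h.add_smul_mem hx hy hxy c
  have hyr' : (1 - c) • y + (1 : F) • r ∈ Z := h.smul_add_smul_mem hy hr hyr _ _
  have hxr' : ((c - 1) / c) • x + (1 : F) • r ∈ Z := h.smul_add_smul_mem hx hr hxr _ _
  have hsum : x + c • y + ((1 - c) • y + (1 : F) • r) ∈ Z := by
    refine h.add_mem_of_smul_add_smul_mem hxy' hyr' (div_ne_zero (sub_ne_zero.2 hc1) hc0)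
      one_ne_zero ?_
    convert hxr' using 1
    rw [smul_add, smul_smul, div_mul_cancel₀ _ hc0]
    module
  convert hsum using 1
  module

lemma smul_add_smul_add_mem (hF : 2 < Nat.card F) (hx : x ∈ Z) (hy : y ∈ Z) (hr : r ∈ Z)
    (hxy : x + y ∈ Z) (hxr : x + r ∈ Z) (hyr : y + r ∈ Z) (a b : F) :
    a • x + b • y + r ∈ Z :=
  h.triangle hF (h.smul_mem _ hx) (h.smul_mem _ hy) hr (h.smul_add_smul_mem hx hy hxy _ _)
    (h.smul_add_mem hx hr hxr a) (h.smul_add_mem hy hr hyr b)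

end LineClosedCone

/-! ### Perpendicularity by Fourier analysis -/

section CharacterSums

lemma natCard_dual (F V : Type*) [Field F] [AddCommGroup V] [Module F V] [Module.Finite F V] :
    Nat.card (Dual F V) = Nat.card V := by
  rw [natCard_eq_pow_finrank (K := F), Subspace.dual_finrank_eq, ← natCard_eq_pow_finrank]

variable {F V : Type*} [Field F] [AddCommGroup V] [Module F V] [Fintype V] {ψ : AddChar F ℂ}

/-- The Fourier transform of the indicator function of `Z` at the character `ψ ∘ l`. -/
noncomputable def charSum (ψ : AddChar F ℂ) (Z : Set V) (l : Dual F V) : ℂ :=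
  ∑ v, Z.indicator (fun v => ψ (l v)) v

lemma sum_addChar_dual_apply [Fintype (Dual F V)] (hψ : ψ ≠ 1) (v : V) :
    ∑ l : Dual F V, ψ (l v) = Fintype.card V * Set.indicator {0} 1 v := by
  rcases eq_or_ne v 0 with rfl | hv
  · have hcard := natCard_dual F V
    simp only [Nat.card_eq_fintype_card] at hcard
    simp [hcard]
  · obtain ⟨a, ha⟩ := AddChar.ne_one_iff.1 hψ
    obtain ⟨l, hl⟩ : ∃ l : Dual F V, l v ≠ 0 := by
      simpa using mt (Module.forall_dual_apply_eq_zero_iff F v).1 hv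
    have hne : ψ.compAddMonoidHom (Dual.eval F V v).toAddMonoidHom ≠ 1 := by
      refine AddChar.ne_one_iff.2 ⟨(a / l v) • l, ?_⟩
      simpa [hl] using ha
    simpa [hv] using AddChar.sum_eq_zero_of_ne_one hne

lemma sum_addChar_mul [Fintype F] (hψ : ψ ≠ 1) (a : F) :
    ∑ c : F, ψ (c * a) = Fintype.card F * Set.indicator {0} 1 a := by
  classical
  have := AddChar.sum_mulShift a (AddChar.IsPrimitive.of_ne_one hψ)
  simpa [Set.indicator_apply] using this

lemma charSum_zero (Z : Set V) : charSum ψ Z (0 : Dual F V) = Z.ncard := by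
  classical
  simp [charSum, Set.indicator_apply, Finset.sum_boole, Set.ncard_eq_toFinset_card']

lemma charSum_smul {Z : Set V} (hZ : ∀ (c : F) {z : V}, z ∈ Z → c • z ∈ Z) (l : Dual F V) {c : F}
    (hc : c ≠ 0) : charSum ψ Z (c • l) = charSum ψ Z l := by
  refine Fintype.sum_equiv (MulAction.toPerm (Units.mk0 c hc) : Equiv.Perm V) _ _ fun v => ?_
  have hmem : c • v ∈ Z ↔ v ∈ Z := ⟨fun h => by simpa [hc] using hZ c⁻¹ h, hZ c⟩
  by_cases hv : v ∈ Z <;> simp [hmem, hv, Units.smul_def]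

lemma card_sub_one_mul_charSum [Fintype F] (hψ : ψ ≠ 1) {Z : Set V}
    (hZ : ∀ (c : F) {z : V}, z ∈ Z → c • z ∈ Z) (l : Dual F V) :
    (Fintype.card F - 1) * charSum ψ Z l = Fintype.card F * {z ∈ Z | l z = 0}.ncard - Z.ncard := by
  classical
  have hscalars : ∑ c : F, charSum ψ Z (c • l) =
      (Fintype.card F - 1) * charSum ψ Z l + Z.ncard := by
    rw [← Finset.add_sum_erase _ _ (Finset.mem_univ 0), zero_smul, charSum_zero,
      Finset.sum_congr rfl fun c hc => charSum_smul hZ l (Finset.ne_of_mem_erase hc)]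
    simp [Finset.card_erase_of_mem, Nat.cast_sub Fintype.card_pos, add_comm]
  have hvectors : ∑ c : F, charSum ψ Z (c • l) = Fintype.card F * {z ∈ Z | l z = 0}.ncard := by
    simp only [charSum, Set.indicator_apply, LinearMap.smul_apply, smul_eq_mul]
    rw [Finset.sum_comm]
    have hv : ∀ v : V, (∑ c : F, if v ∈ Z then ψ (c * l v) else 0) =
        Fintype.card F * if v ∈ Z ∧ l v = 0 then 1 else 0 := fun v => by
      by_cases hv : v ∈ Z <;> simp [hv, sum_addChar_mul hψ, Set.indicator_apply]
    rw [Finset.sum_congr rfl fun v _ => hv v, ← Finset.mul_sum, Finset.sum_boole,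
      Set.ncard_eq_toFinset_card']
    simp
  linear_combination hvectors - hscalars

variable [Fintype (Dual F V)]

lemma sum_charSum_mul_addChar (hψ : ψ ≠ 1) (Z : Set V) (p : V) :
    ∑ l : Dual F V, charSum ψ Z l * ψ (-l p) = Fintype.card V * Z.indicator 1 p := by
  classical
  have hv : ∀ v : V, ∑ l : Dual F V, Z.indicator (fun v => ψ (l v)) v * ψ (-l p) =
      Z.indicator 1 v * (Fintype.card V * if v = p then 1 else 0) := fun v => by
    have := sum_addChar_dual_apply hψ (v - p)
    by_cases hv : v ∈ Z <;>
      simp_all [Set.indicator_apply, sub_eq_zero, ← AddChar.map_add_eq_mul, ← sub_eq_add_neg]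
  simp only [charSum, Finset.sum_mul]
  rw [Finset.sum_comm, Finset.sum_congr rfl fun v _ => hv v]
  simp [mul_comm]

lemma sum_charSum_sq_mul_addChar (hψ : ψ ≠ 1) {Z : Set V}
    (hZ : ∀ {z : V}, z ∈ Z → -z ∈ Z) (p : V) :
    ∑ l : Dual F V, charSum ψ Z l ^ 2 * ψ (-l p) = Fintype.card V * (perp Z p).ncard := by
  classical
  have hl : ∀ l : Dual F V, charSum ψ Z l ^ 2 * ψ (-l p) =
      ∑ v, Z.indicator 1 v * (charSum ψ Z l * ψ (-l (p - v))) := fun l => by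
    rw [pow_two, mul_assoc]
    nth_rw 1 [charSum]
    rw [Finset.sum_mul]
    refine Finset.sum_congr rfl fun v _ => ?_
    by_cases hv : v ∈ Z <;> simp [hv, AddChar.map_add_eq_mul, sub_eq_add_neg, mul_left_comm]
  have hperp : ∑ v, Z.indicator 1 v * Z.indicator 1 (p - v) = ((perp Z p).ncard : ℂ) := by
    have hv : ∀ v, Z.indicator (1 : V → ℂ) (-v) * Z.indicator 1 (p - -v) =
        if v ∈ perp Z p then 1 else 0 := fun v => by
      have hneg : -v ∈ Z ↔ v ∈ Z := ⟨fun h => neg_neg v ▸ hZ h, hZ⟩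
      by_cases hv : v ∈ Z <;> simp [perp, Set.indicator_apply, hneg, hv, add_comm]
    rw [← Fintype.sum_equiv (Equiv.neg V) _ _ fun _ => rfl]
    simp only [Equiv.neg_apply]
    rw [Finset.sum_congr rfl fun v _ => hv v]
    simp [Finset.sum_boole, Set.ncard_eq_toFinset_card']
  rw [Finset.sum_congr rfl fun l _ => hl l, Finset.sum_comm, ← hperp, Finset.mul_sum]
  refine Finset.sum_congr rfl fun v _ => ?_
  rw [← Finset.mul_sum, sum_charSum_mul_addChar hψ, mul_left_comm]

lemma sum_mul_charSum_add_mul_addChar (hψ : ψ ≠ 1) {Z : Set V}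
    (hZ : ∀ {z : V}, z ∈ Z → -z ∈ Z) (k a b : ℂ) (p : V) :
    ∑ l : Dual F V, (k * charSum ψ Z l + a) * (k * charSum ψ Z l + b) * ψ (-l p) =
      Fintype.card V * (k ^ 2 * (perp Z p).ncard + k * (a + b) * Z.indicator 1 p +
        a * b * Set.indicator {0} 1 p) := by
  have h2 := sum_charSum_sq_mul_addChar hψ hZ p
  have h1 := sum_charSum_mul_addChar hψ Z p
  have h0 : ∑ l : Dual F V, ψ (-l p) = Fintype.card V * Set.indicator {0} 1 p := by
    classical
    simpa [Set.indicator_apply] using sum_addChar_dual_apply hψ (-p)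
  have hexpand : ∀ l, (k * charSum ψ Z l + a) * (k * charSum ψ Z l + b) * ψ (-l p) =
      k ^ 2 * (charSum ψ Z l ^ 2 * ψ (-l p)) + k * (a + b) * (charSum ψ Z l * ψ (-l p)) +
        a * b * ψ (-l p) := fun l => by
    ring
  simp only [hexpand, Finset.sum_add_distrib, ← Finset.mul_sum, h0, h1, h2]
  ring

end CharacterSums

lemma exists_addChar_ne_one (F : Type*) [Field F] [Finite F] : ∃ ψ : AddChar F ℂ, ψ ≠ 1 := by
  refine ⟨AddChar.FiniteField.primitiveChar_to_Complex F, fun h => ?_⟩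
  have := AddChar.FiniteField.primitiveChar_to_Complex_isPrimitive F one_ne_zero
  simp [h, AddChar.mulShift_one] at this

/-- Summed against `ψ (-l p)`, the relation `(|Z ∩ ker l| - A) (|Z ∩ ker l| - B) = 0` for `l ≠ 0`
becomes, by Fourier inversion, a formula for the autocorrelation `|Z ∩ (Z - p)|`. -/
theorem ncard_perp_of_two_sections {F V : Type*} [Field F] [AddCommGroup V] [Module F V]
    [Finite F] [Finite V] {Z : Set V}
    (hZ : ∀ (c : F) {z : V}, z ∈ Z → c • z ∈ Z) {A B : ℤ}
    (hsec : ∀ l : Dual F V, l ≠ 0 →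
      ({z ∈ Z | l z = 0}.ncard : ℤ) = A ∨ ({z ∈ Z | l z = 0}.ncard : ℤ) = B) (p : V) :
    (Nat.card V : ℤ) * ((Nat.card F - 1) ^ 2 * (perp Z p).ncard
        - (Nat.card F - 1) * (Nat.card F * (A + B) - 2 * Z.ncard) * Z.indicator 1 p
        + (Nat.card F * A - Z.ncard) * (Nat.card F * B - Z.ncard) * Set.indicator {0} 1 p)
      = Nat.card F ^ 2 * (Z.ncard - A) * (Z.ncard - B) := by
  have := Fintype.ofFinite F
  have := Fintype.ofFinite V
  have : Finite (Dual F V) := DFunLike.finite _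
  have := Fintype.ofFinite (Dual F V)
  obtain ⟨ψ, hψ⟩ := exists_addChar_ne_one F
  have hfactor (l : Dual F V) (C : ℤ) :
      (Nat.card F - 1) * charSum ψ Z l + (Z.ncard - Nat.card F * C) =
        Nat.card F * ({z ∈ Z | l z = 0}.ncard - C) := by
    have := card_sub_one_mul_charSum hψ hZ l
    rw [← Nat.card_eq_fintype_card] at this
    linear_combination this
  have hsum : ∑ l, ((Nat.card F - 1) * charSum ψ Z l + (Z.ncard - Nat.card F * A)) *
      ((Nat.card F - 1) * charSum ψ Z l + (Z.ncard - Nat.card F * B)) * ψ (-l p) =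
      Nat.card F ^ 2 * (Z.ncard - A) * (Z.ncard - B) := by
    simp only [hfactor]
    rw [Finset.sum_eq_single 0]
    · simp
      ring
    · intro l _ hl
      rcases hsec l hl with h | h <;> simp [← h]
    · simp
  rw [sum_mul_charSum_add_mul_addChar hψ (fun {z} hz => by simpa using hZ (-1) hz),
    ← Nat.card_eq_fintype_card] at hsum
  have hind : ∀ s : Set V, ((s.indicator 1 p : ℤ) : ℂ) = s.indicator 1 p := fun s => by
    by_cases hp : p ∈ s <;> simp [hp]
  rw [← Int.cast_inj (α := ℂ)]
  push_cast
  rw [hind, hind]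
  linear_combination hsum

lemma perp_zero {V : Type*} [AddCommGroup V] (Z : Set V) : perp Z 0 = Z := by simp [perp]

/-- Of the two roots of the quadratic equation for the cardinality `N` of the cone, the other one
would make `Q - 1` a divisor of `(r - 1) ^ 2`. -/
lemma eq_of_quadratic_equation {N Q r : ℤ} (hr : 2 < r) (hQ : r ^ 2 ≤ Q)
    (hN : r ^ 2 * Q ^ 2 * ((r - 1) ^ 2 * N
        - (r - 1) * (r * (Q ^ 2 + (Q ^ 2 - r * Q + Q)) - 2 * N)
        + (r * Q ^ 2 - N) * (r * (Q ^ 2 - r * Q + Q) - N))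
      = r ^ 2 * (N - Q ^ 2) * (N - (Q ^ 2 - r * Q + Q))) :
    N = r * Q ^ 2 - r * Q + Q := by
  have hprod : (N - (r * Q ^ 2 - r * Q + Q)) *
      ((Q - 1) * (r ^ 2 * Q ^ 2 - N) - (r - 1) * Q ^ 2 * (r * Q - 1)) * (r ^ 2 * (Q + 1)) = 0 := by
    linear_combination -hN
  have hne : r ^ 2 * (Q + 1) ≠ 0 := by
    have : 0 < Q + 1 := by nlinarith
    positivity
  rcases mul_eq_zero.1 ((mul_eq_zero.1 hprod).resolve_right hne) with hroot | hroot
  · linarith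
  · exfalso
    have hdvd : Q - 1 ∣ (r - 1) ^ 2 :=
      ⟨r ^ 2 * Q ^ 2 - N - (r - 1) * (r * Q ^ 2 + (r - 1) * Q + (r - 1)), by
        linear_combination -hroot⟩
    have := Int.le_of_dvd (by nlinarith) hdvd
    nlinarith

/-- The number `q ^ (2 * n) - q ^ (n + 1) + q ^ n` of vectors of the elliptic cone in dimension
`2 * n + 2` in the tangent hyperplane at a singular point. -/
def tangentSectionCard (n q : ℕ) : ℤ := ((q : ℤ) ^ n) ^ 2 - q * (q : ℤ) ^ n + (q : ℤ) ^ n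

/-- A cone with the line property in dimension `2n + 2` over the field of order `q` whose
hyperplane sections have the two sizes that occur for an elliptic quadric: the larger one,
`q ^ (2 * n)`, for the nontangent hyperplanes and the smaller one for the tangent hyperplanes. -/
structure EllipticCone (F : Type*) {V : Type*} [Field F] [AddCommGroup V] [Module F V] (n q : ℕ)
    (Z : Set V) : Prop extends LineClosedCone F Z where
  two_le : 2 ≤ n
  card_eq : Nat.card F = q
  two_lt : 2 < q
  finrank_eq : finrank F V = 2 * n + 2
  ncard_section : ∀ l : Dual F V, l ≠ 0 → ({z ∈ Z | l z = 0}.ncard : ℤ) = ((q : ℤ) ^ n) ^ 2 ∨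
    ({z ∈ Z | l z = 0}.ncard : ℤ) = tangentSectionCard n q

namespace EllipticCone
variable {F V : Type*} [Field F] [AddCommGroup V] [Module F V] {n q : ℕ} {Z : Set V}
  (h : EllipticCone F n q Z)
include h

lemma two_lt_card : 2 < Nat.card F := h.card_eq ▸ h.two_lt

lemma two_lt_cast : (2 : ℤ) < q := by exact_mod_cast h.two_lt

lemma cast_sq_le_cast_pow : (q : ℤ) ^ 2 ≤ (q : ℤ) ^ n :=
  pow_le_pow_right₀ (by linarith [h.two_lt_cast]) h.two_le

lemma cast_pow_pos : (0 : ℤ) < (q : ℤ) ^ n :=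
  pow_pos (by linarith [h.two_lt_cast]) n

variable [Finite V]

lemma natCard_eq : (Nat.card V : ℤ) = q ^ 2 * ((q : ℤ) ^ n) ^ 2 := by
  rw [natCard_eq_pow_finrank (K := F), h.card_eq, h.finrank_eq]
  push_cast
  ring

variable [Finite F]

lemma ncard_eq : (Z.ncard : ℤ) = q * ((q : ℤ) ^ n) ^ 2 - q * (q : ℤ) ^ n + (q : ℤ) ^ n := by
  have hperp := ncard_perp_of_two_sections (fun c {z} hz => h.smul_mem c hz) h.ncard_section 0
  simp only [perp_zero, h.natCard_eq, h.card_eq, Set.indicator_of_mem h.zero_mem,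
    Set.indicator_of_mem (Set.mem_singleton _), Pi.one_apply, mul_one,
    tangentSectionCard] at hperp
  exact eq_of_quadratic_equation h.two_lt_cast h.cast_sq_le_cast_pow hperp

lemma ncard_perp {p : V} (hp : p ∈ Z) (hp0 : p ≠ 0) :
    ((perp Z p).ncard : ℤ) = tangentSectionCard n q := by
  have hperp := ncard_perp_of_two_sections (fun c {z} hz => h.smul_mem c hz) h.ncard_section p
  simp only [h.natCard_eq, h.card_eq, Set.indicator_of_mem hp, h.ncard_eq,
    Set.indicator_of_notMem (by simpa using hp0 : p ∉ ({0} : Set V)), Pi.one_apply, mul_one,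
    mul_zero, add_zero] at hperp
  rw [tangentSectionCard] at hperp ⊢
  have hr := h.two_lt_cast
  have hQ := h.cast_pow_pos
  generalize (q : ℤ) ^ n = Q at *
  generalize (q : ℤ) = r at *
  have hne : r ^ 2 * Q ^ 2 * (r - 1) ^ 2 ≠ 0 := by
    have : 0 < r - 1 := by linarith
    positivity
  exact mul_left_cancel₀ hne (by linear_combination hperp)

end EllipticCone

/-! ### Maximal totally singular subspaces -/

section CosetCount
variable {F V : Type*} [Field F] [AddCommGroup V] [Module F V] {Z : Set V}

/-- The number of vectors of `Z` in the coset of the subspace `U` through `v`. -/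
noncomputable def cosetCount (Z : Set V) (U : Submodule F V) (v : V) : ℕ :=
  {u : U | (u : V) + v ∈ Z}.ncard

lemma cosetCount_add_left (U : Submodule F V) (v : V) (p : U) :
    cosetCount Z U (p + v) = cosetCount Z U v := by
  refine Set.ncard_congr (fun u _ => u + p) (fun u hu => ?_) (fun _ _ _ _ => add_right_cancel)
    fun u hu => ⟨u - p, ?_, sub_add_cancel u p⟩
  · simpa [add_assoc] using hu
  · have e : (u : V) - p + (p + v) = u + v := by abel
    simpa [e] using hu

lemma cosetCount_of_mem {U : Submodule F V} (hU : (U : Set V) ⊆ Z) {v : V} (hv : v ∈ U) :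
    cosetCount Z U v = Nat.card U := by
  rw [cosetCount, ← Set.ncard_univ]
  congr 1
  exact Set.eq_univ_of_forall fun u => hU (U.add_mem u.2 hv)

lemma cosetCount_eq_sum (U : Submodule F V) [Fintype U] (v : V) :
    (cosetCount Z U v : ℤ) = ∑ u : U, Z.indicator 1 (u + v) := by
  classical
  simp [cosetCount, Set.ncard_eq_toFinset_card', Set.indicator_apply, Finset.sum_boole]

variable [Fintype V]

lemma sum_indicator_add (Z : Set V) (u : V) : ∑ v, Z.indicator (1 : V → ℤ) (u + v) = Z.ncard := by
  classical
  have hshift := Equiv.sum_comp (Equiv.addLeft u) (Z.indicator (1 : V → ℤ))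
  simp only [Equiv.coe_addLeft] at hshift
  rw [hshift]
  simp [Set.ncard_eq_toFinset_card', Set.indicator_apply, Finset.sum_boole]

lemma sum_cosetCount (U : Submodule F V) :
    ∑ v, (cosetCount Z U v : ℤ) = Nat.card U * Z.ncard := by
  have := Fintype.ofFinite U
  simp only [cosetCount_eq_sum]
  rw [Finset.sum_comm]
  simp [sum_indicator_add]

lemma sum_cosetCount_sq (U : Submodule F V) [Fintype U] :
    ∑ v, (cosetCount Z U v : ℤ) ^ 2 = Nat.card U * ∑ u : U, ((perp Z (u : V)).ncard : ℤ) := by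
  have hpair : ∀ a b : U, ∑ v, Z.indicator (1 : V → ℤ) (a + v) * Z.indicator 1 (b + v) =
      (perp Z ((b - a : U) : V)).ncard := fun a b => by
    rw [← sum_indicator_add _ (a : V)]
    refine Finset.sum_congr rfl fun v _ => ?_
    have e : (a : V) + v + (b - a : U) = b + v := by simp [add_comm]
    by_cases ha : (a : V) + v ∈ Z <;> by_cases hb : (b : V) + v ∈ Z <;>
      simp [perp, Set.indicator, ha, hb, e, -AddSubgroupClass.coe_sub]
  have hshift : ∀ a : U, ∑ b : U, ((perp Z ((b - a : U) : V)).ncard : ℤ) =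
      ∑ u : U, ((perp Z (u : V)).ncard : ℤ) := fun a =>
    (Equiv.subRight a).sum_comp fun u : U => ((perp Z (u : V)).ncard : ℤ)
  simp only [cosetCount_eq_sum, pow_two, Finset.sum_mul_sum]
  rw [Finset.sum_comm]
  simp only [Finset.sum_comm (s := (Finset.univ : Finset V)), hpair, hshift]
  simp

lemma sum_cosetCount_of_notMem {U : Submodule F V} (hU : (U : Set V) ⊆ Z) {T : Finset V}
    (hT : ∀ v, v ∈ T ↔ v ∉ U) (f : ℤ → ℤ) :
    ∑ v ∈ T, f (cosetCount Z U v) =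
      ∑ v, f (cosetCount Z U v) - Nat.card U * f (Nat.card U) := by
  classical
  have hU' : ∑ v ∈ Tᶜ, f (cosetCount Z U v) = Nat.card U * f (Nat.card U) := by
    rw [Finset.sum_congr rfl fun v hv => by rw [cosetCount_of_mem hU (by simpa [hT] using hv)],
      Finset.sum_const, nsmul_eq_mul]
    have hTU : ((Tᶜ : Finset V) : Set V) = U := by
      ext v
      simp [hT]
    rw [← Set.ncard_coe_finset, hTU, ← Nat.card_coe_set_eq]
    rfl
  rw [← hU', ← Finset.sum_add_sum_compl T]
  ring

end CosetCount

lemma LineClosedCone.exists_submodule_coe_eq {F V : Type*} [Field F] [AddCommGroup V] [Module F V]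
    {Z : Set V} (h : LineClosedCone F Z) (hF : 2 < Nat.card F) {U : Submodule F V}
    (hU : (U : Set V) ⊆ Z) {r : V} (hr : r ∈ Z) :
    ∃ W : Submodule F U, (W : Set U) = {u : U | (u : V) + r ∈ Z} :=
  ⟨{ carrier := {u : U | (u : V) + r ∈ Z}
     add_mem' := fun {a b} ha hb =>
      h.triangle hF (hU a.2) (hU b.2) hr (hU (U.add_mem a.2 b.2)) ha hb
     zero_mem' := by simpa using hr
     smul_mem' := fun c u hu => h.smul_add_mem (hU u.2) hr hu c }, rfl⟩

namespace EllipticCone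
variable {F V : Type*} [Field F] [AddCommGroup V] [Module F V]
  {n q : ℕ} {Z : Set V} (h : EllipticCone F n q Z) {U : Submodule F V} {r : V}
include h

lemma add_one_eq_of_le_of_le {k : ℕ} (hle : (q : ℤ) ^ n ≤ q * (q : ℤ) ^ k)
    (hge : q * (q * (q : ℤ) ^ k - (q : ℤ) ^ n) ≤ (q : ℤ) ^ k) : k + 1 = n := by
  have hq := h.two_lt_cast
  rcases lt_trichotomy (k + 1) n with hlt | heq | hgt
  · have : (q : ℤ) ^ (k + 1) < (q : ℤ) ^ n := pow_lt_pow_right₀ (by linarith) hlt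
    rw [pow_succ'] at this
    linarith
  · exact heq
  · have : (q : ℤ) ^ n ≤ (q : ℤ) ^ k := pow_le_pow_right₀ (by linarith) (by omega)
    have := h.cast_pow_pos
    nlinarith

variable [Finite V]

lemma natCard_submodule (U : Submodule F V) : Nat.card U = q ^ finrank F U := by
  rw [natCard_eq_pow_finrank (K := F), h.card_eq]

lemma exists_cosetCount_eq_pow (hU : Maximal (fun U : Submodule F V => (U : Set V) ⊆ Z) U)
    (hr : r ∈ Z) (hrU : r ∉ U) : ∃ j, cosetCount Z U r = q ^ j ∧ j < finrank F U := by
  obtain ⟨W, hW⟩ := h.exists_submodule_coe_eq h.two_lt_card hU.prop hr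
  refine ⟨finrank F W, ?_, Submodule.finrank_lt fun hWU => hrU ?_⟩
  · rw [cosetCount, ← hW, ← h.card_eq, ← natCard_eq_pow_finrank (K := F)]
    rfl
  · have hle : ((U ⊔ F ∙ r : Submodule F V) : Set V) ⊆ Z := by
      intro v hv
      obtain ⟨u, hu, _, hb, rfl⟩ := Submodule.mem_sup.1 hv
      obtain ⟨c, rfl⟩ := Submodule.mem_span_singleton.1 hb
      have hur : (⟨u, hu⟩ : U) ∈ (W : Set U) := by simp [hWU]
      rw [hW] at hur
      exact h.add_smul_mem (hU.prop hu) hr hur c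
    exact hU.le_of_ge hle le_sup_left
      (Submodule.mem_sup_right (Submodule.mem_span_singleton_self r))

lemma cosetCount_eq_or_mul_le (hU : Maximal (fun U : Submodule F V => (U : Set V) ⊆ Z) U) {k : ℕ}
    (hk : finrank F U = k + 1) {v : V} (hv : v ∉ U) :
    (cosetCount Z U v : ℤ) = (q : ℤ) ^ k ∨ q * (cosetCount Z U v : ℤ) ≤ (q : ℤ) ^ k := by
  rcases Nat.eq_zero_or_pos (cosetCount Z U v) with h0 | h0
  · simp [h0]
  obtain ⟨p, hp⟩ := Set.nonempty_of_ncard_ne_zero h0.ne'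
  obtain ⟨j, hj, hjk⟩ := h.exists_cosetCount_eq_pow hU hp
    fun hpv => hv ((U.add_mem_iff_right p.2).1 hpv)
  rw [cosetCount_add_left] at hj
  rw [hj]
  rcases Nat.lt_or_ge j k with hlt | hge
  · right
    rw [Nat.cast_pow, ← pow_succ']
    exact pow_le_pow_right₀ (by linarith [h.two_lt_cast]) hlt
  · left
    rw [Nat.cast_pow, show j = k by omega]

lemma cosetCount_mul_sub_mem_Icc (hU : Maximal (fun U : Submodule F V => (U : Set V) ⊆ Z) U)
    {k : ℕ} (hk : finrank F U = k + 1) {v : V} (hv : v ∉ U) :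
    0 ≤ (cosetCount Z U v : ℤ) * ((q : ℤ) ^ k - cosetCount Z U v) ∧
      q * ((cosetCount Z U v : ℤ) * ((q : ℤ) ^ k - cosetCount Z U v)) ≤
        (q : ℤ) ^ k * ((q : ℤ) ^ k - cosetCount Z U v) := by
  rcases h.cosetCount_eq_or_mul_le hU hk hv with heq | hle
  · simp [heq]
  · have hq := h.two_lt_cast
    have hc : (0 : ℤ) ≤ cosetCount Z U v := Nat.cast_nonneg _
    have hsub : 0 ≤ (q : ℤ) ^ k - cosetCount Z U v := by nlinarith
    exact ⟨mul_nonneg hc hsub, by nlinarith [mul_le_mul_of_nonneg_right hle hsub]⟩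

variable [Finite F]

lemma sum_ncard_perp [Fintype U] (hU : (U : Set V) ⊆ Z) :
    ∑ u : U, ((perp Z (u : V)).ncard : ℤ) =
      Z.ncard + (Nat.card U - 1) * tangentSectionCard n q := by
  classical
  rw [← Finset.add_sum_erase _ _ (Finset.mem_univ 0), Finset.sum_congr rfl fun u hu =>
    h.ncard_perp (hU u.2) (by simpa using Finset.ne_of_mem_erase hu)]
  simp [perp_zero, Finset.card_erase_of_mem, Nat.cast_sub Fintype.card_pos]

lemma sum_sub_cosetCount (hU : (U : Set V) ⊆ Z) {k : ℕ} (hk : finrank F U = k + 1)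
    {T : Finset V} (hT : ∀ v, v ∈ T ↔ v ∉ U) :
    ∑ v ∈ T, ((q : ℤ) ^ k - cosetCount Z U v) =
      q * (q : ℤ) ^ k * ((q - 1) * ((q : ℤ) ^ n + (q : ℤ) ^ k)) := by
  have := Fintype.ofFinite V
  have hV := h.natCard_eq
  rw [Nat.card_eq_fintype_card] at hV
  rw [sum_cosetCount_of_notMem hU hT fun c => (q : ℤ) ^ k - c, Finset.sum_sub_distrib,
    sum_cosetCount, h.ncard_eq, h.natCard_submodule, hk, Finset.sum_const, nsmul_eq_mul,
    Finset.card_univ, hV]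
  push_cast
  ring

lemma sum_cosetCount_mul_sub (hU : (U : Set V) ⊆ Z) {k : ℕ} (hk : finrank F U = k + 1)
    {T : Finset V} (hT : ∀ v, v ∈ T ↔ v ∉ U) :
    ∑ v ∈ T, (cosetCount Z U v : ℤ) * ((q : ℤ) ^ k - cosetCount Z U v) =
      q * (q : ℤ) ^ k * ((q - 1) * ((q : ℤ) ^ n + (q : ℤ) ^ k)) *
        (q * (q : ℤ) ^ k - (q : ℤ) ^ n) := by
  have := Fintype.ofFinite U
  have := Fintype.ofFinite V
  rw [sum_cosetCount_of_notMem hU hT fun c => c * ((q : ℤ) ^ k - c)]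
  simp only [mul_sub, Finset.sum_sub_distrib, ← pow_two, ← Finset.sum_mul]
  rw [sum_cosetCount, sum_cosetCount_sq, h.sum_ncard_perp hU, h.ncard_eq, h.natCard_submodule, hk,
    tangentSectionCard]
  push_cast
  ring

theorem finrank_eq_and_cosetCount_eq_of_maximal
    (hU : Maximal (fun U : Submodule F V => (U : Set V) ⊆ Z) U) (hr : r ∈ Z) (hrU : r ∉ U) :
    finrank F U = n ∧ q * cosetCount Z U r = Nat.card U := by
  classical
  have := Fintype.ofFinite V
  obtain ⟨j, hj, hjU⟩ := h.exists_cosetCount_eq_pow hU hr hrU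
  obtain ⟨k, hk⟩ : ∃ k, finrank F U = k + 1 := ⟨finrank F U - 1, by omega⟩
  set T : Finset V := {v | v ∉ U}
  have hT : ∀ v, v ∈ T ↔ v ∉ U := by simp [T]
  have hsub := h.sum_sub_cosetCount hU.prop hk hT
  have hmul := h.sum_cosetCount_mul_sub hU.prop hk hT
  have hIcc := fun v hv => h.cosetCount_mul_sub_mem_Icc hU hk ((hT v).1 hv)
  have hq := h.two_lt_cast
  have hle := Finset.sum_le_sum fun v hv => (hIcc v hv).2
  rw [← Finset.mul_sum, ← Finset.mul_sum, hsub, hmul] at hle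
  have hC : 0 < q * (q : ℤ) ^ k * ((q - 1) * ((q : ℤ) ^ n + (q : ℤ) ^ k)) := by
    have : (0 : ℤ) < q - 1 := by linarith
    positivity
  have hkn : k + 1 = n := by
    refine h.add_one_eq_of_le_of_le ?_ ?_
    · have := Finset.sum_nonneg fun v hv => (hIcc v hv).1
      rw [hmul] at this
      linarith [nonneg_of_mul_nonneg_right this hC]
    · exact le_of_mul_le_mul_left (by linarith) hC
  have hzero : ∑ v ∈ T, (cosetCount Z U v : ℤ) * ((q : ℤ) ^ k - cosetCount Z U v) = 0 := by
    rw [hmul, ← hkn]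
    ring
  have hr0 := (Finset.sum_eq_zero_iff_of_nonneg fun v hv => (hIcc v hv).1).1 hzero r ((hT r).2 hrU)
  have hrk : (cosetCount Z U r : ℤ) = (q : ℤ) ^ k := by
    have : (cosetCount Z U r : ℤ) ≠ 0 := by
      rw [hj, Nat.cast_pow]
      exact pow_ne_zero j (by linarith)
    linarith [(mul_eq_zero.1 hr0).resolve_left this]
  refine ⟨hk.trans hkn, ?_⟩
  rw [h.natCard_submodule, hk, pow_succ']
  exact_mod_cast congrArg ((q : ℤ) * ·) hrk

/-- The Buekenhout–Shult property, by which the points and lines in `Z` form a polar space. -/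
theorem one_or_all {x y : V} (hx : x ∈ Z) (hy : y ∈ Z) (hr : r ∈ Z) (hxy : x + y ∈ Z) :
    y + r ∈ Z ∨ ∃ c : F, x + c • y + r ∈ Z := by
  have hline : ((F ∙ x ⊔ F ∙ y : Submodule F V) : Set V) ⊆ Z := by
    rw [← Submodule.span_union, Set.singleton_union]
    intro u hu
    obtain ⟨a, b, rfl⟩ := Submodule.mem_span_pair.1 hu
    exact h.smul_add_smul_mem hx hy hxy a b
  obtain ⟨U, hxyU, hU⟩ :=
    (Set.toFinite {U : Submodule F V | (U : Set V) ⊆ Z}).exists_le_maximal hline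
  have hxU : x ∈ U := hxyU (Submodule.mem_sup_left (Submodule.mem_span_singleton_self x))
  have hyU : y ∈ U := hxyU (Submodule.mem_sup_right (Submodule.mem_span_singleton_self y))
  by_cases hrU : r ∈ U
  · exact .inl (hU.prop (U.add_mem hyU hrU))
  obtain ⟨W, hW⟩ := h.exists_submodule_coe_eq h.two_lt_card hU.prop hr
  have hWr : ∀ u, u ∈ W ↔ (u : V) + r ∈ Z := fun u => Set.ext_iff.1 hW u
  have hcodim : finrank F (U ⧸ W) = 1 := by
    have hcard := (h.finrank_eq_and_cosetCount_eq_of_maximal hU hr hrU).2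
    rw [cosetCount, ← hW, ← Nat.card_coe_set_eq, SetLike.coe_sort_coe,
      h.natCard_submodule, natCard_eq_pow_finrank (K := F) (V := W),
      h.card_eq, ← pow_succ'] at hcard
    have := Nat.pow_right_injective h.two_lt.le hcard
    have := W.finrank_quotient_add_finrank
    omega
  by_cases hyr : y + r ∈ Z
  · exact .inl hyr
  have hyW : W.mkQ ⟨y, hyU⟩ ≠ 0 := by simpa [hWr] using hyr
  obtain ⟨c, hc⟩ := exists_smul_eq_of_finrank_eq_one hcodim hyW (W.mkQ ⟨x, hxU⟩)
  refine .inr ⟨-c, ?_⟩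
  rw [← map_smul] at hc
  have hsub := (hWr _).1 ((Submodule.Quotient.eq W).1 hc.symm)
  simpa [sub_eq_add_neg] using hsub

end EllipticCone

/-! ### Tangent hyperplanes -/

section Radical

/-- The vectors of `Z` in the kernel of `l` that are perpendicular to `p`. -/
def perpSection {F V : Type*} [Field F] [AddCommGroup V] [Module F V] (Z : Set V) (l : Dual F V)
    (p : V) : Set V := {z ∈ perp Z p | l z = 0}

/-- The hyperplane `ker l` is tangent to the cone `Z` at `p`: it contains precisely those vectors
of `Z` that are perpendicular to `p`. -/
def IsTangent {F V : Type*} [Field F] [AddCommGroup V] [Module F V] (Z : Set V) (l : Dual F V)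
    (p : V) : Prop := ∀ z ∈ Z, l z = 0 ↔ z + p ∈ Z

variable {F V : Type*} [Field F] [AddCommGroup V] [Module F V] {Z : Set V} {l : Dual F V} {p r : V}

lemma ncard_setOf_exists_add_smul_mem {B : Set V}
    (huniq : ∀ b ∈ B, ∀ c : F, b + c • p ∈ B → c = 0) :
    {v | ∃ c : F, v + c • p ∈ B}.ncard = Nat.card F * B.ncard := by
  have hinj : Set.InjOn (fun x : F × V => x.2 - x.1 • p) (Set.univ ×ˢ B) := by
    rintro ⟨c, b⟩ hb ⟨c', b'⟩ hb' heq
    simp only [Set.mem_prod, Set.mem_univ, true_and] at hb hb' heq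
    have e : b = b' + (c - c') • p := by
      rw [← sub_eq_zero] at heq ⊢
      rw [← heq]
      module
    have hc := sub_eq_zero.1 (huniq b' hb' (c - c') (e ▸ hb))
    simp [e, hc]
  rw [← Set.ncard_univ F, ← Set.ncard_prod, ← hinj.ncard_image]
  congr 1
  ext v
  constructor
  · rintro ⟨c, hc⟩
    exact ⟨(c, v + c • p), ⟨trivial, hc⟩, by simp⟩
  · rintro ⟨⟨c, b⟩, hb, rfl⟩
    exact ⟨c, by simpa using hb.2⟩

lemma perpSection_zero : perpSection Z l 0 = {z ∈ Z | l z = 0} := by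
  rw [perpSection, perp_zero]

lemma ncard_inter_ker_add_ncard_sdiff_ker [Finite V] (Z : Set V) (l : Dual F V) :
    {z ∈ Z | l z = 0}.ncard + {z ∈ Z | l z ≠ 0}.ncard = Z.ncard :=
  Set.ncard_inter_add_ncard_sdiff_eq_ncard Z {z | l z = 0}

lemma sum_ncard_perpSection [Finite V] {S T : Finset V} (hS : ∀ z, z ∈ S ↔ z ∈ Z ∧ l z ≠ 0)
    (hT : ∀ z, z ∈ T ↔ z ∈ Z ∧ l z = 0) :
    ∑ r ∈ S, ((perpSection Z l r).ncard : ℤ) =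
      ∑ p ∈ T, (((perp Z p).ncard : ℤ) - (perpSection Z l p).ncard) := by
  classical
  have hdouble := Finset.sum_card_bipartiteAbove_eq_sum_card_bipartiteBelow (s := S) (t := T)
    fun r p => p + r ∈ Z
  have habove : ∀ r ∈ S, (T.bipartiteAbove (fun r p => p + r ∈ Z) r).card =
      (perpSection Z l r).ncard := fun r _ => by
    rw [← Set.ncard_coe_finset]
    congr 1
    ext z
    simp only [Finset.coe_bipartiteAbove, Set.mem_ofPred_eq, hT, perpSection, perp]
    tauto
  have hbelow : ∀ p ∈ T, ((S.bipartiteBelow (fun r p => p + r ∈ Z) p).card : ℤ) =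
      (perp Z p).ncard - (perpSection Z l p).ncard := fun p _ => by
    rw [← ncard_inter_ker_add_ncard_sdiff_ker (perp Z p) l, ← Set.ncard_coe_finset]
    push_cast
    rw [perpSection, add_sub_cancel_left]
    congr 2
    ext z
    simp only [Set.mem_ofPred_eq, hS, perp, add_comm p]
    tauto
  rw [← Finset.sum_congr rfl hbelow, ← Nat.cast_sum, ← Nat.cast_sum, ← hdouble,
    Finset.sum_congr rfl habove]

lemma LineClosedCone.add_mem_of_add_add_mem (h : LineClosedCone F Z) (hF : 2 < Nat.card F)
    {x y : V} (hr : r ∈ Z) (hx : x ∈ Z) (hy : y ∈ Z) (hxy : x + y ∈ Z) (hyr : y + r ∈ Z)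
    (hxyr : x + y + r ∈ Z) : x + r ∈ Z := by
  have hsum : x + y + y ∈ Z := by simpa using h.add_smul_add_mem hx hy hxy 1
  simpa using h.smul_add_smul_add_mem hF hxy hy hr hsum hxyr hyr 1 (-1)

/-- Otherwise `r * P ^ 2 ≤ Q ^ 2 - r * Q + Q - 1` with `Q = r * P` would divide
`(r - 1) ^ 2 * P ^ 2`. -/
lemma double_count_ne {r P e : ℤ} (hr : 2 < r) (hP : r ≤ P) :
    r * ((r - 1) * (r * P) ^ 2 + ((r * P) ^ 2 - r * (r * P) + r * P - 1) * (r * e)) ≠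
      (r - 1) * (r * P) ^ 2 * ((r * P) ^ 2 - r * (r * P) + r * P) := by
  intro heq
  have hdvd : (r * P) ^ 2 - r * (r * P) + r * P - 1 ∣ (r - 1) ^ 2 * P ^ 2 := by
    refine ⟨(r - 1) * P ^ 2 - e, mul_left_cancel₀ (pow_ne_zero 2 (by linarith : r ≠ 0)) ?_⟩
    linear_combination heq
  have hpos : 0 < (r - 1) ^ 2 * P ^ 2 := by
    have : 0 < P := by linarith
    have : 0 < r - 1 := by linarith
    positivity
  have hPP : 0 ≤ (P - r) * P := mul_nonneg (by linarith) (by linarith)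
  have hmul : 0 ≤ (2 * r - 1) * ((P - r) * P) := mul_nonneg (by linarith) hPP
  have hrrP : 0 < r * r * P - 1 := by nlinarith
  nlinarith [Int.le_of_dvd hpos hdvd]

namespace EllipticCone
variable {n q : ℕ} (h : EllipticCone F n q Z)
include h

lemma ncard_perp_eq_mul (hr : r ∈ Z) (hlr : l r ≠ 0) :
    (perp Z r).ncard = q * (perpSection Z l r).ncard := by
  rw [← h.card_eq, ← ncard_setOf_exists_add_smul_mem (p := r)]
  · congr 1
    ext v
    constructor
    · exact fun hv => ⟨-(l v / l r), ⟨h.add_smul_mem hv.1 hr hv.2 _,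
        h.add_smul_add_mem hv.1 hr hv.2 _⟩, by simp [hlr]⟩
    · rintro ⟨c, ⟨hv, hvr⟩, -⟩
      have e : v + c • r + -c • r = v := by module
      exact ⟨e ▸ h.add_smul_mem hv hr hvr (-c), by
        simpa [e] using h.add_smul_add_mem hv hr hvr (-c)⟩
  · rintro b ⟨-, hb⟩ c ⟨-, hc⟩
    simpa [hb, hlr] using hc

lemma cast_le_cast_pow_of_eq_succ {k : ℕ} (hk : n = k + 1) : (q : ℤ) ≤ (q : ℤ) ^ k :=
  le_self_pow₀ (by linarith [h.two_lt_cast]) (by have := h.two_le; omega)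

lemma one_lt_tangentSectionCard : 1 < tangentSectionCard n q := by
  have hq := h.two_lt_cast
  have hQ := h.cast_sq_le_cast_pow
  rw [tangentSectionCard]
  nlinarith

variable [Finite V] [Finite F]

lemma ncard_perpSection_eq_mul (hp : p ∈ Z) (hlp : l p = 0) (hr : r ∈ Z) (hpr : p + r ∉ Z) :
    (perpSection Z l p).ncard = q * (perpSection Z l p ∩ perpSection Z l r).ncard := by
  rw [← h.card_eq, ← ncard_setOf_exists_add_smul_mem (p := p)]
  · congr 1
    ext v
    constructor
    · rintro ⟨⟨hv, hvp⟩, hlv⟩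
      obtain ⟨c, hc⟩ := (h.one_or_all hv hp hr hvp).resolve_left hpr
      have hmem := h.add_smul_mem hv hp hvp c
      have hl : l (v + c • p) = 0 := by simp [hlv, hlp]
      exact ⟨c, ⟨⟨hmem, h.add_smul_add_mem hv hp hvp c⟩, hl⟩, ⟨hmem, hc⟩, hl⟩
    · rintro ⟨c, ⟨⟨hv, hvp⟩, hlv⟩, -⟩
      have e : v + c • p + -c • p = v := by module
      exact ⟨⟨e ▸ h.add_smul_mem hv hp hvp (-c), by
        simpa [e] using h.add_smul_add_mem hv hp hvp (-c)⟩, by simpa [hlp] using hlv⟩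
  · rintro b ⟨⟨⟨hb, -⟩, -⟩, ⟨-, hbr⟩, -⟩ c ⟨-, ⟨hc, hcr⟩, -⟩
    by_contra hc0
    have hbc : b + (b + c • p) ∈ Z := by
      refine h.add_mem_of_smul_add_smul_mem hb hc (a := -1) (b := 1) (by simp) one_ne_zero ?_
      simpa using h.smul_mem c hp
    have hcpr : c • p + r ∈ Z := by
      simpa using h.smul_add_smul_add_mem h.two_lt_card hb hc hr hbc hbr hcr (-1) 1
    exact hpr (h.add_mem_of_smul_add_smul_mem hp hr hc0 one_ne_zero (by simpa using hcpr))

lemma ncard_perpSection_eq (hp : p ∈ Z) (hlp : l p = 0) (hr : r ∈ Z) (hlr : l r = 0)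
    (hpr : p + r ∉ Z) : (perpSection Z l p).ncard = (perpSection Z l r).ncard := by
  rw [h.ncard_perpSection_eq_mul hp hlp hr hpr, Set.inter_comm,
    ← h.ncard_perpSection_eq_mul hr hlr hp (add_comm p r ▸ hpr)]

/-- The number is constant along paths of nonperpendicular points. -/
lemma ncard_perpSection_eq_of_forall_exists
    (hrad : ∀ p ∈ Z, l p = 0 → p ≠ 0 → ∃ r ∈ Z, l r = 0 ∧ p + r ∉ Z) {p' : V}
    (hp : p ∈ Z) (hlp : l p = 0) (hp0 : p ≠ 0) (hp' : p' ∈ Z) (hlp' : l p' = 0) (hp0' : p' ≠ 0) :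
    (perpSection Z l p).ncard = (perpSection Z l p').ncard := by
  obtain ⟨r, hr, hlr, hpr⟩ := hrad p hp hlp hp0
  obtain ⟨r', hr', hlr', hpr'⟩ := hrad p' hp' hlp' hp0'
  have hdp := h.ncard_perpSection_eq hp hlp hr hlr hpr
  have hdp' := h.ncard_perpSection_eq hp' hlp' hr' hlr' hpr'
  by_cases hp'r : p' + r ∈ Z
  swap
  · exact hdp.trans (h.ncard_perpSection_eq hp' hlp' hr hlr hp'r).symm
  by_cases hpr'' : p + r' ∈ Z
  swap
  · exact (h.ncard_perpSection_eq hp hlp hr' hlr' hpr'').trans hdp'.symm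
  by_cases hrr' : r + r' ∈ Z
  swap
  · exact (hdp.trans (h.ncard_perpSection_eq hr hlr hr' hlr' hrr')).trans hdp'.symm
  have hls : l (r + r') = 0 := by simp [hlr, hlr']
  have hps : p + (r + r') ∉ Z := fun hps => hpr <| by
    rw [add_comm] at hps hpr'' ⊢
    exact h.add_mem_of_add_add_mem h.two_lt_card hp hr hr' hrr' hpr'' hps
  have hps' : p' + (r + r') ∉ Z := fun hps => hpr' <| by
    rw [add_comm] at hps hp'r hrr' ⊢
    rw [add_comm r] at hps
    exact h.add_mem_of_add_add_mem h.two_lt_card hp' hr' hr hrr' hp'r hps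
  exact (h.ncard_perpSection_eq hp hlp hrr' hls hps).trans
    (h.ncard_perpSection_eq hp' hlp' hrr' hls hps').symm

lemma ncard_sdiff_ker (hs : ({z ∈ Z | l z = 0}.ncard : ℤ) = tangentSectionCard n q) :
    ({z ∈ Z | l z ≠ 0}.ncard : ℤ) = (q - 1) * ((q : ℤ) ^ n) ^ 2 := by
  have hadd := ncard_inter_ker_add_ncard_sdiff_ker Z l
  zify at hadd
  rw [hs, h.ncard_eq, tangentSectionCard] at hadd
  linear_combination hadd

lemma mul_sum_ncard_perpSection (hs : ({z ∈ Z | l z = 0}.ncard : ℤ) = tangentSectionCard n q)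
    {S : Finset V} (hS : ∀ z, z ∈ S ↔ z ∈ Z ∧ l z ≠ 0) :
    q * ∑ r ∈ S, ((perpSection Z l r).ncard : ℤ) =
      (q - 1) * ((q : ℤ) ^ n) ^ 2 * tangentSectionCard n q := by
  have hterm : ∀ r ∈ S, q * ((perpSection Z l r).ncard : ℤ) = tangentSectionCard n q := by
    intro r hr
    obtain ⟨hrZ, hlr⟩ := (hS r).1 hr
    rw [← h.ncard_perp hrZ (by rintro rfl; simp at hlr), h.ncard_perp_eq_mul hrZ hlr, Nat.cast_mul]
  have hcoe : (S : Set V) = {z ∈ Z | l z ≠ 0} := Set.ext fun z => by simp [hS]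
  rw [Finset.mul_sum, Finset.sum_congr rfl hterm, Finset.sum_const, nsmul_eq_mul,
    ← h.ncard_sdiff_ker hs, ← hcoe, Set.ncard_coe_finset]

lemma sum_ncard_perp_sub_ncard_perpSection
    (hs : ({z ∈ Z | l z = 0}.ncard : ℤ) = tangentSectionCard n q) {d : ℤ}
    (hd : ∀ p ∈ Z, l p = 0 → p ≠ 0 → ((perpSection Z l p).ncard : ℤ) = d)
    {T : Finset V} (hT : ∀ z, z ∈ T ↔ z ∈ Z ∧ l z = 0) :
    ∑ p ∈ T, (((perp Z p).ncard : ℤ) - (perpSection Z l p).ncard) =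
      (q - 1) * ((q : ℤ) ^ n) ^ 2 +
        (tangentSectionCard n q - 1) * (tangentSectionCard n q - d) := by
  classical
  have h0T : 0 ∈ T := (hT 0).2 ⟨h.zero_mem, map_zero l⟩
  have hterm : ∀ p ∈ T.erase 0, ((perp Z p).ncard : ℤ) - (perpSection Z l p).ncard =
      tangentSectionCard n q - d := by
    intro p hp
    obtain ⟨hp0, hpT⟩ := Finset.mem_erase.1 hp
    obtain ⟨hpZ, hlp⟩ := (hT p).1 hpT
    rw [h.ncard_perp hpZ hp0, hd p hpZ hlp hp0]
  have hcoe : (T : Set V) = {z ∈ Z | l z = 0} := Set.ext fun z => by simp [hT]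
  have hcard : (T.card : ℤ) = tangentSectionCard n q := by
    rw [← Set.ncard_coe_finset, hcoe, hs]
  rw [← Finset.add_sum_erase _ _ h0T, Finset.sum_congr rfl hterm, Finset.sum_const, nsmul_eq_mul,
    Finset.cast_card_erase_of_mem h0T, hcard, perpSection_zero, perp_zero, hs, h.ncard_eq,
    tangentSectionCard]
  ring

lemma exists_forall_mem_add_mem
    (hs : ({z ∈ Z | l z = 0}.ncard : ℤ) = tangentSectionCard n q) :
    ∃ p ∈ Z, p ≠ 0 ∧ ∀ z ∈ Z, l z = 0 → z + p ∈ Z := by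
  classical
  by_contra hcon
  have hrad : ∀ p ∈ Z, l p = 0 → p ≠ 0 → ∃ r ∈ Z, l r = 0 ∧ p + r ∉ Z := by
    intro p hp _ hp0
    by_contra! hall
    exact hcon ⟨p, hp, hp0, fun z hz hlz => add_comm p z ▸ hall z hz hlz⟩
  obtain ⟨p, ⟨hp, hlp⟩, hp0⟩ : ∃ p ∈ {z ∈ Z | l z = 0}, p ≠ 0 :=
    Set.exists_ne_of_one_lt_ncard (by exact_mod_cast hs ▸ h.one_lt_tangentSectionCard) 0
  obtain ⟨r, hr, -, hpr⟩ := hrad p hp hlp hp0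
  have hd : ∀ p' ∈ Z, l p' = 0 → p' ≠ 0 → ((perpSection Z l p').ncard : ℤ) =
      q * (perpSection Z l p ∩ perpSection Z l r).ncard := by
    intro p' hp' hlp' hp0'
    rw [h.ncard_perpSection_eq_of_forall_exists hrad hp' hlp' hp0' hp hlp hp0,
      h.ncard_perpSection_eq_mul hp hlp hr hpr, Nat.cast_mul]
  have := Fintype.ofFinite V
  have hsum := h.mul_sum_ncard_perpSection hs (S := {z | z ∈ Z ∧ l z ≠ 0}) (by simp)
  rw [sum_ncard_perpSection (T := {z | z ∈ Z ∧ l z = 0}) (by simp) (by simp),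
    h.sum_ncard_perp_sub_ncard_perpSection hs hd (by simp), tangentSectionCard] at hsum
  obtain ⟨k, hk⟩ : ∃ k, n = k + 1 := ⟨n - 1, by have := h.two_le; omega⟩
  rw [hk, pow_succ'] at hsum
  refine double_count_ne h.two_lt_cast (h.cast_le_cast_pow_of_eq_succ hk)
    (e := q * ((q : ℤ) ^ k) ^ 2 - q * q ^ k + q ^ k -
      (perpSection Z l p ∩ perpSection Z l r).ncard) ?_
  linear_combination hsum

theorem exists_isTangent_of_ncard_section
    (hs : ({z ∈ Z | l z = 0}.ncard : ℤ) = tangentSectionCard n q) :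
    ∃ p ∈ Z, p ≠ 0 ∧ IsTangent Z l p := by
  obtain ⟨p, hp, hp0, hall⟩ := h.exists_forall_mem_add_mem hs
  have heq : {z ∈ Z | l z = 0} = perp Z p :=
    Set.eq_of_subset_of_ncard_le (fun z hz => ⟨hz.1, hall z hz.1 hz.2⟩)
      (by exact_mod_cast ((h.ncard_perp hp hp0).trans hs.symm).le)
  exact ⟨p, hp, hp0, fun z hz => by simpa [hz, perp] using Set.ext_iff.1 heq z⟩

end EllipticCone

end Radical

section Tangent

lemma exists_eq_smul_of_ker_le_ker {F V : Type*} [Field F] [AddCommGroup V] [Module F V]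
    {l l' : Dual F V} (hker : LinearMap.ker l ≤ LinearMap.ker l') : ∃ a : F, l' = a • l := by
  have hspan := mem_span_of_iInf_ker_le_ker (L := fun _ : Unit => l) (K := l') (by simpa using hker)
  rw [Set.range_const] at hspan
  obtain ⟨a, ha⟩ := Submodule.mem_span_singleton.1 hspan
  exact ⟨a, ha.symm⟩

lemma card_mul_sum_ncard_section {F V : Type*} [Field F] [AddCommGroup V] [Module F V] [Finite F]
    [Finite V] [Fintype (Dual F V)] {Z : Set V} (hZ : ∀ (c : F) {z : V}, z ∈ Z → c • z ∈ Z)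
    (h0 : (0 : V) ∈ Z) :
    (Nat.card F : ℤ) * ∑ l : Dual F V, ({z ∈ Z | l z = 0}.ncard : ℤ) =
      Nat.card V * (Nat.card F - 1 + Z.ncard) := by
  have := Fintype.ofFinite F
  have := Fintype.ofFinite V
  obtain ⟨ψ, hψ⟩ := exists_addChar_ne_one F
  have hsum : ∑ l : Dual F V, charSum ψ Z l = Fintype.card V := by
    simpa [h0] using sum_charSum_mul_addChar hψ Z 0
  have hcard := natCard_dual F V
  simp only [Nat.card_eq_fintype_card] at hcard
  have hl := Finset.sum_congr rfl fun l (_ : l ∈ Finset.univ) => card_sub_one_mul_charSum hψ hZ l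
  rw [← Finset.mul_sum, hsum, Finset.sum_sub_distrib, ← Finset.mul_sum, Finset.sum_const,
    nsmul_eq_mul, Finset.card_univ, hcard] at hl
  rw [← Int.cast_inj (α := ℂ)]
  push_cast
  simp only [Nat.card_eq_fintype_card]
  linear_combination -hl

/-- The nonzero functionals whose kernels have the small intersection with the elliptic cone `Z`;
they turn out to be the equations of the tangent hyperplanes. -/
def tangentFunctionals (F : Type*) {V : Type*} [Field F] [AddCommGroup V] [Module F V] (Z : Set V)
    (n q : ℕ) : Set (Dual F V) :=
  {l | l ≠ 0 ∧ ({z ∈ Z | l z = 0}.ncard : ℤ) = tangentSectionCard n q}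

lemma ncard_image_smul_compl_zero {F V : Type*} [Field F] [AddCommGroup V] [Module F V] [Finite F]
    {v : V} (hv : v ≠ 0) : ((fun c : F => c • v) '' {0}ᶜ).ncard = Nat.card F - 1 := by
  rw [Set.ncard_image_of_injective _ (smul_left_injective F hv), Set.ncard_compl,
    Set.ncard_singleton]

namespace IsTangent
variable {F V : Type*} [Field F] [AddCommGroup V] [Module F V] {Z : Set V} {l : Dual F V} {p v : V}
  (h : LineClosedCone F Z) (hp : p ∈ Z) (ht : IsTangent Z l p)
include h hp ht

lemma apply_self : l p = 0 :=
  (ht p hp).2 (by simpa [← two_smul F p] using h.smul_mem 2 hp)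

lemma smul {c : F} (hc : c ≠ 0) : IsTangent Z l (c • p) := fun z hz =>
  (ht z hz).trans ⟨fun hzp => h.add_smul_mem hz hp hzp c, fun hzp =>
    h.add_mem_of_smul_add_smul_mem hz hp one_ne_zero hc (by simpa using hzp)⟩

lemma add_smul_mem_iff (hv : l v = 0) (c : F) : v + c • p ∈ Z ↔ v ∈ Z := by
  have key : ∀ {w : V} (c : F), l w = 0 → w ∈ Z → w + c • p ∈ Z := fun c hw hwZ =>
    h.add_smul_mem hwZ hp ((ht _ hwZ).1 hw) c
  refine ⟨fun hmem => ?_, key c hv⟩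
  simpa using key (-c) (by simp [hv, apply_self h hp ht]) hmem

lemma eq_of_add_smul_mem (hv : l v ≠ 0) {c d : F} (hc : v + c • p ∈ Z) (hd : v + d • p ∈ Z) :
    c = d := by
  by_contra hne
  have hperp : v + c • p + p ∈ Z := by
    refine h.add_mem_of_smul_add_smul_mem hc hp one_ne_zero (sub_ne_zero.2 (Ne.symm hne)) ?_
    convert hd using 1
    module
  exact hv (by simpa [apply_self h hp ht] using (ht _ hc).2 hperp)

end IsTangent

namespace EllipticCone
variable {F V : Type*} [Field F] [AddCommGroup V] [Module F V] [Finite V] {Z : Set V}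
  {n q : ℕ} (h : EllipticCone F n q Z) {l : Dual F V} {p : V}
include h

lemma ncard_compl_ker (hl : l ≠ 0) :
    ({v | l v ≠ 0}.ncard : ℤ) = q * ((q - 1) * ((q : ℤ) ^ n) ^ 2) := by
  have hker : finrank F (LinearMap.ker l) = 2 * n + 1 := by
    have := Module.Dual.finrank_ker_add_one_of_ne_zero hl
    have := h.finrank_eq
    omega
  have hadd := ncard_inter_ker_add_ncard_sdiff_ker Set.univ l
  have hcoe : ((LinearMap.ker l : Submodule F V) : Set V) = {v | l v = 0} := rfl
  simp only [Set.mem_univ, true_and, Set.ncard_univ, ← hcoe] at hadd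
  rw [← Nat.card_coe_set_eq, SetLike.coe_sort_coe, h.natCard_submodule, hker] at hadd
  zify at hadd
  rw [h.natCard_eq] at hadd
  linear_combination hadd

variable [Finite F]

lemma ncard_section_of_isTangent (hp : p ∈ Z) (hp0 : p ≠ 0) (ht : IsTangent Z l p) :
    ({z ∈ Z | l z = 0}.ncard : ℤ) = tangentSectionCard n q := by
  rw [← h.ncard_perp hp hp0]
  congr 2
  ext z
  exact and_congr_right (ht z)

lemma exists_add_smul_mem (hl : l ≠ 0) (hp : p ∈ Z) (hp0 : p ≠ 0) (ht : IsTangent Z l p) {v : V}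
    (hv : l v ≠ 0) : ∃ c : F, v + c • p ∈ Z := by
  have hlp := ht.apply_self h.toLineClosedCone hp
  have hcard := ncard_setOf_exists_add_smul_mem (F := F) (p := p) (B := {z ∈ Z | l z ≠ 0})
    fun b hb c hc => (ht.eq_of_add_smul_mem h.toLineClosedCone hp hb.2 (c := 0)
      (by simpa using hb.1) hc.1).symm
  have hsub : {v | ∃ c : F, v + c • p ∈ {z ∈ Z | l z ≠ 0}} ⊆ {v | l v ≠ 0} := by
    rintro v ⟨c, -, hc⟩
    simpa [hlp] using hc
  have heq := Set.eq_of_subset_of_ncard_le hsub <| by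
    rw [hcard, h.card_eq]
    zify
    rw [h.ncard_compl_ker hl, h.ncard_sdiff_ker (h.ncard_section_of_isTangent hp hp0 ht)]
  obtain ⟨c, hc, -⟩ := heq.ge hv
  exact ⟨c, hc⟩

lemma ker_le_ker_of_isTangent {l' : Dual F V} (hl' : l' ≠ 0) (hp : p ∈ Z) (hp0 : p ≠ 0)
    (ht : IsTangent Z l p) (ht' : IsTangent Z l' p) : LinearMap.ker l ≤ LinearMap.ker l' := by
  intro v hv
  by_contra hv'
  obtain ⟨c, hc⟩ := h.exists_add_smul_mem hl' hp hp0 ht' hv'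
  have hlc : l (v + c • p) = 0 := by
    simp [LinearMap.mem_ker.1 hv, ht.apply_self h.toLineClosedCone hp]
  exact hv' (by simpa [ht'.apply_self h.toLineClosedCone hp] using (ht' _ hc).2 ((ht _ hc).1 hlc))

lemma ncard_tangentFunctionals : (tangentFunctionals F Z n q).ncard + 1 = Z.ncard := by
  classical
  have : Finite (Dual F V) := DFunLike.finite _
  have := Fintype.ofFinite (Dual F V)
  set S := tangentFunctionals F Z n q
  have hl : ∀ l : Dual F V, ({z ∈ Z | l z = 0}.ncard : ℤ) = ((q : ℤ) ^ n) ^ 2 -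
      (if l ∈ S then (q - 1) * (q : ℤ) ^ n else 0) +
      (if l = 0 then Z.ncard - ((q : ℤ) ^ n) ^ 2 else 0) := by
    intro l
    rcases eq_or_ne l 0 with rfl | hl
    · simp [S, tangentFunctionals]
    · by_cases hlS : l ∈ S
      · rw [if_pos hlS, if_neg hl, hlS.2, tangentSectionCard]
        ring
      · rw [if_neg hlS, if_neg hl, (h.ncard_section l hl).resolve_right fun hs => hlS ⟨hl, hs⟩]
        ring
  have hS : ∑ l : Dual F V, (if l ∈ S then (q - 1) * (q : ℤ) ^ n else 0) =
      S.ncard * ((q - 1) * (q : ℤ) ^ n) := by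
    rw [← Finset.sum_filter, Finset.sum_const, nsmul_eq_mul, Set.ncard_eq_toFinset_card',
      ← Set.filter_mem_univ_eq_toFinset]
  have hsum := card_mul_sum_ncard_section (fun c {z} hz => h.smul_mem c hz) h.zero_mem
  have hcard := natCard_dual F V
  rw [Nat.card_eq_fintype_card] at hcard
  simp only [hl, Finset.sum_add_distrib, Finset.sum_sub_distrib, Finset.sum_ite_eq',
    Finset.mem_univ, if_true, Finset.sum_const, nsmul_eq_mul, Finset.card_univ, hcard,
    hS, h.card_eq, h.natCard_eq] at hsum
  have hq := h.two_lt_cast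
  have hne : (q : ℤ) * ((q - 1) * (q : ℤ) ^ n) ≠ 0 :=
    mul_ne_zero (by linarith) (mul_ne_zero (by linarith) h.cast_pow_pos.ne')
  zify
  rw [h.ncard_eq] at hsum ⊢
  exact mul_left_cancel₀ hne (by linear_combination -hsum)

lemma card_sub_one_le_ncard_isTangent {l : Dual F V} (hl : l ∈ tangentFunctionals F Z n q) :
    Nat.card F - 1 ≤ {p ∈ Z | p ≠ 0 ∧ IsTangent Z l p}.ncard := by
  obtain ⟨p, hp, hp0, ht⟩ := h.exists_isTangent_of_ncard_section hl.2
  rw [← ncard_image_smul_compl_zero hp0]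
  refine Set.ncard_le_ncard ?_
  rintro _ ⟨c, hc, rfl⟩
  exact ⟨h.smul_mem c hp, smul_ne_zero hc hp0, ht.smul h.toLineClosedCone hp hc⟩

lemma ncard_isTangent_le_card_sub_one (hp : p ∈ Z) (hp0 : p ≠ 0) :
    {l ∈ tangentFunctionals F Z n q | IsTangent Z l p}.ncard ≤ Nat.card F - 1 := by
  rcases Set.eq_empty_or_nonempty {l ∈ tangentFunctionals F Z n q | IsTangent Z l p} with
    hempty | ⟨l, hl, ht⟩
  · simp [hempty]
  have : Finite (Dual F V) := DFunLike.finite _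
  rw [← ncard_image_smul_compl_zero hl.1]
  refine Set.ncard_le_ncard ?_
  rintro l' ⟨hl', ht'⟩
  obtain ⟨a, rfl⟩ :=
    exists_eq_smul_of_ker_le_ker (h.ker_le_ker_of_isTangent hl'.1 hp hp0 ht ht')
  exact ⟨a, fun ha => hl'.1 (by simp [Set.mem_singleton_iff.1 ha]), rfl⟩

/-- There are as many tangent hyperplanes as points, and at most one of them at each point. -/
theorem exists_isTangent (hp : p ∈ Z) (hp0 : p ≠ 0) : ∃ l : Dual F V, l ≠ 0 ∧ IsTangent Z l p := by
  classical
  have : Finite (Dual F V) := DFunLike.finite _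
  have := Fintype.ofFinite (Dual F V)
  have := Fintype.ofFinite V
  set S := tangentFunctionals F Z n q
  set T := {p ∈ Z | p ≠ 0 ∧ ∃ l ∈ S, IsTangent Z l p}
  have hle : S.toFinset.card * (Nat.card F - 1) ≤ T.toFinset.card * (Nat.card F - 1) := by
    refine Finset.card_mul_le_card_mul (IsTangent Z) (fun l hl => ?_) (fun p hp => ?_)
    · rw [Set.mem_toFinset] at hl
      refine (h.card_sub_one_le_ncard_isTangent hl).trans_eq ?_
      rw [← Set.ncard_coe_finset]
      congr 1
      ext p
      simp only [Finset.coe_bipartiteAbove, Set.mem_toFinset, T]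
      exact ⟨fun ⟨hp, hp0, ht⟩ => ⟨⟨hp, hp0, l, hl, ht⟩, ht⟩,
        fun ⟨⟨hp, hp0, _⟩, ht⟩ => ⟨hp, hp0, ht⟩⟩
    · rw [Set.mem_toFinset] at hp
      refine Eq.trans_le ?_ (h.ncard_isTangent_le_card_sub_one hp.1 hp.2.1)
      rw [← Set.ncard_coe_finset]
      congr 1
      ext l
      simp [S]
  have hST : S.ncard ≤ T.ncard := by
    rw [Set.ncard_eq_toFinset_card', Set.ncard_eq_toFinset_card']
    exact Nat.le_of_mul_le_mul_right hle (by have := h.two_lt_card; omega)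
  have hT : T = Z \ {0} := Set.eq_of_subset_of_ncard_le (fun p hp => ⟨hp.1, hp.2.1⟩) <| by
    rw [Set.ncard_sdiff_singleton_of_mem h.zero_mem]
    have : S.ncard + 1 = Z.ncard := h.ncard_tangentFunctionals
    omega
  obtain ⟨-, -, l, hl, ht⟩ : p ∈ T := hT ▸ ⟨hp, hp0⟩
  exact ⟨l, hl.1, ht⟩

end EllipticCone

end Tangent

/-! ### Functions that are affine along the lines with a zero direction -/

section ZeroAffine

/-- A function `f` on a vector space that is affine, with slope `β u w`, along all lines in the
directions `w` at which it vanishes. Together with a spanning set of zeros, and with enough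
relations between them, this characterizes the quadratic forms with polar form `β`. -/
structure ZeroAffine {F W : Type*} [Field F] [AddCommGroup W] [Module F W] (f : W → F)
    (β : W → Dual F W) : Prop where
  map_zero : f 0 = 0
  span_eq_top : Submodule.span F {w | f w = 0} = ⊤
  map_add_smul : ∀ u w (t : F), f w = 0 → f (u + t • w) = f u + t * β u w
  exists_relation : ∀ w₁ w₂ w₃, f w₁ = 0 → f w₂ = 0 → f w₃ = 0 →
    f (w₁ + w₂) = 0 ∨ f (w₁ + w₃) = 0 ∨ f (w₂ + w₃) = 0 ∨
      ∃ c₁ c₂ c₃ : F, c₁ ≠ 0 ∧ c₂ ≠ 0 ∧ c₃ ≠ 0 ∧ f (c₁ • w₁ + c₂ • w₂ + c₃ • w₃) = 0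

/-- The increment of the slope in direction `w'` under the translation by `w`: the mixed second
difference of the function with slopes `β`. -/
def slopeDiff {F W : Type*} [Field F] [AddCommGroup W] [Module F W] (β : W → Dual F W)
    (u w w' : W) : F := β (u + w) w' - β u w'

lemma slopeDiff_add_sub_slopeDiff {F W : Type*} [Field F] [AddCommGroup W] [Module F W]
    (β : W → Dual F W) (u w₁ w₂ w₃ : W) :
    slopeDiff β (u + w₃) w₁ w₂ - slopeDiff β u w₁ w₂ =
      slopeDiff β (u + w₁) w₃ w₂ - slopeDiff β u w₃ w₂ := by
  simp only [slopeDiff, add_right_comm u w₁ w₃]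
  ring

namespace ZeroAffine
variable {F W : Type*} [Field F] [AddCommGroup W] [Module F W] {f : W → F} {β : W → Dual F W}
  (h : ZeroAffine f β) {w w' w₁ w₂ w₃ : W}
include h

lemma slope_zero_apply (hw : f w = 0) : β 0 w = 0 := by
  simpa [h.map_zero, hw] using (h.map_add_smul 0 w 1 hw).symm

lemma map_smul_of_eq_zero (hw : f w = 0) (c : F) : f (c • w) = 0 := by
  simpa [h.map_zero, h.slope_zero_apply hw] using h.map_add_smul 0 w c hw

lemma induction {P : W → Prop} (zeros : ∀ w, f w = 0 → P w)
    (add : ∀ v v', P v → P v' → P (v + v')) (v : W) : P v :=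
  Submodule.closure_induction (p := fun v _ => P v) (zeros 0 h.map_zero)
    (fun x y _ _ => add x y) (fun c _ hw => zeros _ (h.map_smul_of_eq_zero hw c))
    (h.span_eq_top ▸ Submodule.mem_top : v ∈ Submodule.span F {w | f w = 0})

lemma mul_slope_sub_slope (u : W) (hw : f w = 0) (hw' : f w' = 0) (s t : F) :
    t * (β (u + s • w) w' - β u w') = s * (β (u + t • w') w - β u w) := by
  have hst := h.map_add_smul (u + s • w) w' t hw'
  rw [add_right_comm, h.map_add_smul _ w s hw, h.map_add_smul u w s hw,
    h.map_add_smul u w' t hw'] at hst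
  linear_combination -hst

lemma slopeDiff_comm (u : W) (hw : f w = 0) (hw' : f w' = 0) :
    slopeDiff β u w w' = slopeDiff β u w' w := by
  simpa [slopeDiff] using h.mul_slope_sub_slope u hw hw' 1 1

lemma slope_add_smul_apply (u : W) (hw : f w = 0) (hw' : f w' = 0) (s : F) :
    β (u + s • w) w' = β u w' + s * slopeDiff β u w w' := by
  have hs := h.mul_slope_sub_slope u hw hw' s 1
  rw [one_smul] at hs
  rw [h.slopeDiff_comm u hw hw', slopeDiff]
  linear_combination hs

lemma slopeDiff_eq_zero (u : W) (hw : f w = 0) (hw' : f w' = 0) (hww' : f (w + w') = 0) :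
    slopeDiff β u w w' = 0 := by
  have hsum := h.map_add_smul u (w + w') 1 hww'
  have hstep := h.map_add_smul (u + w) w' 1 hw'
  have hfirst := h.map_add_smul u w 1 hw
  simp only [one_smul, one_mul, map_add, ← add_assoc] at hsum hstep hfirst
  rw [slopeDiff]
  linear_combination hsum - hstep - hfirst

lemma map_add_smul_add_smul_add_smul (u : W) (hw₁ : f w₁ = 0) (hw₂ : f w₂ = 0) (hw₃ : f w₃ = 0)
    (a b c : F) :
    f (u + c • w₃ + a • w₁ + b • w₂) = f u + (a * β u w₁ + b * β u w₂ + c * β u w₃) +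
      (a * b * slopeDiff β u w₁ w₂ + a * c * slopeDiff β u w₃ w₁ +
        b * c * slopeDiff β u w₃ w₂) +
      a * b * c * (slopeDiff β (u + w₃) w₁ w₂ - slopeDiff β u w₁ w₂) := by
  have hdiff : slopeDiff β (u + c • w₃) w₁ w₂ = slopeDiff β u w₁ w₂ +
      c * (slopeDiff β (u + w₁) w₃ w₂ - slopeDiff β u w₃ w₂) := by
    have hu₁ := h.slope_add_smul_apply (u + w₁) hw₃ hw₂ c
    have hu := h.slope_add_smul_apply u hw₃ hw₂ c
    rw [slopeDiff, slopeDiff, add_right_comm, hu₁, hu]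
    ring
  rw [h.map_add_smul _ w₂ b hw₂, h.map_add_smul _ w₁ a hw₁, h.map_add_smul _ w₃ c hw₃,
    h.slope_add_smul_apply _ hw₁ hw₂, h.slope_add_smul_apply _ hw₃ hw₂,
    h.slope_add_smul_apply _ hw₃ hw₁, hdiff, slopeDiff_add_sub_slopeDiff β u w₁ w₂ w₃]
  ring

/-- Along the line through a zero `c₁ w₁ + c₂ w₂ + c₃ w₃` the function is affine, while its
expansion has the third difference as coefficient of a cubic term. Hence the third difference
vanishes, the field having an element other than `0` and `1`. -/
lemma slopeDiff_add_of_smul_add_smul_add_smul (hF : 2 < Nat.card F) (u : W) (hw₁ : f w₁ = 0)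
    (hw₂ : f w₂ = 0) (hw₃ : f w₃ = 0) {c₁ c₂ c₃ : F} (hc₁ : c₁ ≠ 0) (hc₂ : c₂ ≠ 0) (hc₃ : c₃ ≠ 0)
    (hc : f (c₁ • w₁ + c₂ • w₂ + c₃ • w₃) = 0) :
    slopeDiff β (u + w₃) w₁ w₂ = slopeDiff β u w₁ w₂ := by
  obtain ⟨t, ht0, ht1⟩ := exists_ne_zero_ne hF 1
  have hline : ∀ t : F, f (u + (t * c₃) • w₃ + (t * c₁) • w₁ + (t * c₂) • w₂) =
      f u + t * (c₁ * β u w₁ + c₂ * β u w₂ + c₃ * β u w₃) := by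
    intro t
    rw [show u + (t * c₃) • w₃ + (t * c₁) • w₁ + (t * c₂) • w₂ =
      u + t • (c₁ • w₁ + c₂ • w₂ + c₃ • w₃) by module, h.map_add_smul u _ t hc]
    simp only [map_add, map_smul, smul_eq_mul]
  have h1 := hline 1
  have ht := hline t
  rw [h.map_add_smul_add_smul_add_smul u hw₁ hw₂ hw₃] at h1 ht
  have hne : t ^ 2 * (t - 1) * (c₁ * c₂ * c₃) ≠ 0 :=
    mul_ne_zero (mul_ne_zero (pow_ne_zero 2 ht0) (sub_ne_zero.2 ht1))
      (mul_ne_zero (mul_ne_zero hc₁ hc₂) hc₃)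
  refine sub_eq_zero.1 ((mul_eq_zero.1 ?_).resolve_left hne)
  linear_combination ht - t ^ 2 * h1

lemma slopeDiff_add_of_eq_zero (hF : 2 < Nat.card F) (u : W) (hw₁ : f w₁ = 0) (hw₂ : f w₂ = 0)
    (hw₃ : f w₃ = 0) : slopeDiff β (u + w₃) w₁ w₂ = slopeDiff β u w₁ w₂ := by
  rcases h.exists_relation w₁ w₂ w₃ hw₁ hw₂ hw₃ with
    h₁₂ | h₁₃ | h₂₃ | ⟨c₁, c₂, c₃, hc₁, hc₂, hc₃, hc⟩
  · rw [h.slopeDiff_eq_zero _ hw₁ hw₂ h₁₂, h.slopeDiff_eq_zero _ hw₁ hw₂ h₁₂]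
  · have hdiff := slopeDiff_add_sub_slopeDiff β u w₂ w₁ w₃
    rw [add_comm] at h₁₃
    rw [h.slopeDiff_eq_zero _ hw₃ hw₁ h₁₃, h.slopeDiff_eq_zero _ hw₃ hw₁ h₁₃, sub_self] at hdiff
    rw [h.slopeDiff_comm _ hw₁ hw₂, h.slopeDiff_comm _ hw₁ hw₂, sub_eq_zero.1 hdiff]
  · have hdiff := slopeDiff_add_sub_slopeDiff β u w₁ w₂ w₃
    rw [add_comm] at h₂₃
    rw [h.slopeDiff_eq_zero _ hw₃ hw₂ h₂₃, h.slopeDiff_eq_zero _ hw₃ hw₂ h₂₃, sub_self] at hdiff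
    exact sub_eq_zero.1 hdiff
  · exact h.slopeDiff_add_of_smul_add_smul_add_smul hF u hw₁ hw₂ hw₃ hc₁ hc₂ hc₃ hc

lemma slopeDiff_add (hF : 2 < Nat.card F) (u v : W) (hw₁ : f w₁ = 0) (hw₂ : f w₂ = 0) :
    slopeDiff β (u + v) w₁ w₂ = slopeDiff β u w₁ w₂ := by
  induction v using h.induction generalizing u with
  | zeros w hw => exact h.slopeDiff_add_of_eq_zero hF u hw₁ hw₂ hw
  | add v v' hv hv' => rw [← add_assoc, hv', hv]

lemma slope_add_smul_of_eq_zero (hF : 2 < Nat.card F) (u : W) (c : F) (hw : f w = 0) :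
    β (u + c • w) = β u + c • β w := by
  have key : ∀ w', f w' = 0 → β (u + c • w) w' = β u w' + c * β w w' := by
    intro w' hw'
    have hu := h.slopeDiff_add hF 0 u hw hw'
    have h0 := h.slope_add_smul_apply 0 hw hw' 1
    rw [zero_add] at hu
    rw [one_smul, zero_add, h.slope_zero_apply hw', zero_add, one_mul] at h0
    rw [h.slope_add_smul_apply u hw hw' c, hu, h0]
  ext v
  induction v using h.induction with
  | zeros w' hw' => exact key w' hw'
  | add v v' hv hv' => rw [map_add, map_add, hv, hv']

lemma slope_add_smul (hF : 2 < Nat.card F) (u v : W) (c : F) :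
    β (u + c • v) = β u + c • β v := by
  induction v using h.induction generalizing u c with
  | zeros w hw => exact h.slope_add_smul_of_eq_zero hF u c hw
  | add v v' hv hv' =>
    have hadd := hv' v 1
    rw [one_smul, one_smul] at hadd
    rw [smul_add, ← add_assoc, hv', hv, hadd, smul_add, add_assoc]

lemma slope_zero (hF : 2 < Nat.card F) : β 0 = 0 := by
  simpa using h.slope_add_smul hF 0 0 1

lemma map_add_smul_eq (hF : 2 < Nat.card F) (u v : W) (c : F) :
    f (u + c • v) = f u + c ^ 2 * f v + c * β u v := by
  induction v using h.induction generalizing u c with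
  | zeros w hw => rw [h.map_add_smul u w c hw, hw, mul_zero, add_zero]
  | add v v' hv hv' =>
    have hadd := hv' v 1
    rw [one_smul] at hadd
    rw [smul_add, ← add_assoc, hv', hv, hadd, h.slope_add_smul hF]
    simp only [map_add, LinearMap.add_apply, LinearMap.smul_apply, smul_eq_mul]
    ring

theorem exists_quadraticForm (hF : 2 < Nat.card F) : ∃ Q : QuadraticForm F W, ∀ w, Q w = f w := by
  have hβ : IsLinearMap F β :=
    { map_add := fun x y => by simpa using h.slope_add_smul hF x y 1
      map_smul := fun a x => by simpa [h.slope_zero hF] using h.slope_add_smul hF 0 x a }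
  refine ⟨⟨f, fun a x => ?_, hβ.mk' β, fun x y => ?_⟩, fun w => rfl⟩
  · simpa [h.map_zero, h.slope_zero hF, pow_two] using h.map_add_smul_eq hF 0 x a
  · simpa using h.map_add_smul_eq hF x y 1

end ZeroAffine

end ZeroAffine

/-! ### Stereographic projection -/

section Pencil

lemma sum_ncard_pencil {F V : Type*} [Field F] [AddCommGroup V] [Module F V] [Fintype F] [Finite V]
    {Z : Set V} {l g : Dual F V} (hg : ∀ z ∈ Z, l z = 0 → g z = 0) :
    ∑ c : F, {z ∈ Z | (g + c • l) z = 0}.ncard =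
      Fintype.card F * {z ∈ Z | l z = 0}.ncard + {z ∈ Z | l z ≠ 0}.ncard := by
  classical
  have := Fintype.ofFinite V
  have hncard (P : V → Prop) [DecidablePred P] :
      {z ∈ Z | P z}.ncard = ∑ z ∈ Z.toFinset, if P z then 1 else 0 := by
    rw [Finset.sum_boole, Nat.cast_id, ← Set.ncard_coe_finset]
    simp
  have hterm : ∀ z ∈ Z.toFinset, ∑ c : F, (if (g + c • l) z = 0 then 1 else 0) =
      Fintype.card F * (if l z = 0 then 1 else 0) + if l z ≠ 0 then 1 else 0 := by
    intro z hz
    by_cases hl : l z = 0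
    · simp [hl, hg z (Set.mem_toFinset.1 hz) hl]
    · have hiff (c : F) : (g + c • l) z = 0 ↔ c = -(g z / l z) := by
        rw [LinearMap.add_apply, LinearMap.smul_apply, smul_eq_mul]
        field_simp
        grind
      simp only [hiff]
      simp [hl]
  simp only [hncard]
  rw [Finset.sum_comm, Finset.sum_congr rfl hterm, Finset.sum_add_distrib, Finset.mul_sum]

end Pencil

section HyperbolicPair
variable {F V : Type*} [Field F] [AddCommGroup V] [Module F V] {Z : Set V}

lemma IsTangent.smul_left {l : Dual F V} {p : V} (ht : IsTangent Z l p) {c : F} (hc : c ≠ 0) :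
    IsTangent Z (c • l) p := fun z hz => by simpa [hc] using ht z hz

namespace EllipticCone
variable {n q : ℕ} (h : EllipticCone F n q Z) [Finite V] [Finite F] {l g : Dual F V} {p : V}
include h

lemma ncard_section_of_forall_ne_smul (hp : p ∈ Z) (hp0 : p ≠ 0) (ht : IsTangent Z l p)
    (hg : ∀ z ∈ Z, l z = 0 → g z = 0) (hgl : ∀ a : F, g ≠ a • l) :
    ({z ∈ Z | g z = 0}.ncard : ℤ) = ((q : ℤ) ^ n) ^ 2 := by
  have hg0 : g ≠ 0 := by simpa using hgl 0
  refine (h.ncard_section g hg0).resolve_right fun hs => ?_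
  have heq : {z ∈ Z | l z = 0} = {z ∈ Z | g z = 0} :=
    Set.eq_of_subset_of_ncard_le (fun z hz => ⟨hz.1, hg z hz.1 hz.2⟩)
      (by exact_mod_cast (hs.trans (h.ncard_section_of_isTangent hp hp0 ht).symm).le)
  have hgt : IsTangent Z g p := fun z hz => by
    rw [← ht z hz]
    simpa [hz] using (Set.ext_iff.1 heq z).symm
  obtain ⟨a, ha⟩ := exists_eq_smul_of_ker_le_ker (h.ker_le_ker_of_isTangent hg0 hp hp0 ht hgt)
  exact hgl a ha

lemma exists_eq_smul_of_isTangent (hp : p ∈ Z) (hp0 : p ≠ 0) (ht : IsTangent Z l p)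
    (hg : ∀ z ∈ Z, l z = 0 → g z = 0) : ∃ a : F, g = a • l := by
  by_contra! hgl
  have := Fintype.ofFinite F
  have hpencil (c : F) : ({z ∈ Z | (g + c • l) z = 0}.ncard : ℤ) = ((q : ℤ) ^ n) ^ 2 :=
    h.ncard_section_of_forall_ne_smul hp hp0 ht (fun z hz hlz => by simp [hg z hz hlz, hlz])
      fun a ha => hgl (a - c) ((eq_sub_of_add_eq ha).trans (sub_smul a c l).symm)
  have hs := h.ncard_section_of_isTangent hp hp0 ht
  have hsum := sum_ncard_pencil hg
  zify at hsum
  simp only [hpencil, hs, h.ncard_sdiff_ker hs, Finset.sum_const, Finset.card_univ,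
    nsmul_eq_mul, ← Nat.card_eq_fintype_card, h.card_eq, tangentSectionCard] at hsum
  have hQ := h.cast_sq_le_cast_pow
  have hq := h.two_lt_cast
  have hQ0 := h.cast_pow_pos
  have hprod : ((q - 1) * (q : ℤ) ^ n) * ((q : ℤ) ^ n - q) = 0 := by linear_combination -hsum
  rcases mul_eq_zero.1 hprod with hz | hz
  · exact absurd hz (mul_ne_zero (by linarith) hQ0.ne')
  · nlinarith

lemma exists_smul_add_smul_add_smul_mem {w₁ w₂ w₃ : V} (h₁ : w₁ ∈ Z) (h₂ : w₂ ∈ Z) (h₃ : w₃ ∈ Z)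
    (h₁₂ : w₁ + w₂ ∉ Z) (h₁₃ : w₁ + w₃ ∉ Z) (h₂₃ : w₂ + w₃ ∉ Z) :
    ∃ c₁ c₂ c₃ : F, c₁ ≠ 0 ∧ c₂ ≠ 0 ∧ c₃ ≠ 0 ∧ c₁ • w₁ + c₂ • w₂ + c₃ • w₃ ∈ Z := by
  have hw₁ : w₁ ≠ 0 := by
    rintro rfl
    exact h₁₂ (by simpa using h₂)
  obtain ⟨l, hl, ht⟩ := h.exists_isTangent h₁ hw₁
  have hlw₃ : l w₃ ≠ 0 := fun hzero => h₁₃ (add_comm w₃ w₁ ▸ (ht _ h₃).1 hzero)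
  obtain ⟨c, hc, hcne⟩ := exists_ne_zero_ne h.two_lt_card (-(l w₂ / l w₃))
  have hlc : l (w₂ + c • w₃) ≠ 0 := by
    rw [map_add, map_smul, smul_eq_mul]
    contrapose! hcne
    field_simp
    linear_combination hcne
  obtain ⟨d, hd⟩ := h.exists_add_smul_mem hl h₁ hw₁ ht hlc
  refine ⟨d, 1, c, ?_, one_ne_zero, hc, by convert hd using 1; module⟩
  rintro rfl
  exact h₂₃ (h.add_mem_of_smul_add_smul_mem h₂ h₃ one_ne_zero hc (by simpa using hd))

end EllipticCone

/-- Two points `x` and `y` of the cone which are not perpendicular, together with equations `lx`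
and `ly` of tangent hyperplanes at them, normalized by `lx y = ly x = 1`. -/
structure HyperbolicPair (Z : Set V) (lx ly : Dual F V) (x y : V) : Prop where
  left_mem : x ∈ Z
  right_mem : y ∈ Z
  isTangent_left : IsTangent Z lx x
  isTangent_right : IsTangent Z ly y
  left_apply : lx y = 1
  right_apply : ly x = 1

lemma EllipticCone.exists_hyperbolicPair [Finite V] [Finite F] {n q : ℕ}
    (h : EllipticCone F n q Z) :
    ∃ (lx ly : Dual F V) (x y : V), HyperbolicPair Z lx ly x y := by
  have hone : 1 < Z.ncard := by
    zify
    rw [h.ncard_eq]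
    nlinarith [h.two_lt_cast, h.cast_sq_le_cast_pow]
  obtain ⟨x, hx, hx0⟩ := Set.exists_ne_of_one_lt_ncard hone 0
  obtain ⟨l, -, hl⟩ := h.exists_isTangent hx hx0
  obtain ⟨y, hy, hly⟩ : {z ∈ Z | l z ≠ 0}.Nonempty := by
    refine Set.nonempty_of_ncard_ne_zero ?_
    zify
    rw [h.ncard_sdiff_ker (h.ncard_section_of_isTangent hx hx0 hl)]
    exact mul_ne_zero (by linarith [h.two_lt_cast]) (pow_ne_zero 2 h.cast_pow_pos.ne')
  have hy0 : y ≠ 0 := fun h0 => hly (by simp [h0])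
  obtain ⟨l', -, hl'⟩ := h.exists_isTangent hy hy0
  have hlx : l' x ≠ 0 := fun hzero => hly ((hl y hy).2 (add_comm x y ▸ (hl' x hx).1 hzero))
  exact ⟨(l y)⁻¹ • l, (l' x)⁻¹ • l', x, y, hx, hy, hl.smul_left (inv_ne_zero hly),
    hl'.smul_left (inv_ne_zero hlx), by simp [hly], by simp [hlx]⟩

namespace HyperbolicPair
variable {lx ly : Dual F V} {x y : V} (hp : HyperbolicPair Z lx ly x y)
include hp

lemma left_ne_zero : x ≠ 0 := by
  rintro rfl
  simpa using hp.right_apply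

lemma left_functional_ne_zero : lx ≠ 0 := by
  rintro rfl
  simpa using hp.left_apply

lemma left_apply_self (h : LineClosedCone F Z) : lx x = 0 :=
  hp.isTangent_left.apply_self h hp.left_mem

lemma right_apply_self (h : LineClosedCone F Z) : ly y = 0 :=
  hp.isTangent_right.apply_self h hp.right_mem

end HyperbolicPair

end HyperbolicPair

section Stereographic
variable {F V : Type*} [Field F] [AddCommGroup V] [Module F V] {Z : Set V} {lx ly : Dual F V}
  {x y : V}

/-- The common kernel of two functionals. For the tangent functionals of a hyperbolic pair it is the
orthogonal complement of the pair. -/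
abbrev commonKer (lx ly : Dual F V) : Submodule F V := LinearMap.ker lx ⊓ LinearMap.ker ly

/-- `f` is the function on the intersection of the tangent hyperplanes of a hyperbolic pair
whose graph is the part of the cone with `lx = 1`: the vector `y + w - c • x` is the inverse
stereographic image of `w` from `x` for precisely one `c`, which is `f w`. -/
def IsStereographic (Z : Set V) (lx ly : Dual F V) (x y : V)
    (f : commonKer lx ly → F) : Prop :=
  ∀ (w : commonKer lx ly) (c : F), y + (w : V) - c • x ∈ Z ↔ f w = c

namespace HyperbolicPair
variable (hp : HyperbolicPair Z lx ly x y)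
include hp

lemma exists_projection (h : LineClosedCone F Z) :
    ∃ P : V →ₗ[F] commonKer lx ly,
      ∀ v, v = lx v • y + (P v : V) + ly v • x := by
  have hmem (v : V) :
      (LinearMap.id - lx.smulRight y - ly.smulRight x : V →ₗ[F] V) v ∈ commonKer lx ly := by
    simp [hp.left_apply, hp.right_apply, hp.left_apply_self h, hp.right_apply_self h]
  refine ⟨LinearMap.codRestrict _ _ hmem, fun v => ?_⟩
  simp only [LinearMap.codRestrict_apply, LinearMap.sub_apply, LinearMap.id_apply,
    LinearMap.smulRight_apply]
  abel

lemma exists_isStereographic [Finite V] [Finite F] {n q : ℕ} (h : EllipticCone F n q Z) :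
    ∃ f, IsStereographic Z lx ly x y f := by
  have hne (w : commonKer lx ly) : lx (y + w) ≠ 0 := by
    simp [hp.left_apply, LinearMap.mem_ker.1 w.2.1]
  choose f hf using fun w : commonKer lx ly => h.exists_add_smul_mem
    hp.left_functional_ne_zero hp.left_mem hp.left_ne_zero hp.isTangent_left (hne w)
  refine ⟨fun w => -f w, fun w c => ⟨fun hc => ?_, ?_⟩⟩
  · rw [sub_eq_add_neg, ← neg_smul] at hc
    change -f w = c
    rw [hp.isTangent_left.eq_of_add_smul_mem h.toLineClosedCone hp.left_mem (hne w) (hf w) hc,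
      neg_neg]
  · rintro rfl
    simpa using hf w

end HyperbolicPair

namespace IsStereographic
variable {f : commonKer lx ly → F} (hf : IsStereographic Z lx ly x y f)
  (hp : HyperbolicPair Z lx ly x y)
include hf

lemma inverse_mem (w : commonKer lx ly) : y + (w : V) - f w • x ∈ Z := (hf w _).2 rfl

include hp

lemma eq_zero_iff (h : LineClosedCone F Z) {w : commonKer lx ly} : f w = 0 ↔ (w : V) ∈ Z := by
  rw [← hf w 0, zero_smul, sub_zero, add_comm]
  simpa using hp.isTangent_right.add_smul_mem_iff h hp.right_mem w.2.2 1

lemma mem_iff (h : LineClosedCone F Z) {Q : QuadraticForm F (commonKer lx ly)}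
    (hQ : ∀ w, Q w = f w) {P : V →ₗ[F] commonKer lx ly}
    (hP : ∀ v, v = lx v • y + (P v : V) + ly v • x) (v : V) :
    v ∈ Z ↔ lx v * ly v + Q (P v) = 0 := by
  by_cases ha : lx v = 0
  · have hv := hP v
    rw [ha, zero_smul, zero_add] at hv
    rw [ha, zero_mul, zero_add, hQ, hf.eq_zero_iff hp h,
      ← hp.isTangent_left.add_smul_mem_iff h hp.left_mem (P v).2.1 (ly v), ← hv]
  · have hv : (lx v)⁻¹ • v =
        y + (((lx v)⁻¹ • P v : commonKer lx ly) : V) -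
          (-((lx v)⁻¹ * ly v)) • x := by
      nth_rw 2 [hP v]
      rw [Submodule.coe_smul, smul_add, smul_add, inv_smul_smul₀ ha]
      module
    have hmem : v ∈ Z ↔ (lx v)⁻¹ • v ∈ Z :=
      ⟨h.smul_mem _, fun hv => by simpa [smul_inv_smul₀ ha] using h.smul_mem (lx v) hv⟩
    rw [hmem, hv, hf, ← hQ, QuadraticMap.map_smul, smul_eq_mul]
    field_simp
    grind

variable [Finite V] [Finite F] {n q : ℕ} (h : EllipticCone F n q Z)
include h

lemma span_eq_top : Submodule.span F {w | f w = 0} = ⊤ := by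
  by_contra hne
  obtain ⟨g, hg, hgker⟩ := Submodule.exists_le_ker_of_lt_top _ (lt_top_iff_ne_top.2 hne)
  obtain ⟨P, hP⟩ := hp.exists_projection h.toLineClosedCone
  have hPw (w : commonKer lx ly) : P w = w := by
    have hw := hP w
    rw [LinearMap.mem_ker.1 w.2.1, LinearMap.mem_ker.1 w.2.2] at hw
    exact Subtype.ext (by simpa using hw.symm)
  have hPy : P y = 0 := by
    have hy := hP y
    rw [hp.left_apply, hp.right_apply_self h.toLineClosedCone] at hy
    exact Subtype.ext (by simpa using hy)
  have hgP : ∀ z ∈ Z, lx z = 0 → (g ∘ₗ P) z = 0 := by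
    intro z hz hlz
    have hPz := hP z
    rw [hlz, zero_smul, zero_add] at hPz
    refine hgker (Submodule.subset_span ((hf.eq_zero_iff hp h.toLineClosedCone).2 ?_))
    rwa [← hp.isTangent_left.add_smul_mem_iff h.toLineClosedCone hp.left_mem (P z).2.1 (ly z),
      ← hPz]
  obtain ⟨a, ha⟩ := h.exists_eq_smul_of_isTangent hp.left_mem hp.left_ne_zero hp.isTangent_left hgP
  have ha0 : a = 0 := by
    simpa [hPy, hp.left_apply] using (LinearMap.congr_fun ha y).symm
  refine hg (LinearMap.ext fun w => ?_)
  simpa [hPw, ha0] using LinearMap.congr_fun ha w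

/-- The slope is read off the tangent hyperplane at the inverse image of `u`. -/
lemma exists_slope (u : commonKer lx ly) : ∃ b : Dual F (commonKer lx ly),
    ∀ w (t : F), f w = 0 → f (u + t • w) = f u + t * b w := by
  have hlxx := hp.left_apply_self h.toLineClosedCone
  have hpu := hf.inverse_mem u
  have hlxu : lx (y + (u : V) - f u • x) = 1 := by
    simp [hp.left_apply, hlxx, LinearMap.mem_ker.1 u.2.1]
  have hpu0 : y + (u : V) - f u • x ≠ 0 := fun h0 => by simp [h0] at hlxu
  obtain ⟨l, -, hl⟩ := h.exists_isTangent hpu hpu0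
  have hlx : l x ≠ 0 := by
    intro h0
    rw [hl x hp.left_mem, add_comm, ← hp.isTangent_left _ hpu, hlxu] at h0
    exact one_ne_zero h0
  refine ⟨(l x)⁻¹ • l ∘ₗ Submodule.subtype _, fun w t hw => ?_⟩
  set b := (l x)⁻¹ * l w with hb
  have hwb : (w : V) + (-b) • x ∈ Z := (hp.isTangent_left.add_smul_mem_iff h.toLineClosedCone
    hp.left_mem w.2.1 _).2 ((hf.eq_zero_iff hp h.toLineClosedCone).1 hw)
  have hlwb : l ((w : V) + (-b) • x) = 0 := by
    rw [map_add, map_smul, smul_eq_mul, hb]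
    field_simp
    ring
  have hline := h.add_smul_mem hpu hwb (by rw [add_comm]; exact (hl _ hwb).1 hlwb) t
  change f (u + t • w) = f u + t * b
  rw [← hf]
  convert hline using 1
  rw [Submodule.coe_add, Submodule.coe_smul]
  module

theorem exists_zeroAffine : ∃ β, ZeroAffine f β := by
  choose β hβ using hf.exists_slope hp h
  refine ⟨β, (hf.eq_zero_iff hp h.toLineClosedCone).2 h.zero_mem, hf.span_eq_top hp h, hβ, ?_⟩
  intro w₁ w₂ w₃ h₁ h₂ h₃
  simp only [hf.eq_zero_iff hp h.toLineClosedCone, Submodule.coe_add, Submodule.coe_smul]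
    at h₁ h₂ h₃ ⊢
  by_contra! hcon
  obtain ⟨c₁, c₂, c₃, hc₁, hc₂, hc₃, hc⟩ :=
    h.exists_smul_add_smul_add_smul_mem h₁ h₂ h₃ hcon.1 hcon.2.1 hcon.2.2.1
  exact hcon.2.2.2 c₁ c₂ c₃ hc₁ hc₂ hc₃ hc

end IsStereographic

theorem EllipticCone.exists_quadraticForm [Finite V] [Finite F] {n q : ℕ}
    (h : EllipticCone F n q Z) : ∃ Q : QuadraticForm F V, ∀ v, v ∈ Z ↔ Q v = 0 := by
  obtain ⟨lx, ly, x, y, hp⟩ := h.exists_hyperbolicPair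
  obtain ⟨P, hP⟩ := hp.exists_projection h.toLineClosedCone
  obtain ⟨f, hf⟩ := hp.exists_isStereographic h
  obtain ⟨β, hβ⟩ := hf.exists_zeroAffine hp h
  obtain ⟨Q, hQ⟩ := hβ.exists_quadraticForm h.two_lt_card
  exact ⟨QuadraticMap.linMulLin lx ly + Q.comp P, hf.mem_iff hp h.toLineClosedCone hQ hP⟩

end Stereographic

/-! ### The polarity of the quadric -/

section Polarity
variable {F V : Type*} [Field F] [AddCommGroup V] [Module F V] {Z : Set V} {Φ : QuadraticForm F V}

lemma isTangent_polarBilin (hΦ : ∀ v, v ∈ Z ↔ Φ v = 0) {p : V} (hp : p ∈ Z) :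
    IsTangent Z (Φ.polarBilin p) p := by
  intro z hz
  rw [hΦ, QuadraticMap.polarBilin_apply_apply, QuadraticMap.polar, (hΦ p).1 hp, (hΦ z).1 hz,
    add_comm, sub_zero, sub_zero]

lemma map_add_smul_of_polarBilin_eq_zero {r : V} (hr : Φ.polarBilin r = 0) (v : V) (t : F) :
    Φ (v + t • r) = Φ v + t ^ 2 * Φ r := by
  have hpolar : QuadraticMap.polar Φ r v = 0 := LinearMap.congr_fun hr v
  have hvr : QuadraticMap.polar Φ v (t • r) = 0 := by
    rw [QuadraticMap.polar_smul_right, QuadraticMap.polar_comm, hpolar, smul_zero]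
  rw [QuadraticMap.polar, QuadraticMap.map_smul, smul_eq_mul] at hvr
  linear_combination hvr

/-- The radical of the polar form can contain a nonsingular vector in characteristic two only. Then
every element of the field is a square, and every line through that vector meets the quadric. -/
lemma exists_add_smul_of_polarBilin_eq_zero [Finite F] {r : V} (hr : Φ.polarBilin r = 0)
    (hΦr : Φ r ≠ 0) (v : V) : ∃ t : F, Φ (v + t • r) = 0 := by
  have htwo : (2 : F) = 0 := by
    have hself := LinearMap.congr_fun hr r
    rw [QuadraticMap.polarBilin_apply_apply, QuadraticMap.polar_self] at hself
    simpa [hΦr] using hself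
  have hchar : ringChar F = 2 := by
    by_contra hne
    exact Ring.two_ne_zero hne htwo
  obtain ⟨t, ht⟩ := FiniteField.isSquare_of_char_two hchar (Φ v / Φ r)
  refine ⟨t, ?_⟩
  rw [map_add_smul_of_polarBilin_eq_zero hr, pow_two, ← ht]
  field_simp
  linear_combination Φ v * htwo

namespace EllipticCone
variable {n q : ℕ} (h : EllipticCone F n q Z) [Finite V] [Finite F] (hΦ : ∀ v, v ∈ Z ↔ Φ v = 0)
include h

lemma exists_forall_add_smul_notMem {r : V}
    (huniq : ∀ v ∈ Z, ∀ c : F, v + c • r ∈ Z → c = 0) : ∃ v, ∀ c : F, v + c • r ∉ Z := by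
  by_contra! hall
  have hcard := ncard_setOf_exists_add_smul_mem huniq
  rw [Set.eq_univ_of_forall (s := {v | ∃ c : F, v + c • r ∈ Z}) hall, Set.ncard_univ,
    h.card_eq] at hcard
  zify at hcard
  rw [h.natCard_eq, h.ncard_eq] at hcard
  have hne : (q : ℤ) * ((q - 1) * (q : ℤ) ^ n) ≠ 0 :=
    mul_ne_zero (by linarith [h.two_lt_cast])
      (mul_ne_zero (by linarith [h.two_lt_cast]) h.cast_pow_pos.ne')
  exact hne (by linear_combination hcard)

lemma finrank_le_of_subset {W : Submodule F V} (hW : (W : Set V) ⊆ Z) : finrank F W ≤ n := by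
  obtain ⟨U, hWU, hU⟩ :=
    (Set.toFinite {U : Submodule F V | (U : Set V) ⊆ Z}).exists_le_maximal hW
  by_cases hZU : Z ⊆ U
  · rcases eq_or_ne W ⊥ with rfl | hbot
    · simp
    obtain ⟨x, hx, hx0⟩ := Submodule.exists_mem_ne_zero_of_ne_bot hbot
    have hperp : perp Z x = Z :=
      Set.sep_eq_self_iff_mem_true.2 fun z hz => hU.prop (U.add_mem (hZU hz) (hWU hx))
    have hcard := h.ncard_perp (hW hx) hx0
    rw [hperp, h.ncard_eq, tangentSectionCard] at hcard
    nlinarith [h.two_lt_cast, pow_pos h.cast_pow_pos 2]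
  · obtain ⟨r, hr, hrU⟩ := Set.not_subset.1 hZU
    exact (Submodule.finrank_mono hWU).trans_eq
      (h.finrank_eq_and_cosetCount_eq_of_maximal hU hr hrU).1

include hΦ

lemma eq_zero_of_polarBilin_eq_zero {r : V} (hr : Φ.polarBilin r = 0) : r = 0 := by
  by_contra hr0
  by_cases hΦr : Φ r = 0
  · have hrZ := (hΦ r).2 hΦr
    have hcard := h.ncard_sdiff_ker (h.ncard_section_of_isTangent hrZ hr0
      (isTangent_polarBilin hΦ hrZ))
    simp only [hr, LinearMap.zero_apply, ne_eq, not_true_eq_false, and_false, Set.ofPred_false,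
      Set.ncard_empty, Nat.cast_zero] at hcard
    exact mul_ne_zero (by linarith [h.two_lt_cast]) (pow_ne_zero 2 h.cast_pow_pos.ne') hcard.symm
  · obtain ⟨v, hv⟩ := h.exists_forall_add_smul_notMem (r := r) fun v hv c hc => by
      rw [hΦ, map_add_smul_of_polarBilin_eq_zero hr, (hΦ v).1 hv] at hc
      simpa [hΦr] using hc
    obtain ⟨t, ht⟩ := exists_add_smul_of_polarBilin_eq_zero hr hΦr v
    exact hv t ((hΦ _).2 ht)

lemma ncard_section_polarBilin_eq_iff {e : V} (he : e ≠ 0) :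
    ({z ∈ Z | Φ.polarBilin e z = 0}.ncard : ℤ) = ((q : ℤ) ^ n) ^ 2 ↔ e ∉ Z := by
  have hpolar {v : V} (hv : v ≠ 0) : Φ.polarBilin v ≠ 0 :=
    fun h0 => hv (h.eq_zero_of_polarBilin_eq_zero hΦ h0)
  refine ⟨fun hs heZ => ?_, fun heZ => (h.ncard_section _ (hpolar he)).resolve_right fun hs => ?_⟩
  · rw [h.ncard_section_of_isTangent heZ he (isTangent_polarBilin hΦ heZ), tangentSectionCard]
      at hs
    nlinarith [h.two_lt_cast, h.cast_pow_pos]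
  · obtain ⟨p, hp, hp0, ht⟩ := h.exists_isTangent_of_ncard_section hs
    obtain ⟨a, ha⟩ := exists_eq_smul_of_ker_le_ker (h.ker_le_ker_of_isTangent (hpolar hp0) hp hp0
      ht (isTangent_polarBilin hΦ hp))
    have hpe : p = a • e := sub_eq_zero.1 <| h.eq_zero_of_polarBilin_eq_zero hΦ <| by
      rw [map_sub, map_smul, ha, sub_self]
    have ha0 : a ≠ 0 := fun h0 => hp0 (by rw [hpe, h0, zero_smul])
    exact heZ (by simpa [hpe, inv_smul_smul₀ ha0] using h.smul_mem a⁻¹ hp)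

end EllipticCone

end Polarity

/-! ### The dual cone of a family of hyperplanes -/

section Duality

lemma ncard_eq_mul_ncard_of_ncard_fiber {α β : Type*} [Finite α] [Finite β] {T : Set α}
    {t : Set β} {g : α → β} {k : ℕ} (hg : Set.MapsTo g T t)
    (hk : ∀ b ∈ t, {a ∈ T | g a = b}.ncard = k) : T.ncard = k * t.ncard := by
  classical
  have := Fintype.ofFinite α
  have := Fintype.ofFinite β
  have hcard := Finset.card_eq_sum_card_fiberwise (s := T.toFinset) (t := t.toFinset)
    (by simpa using hg)
  rw [Finset.sum_congr rfl (g := fun _ => k) fun b hb => ?_, Finset.sum_const,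
    ← Set.ncard_eq_toFinset_card', ← Set.ncard_eq_toFinset_card'] at hcard
  · simpa [mul_comm] using hcard
  · rw [← hk b (by simpa using hb), ← Set.ncard_coe_finset]
    simp

variable {F V : Type*} [Field F] [AddCommGroup V] [Module F V]

lemma ncard_eq_mul_ncard_points_add_one [Finite F] [Finite V] {T : Set V} (h0 : (0 : V) ∈ T)
    (hT : ∀ (a : F) {v : V}, v ∈ T → a • v ∈ T) :
    T.ncard = (Nat.card F - 1) *
      {p : Submodule F V | finrank F p = 1 ∧ ∀ v ∈ p, v ∈ T}.ncard + 1 := by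
  rw [← Set.ncard_sdiff_singleton_add_one h0]
  congr 1
  refine ncard_eq_mul_ncard_of_ncard_fiber (g := fun v => F ∙ v) ?_ ?_
  · rintro v ⟨hv, hv0⟩
    refine ⟨finrank_span_singleton hv0, fun w hw => ?_⟩
    obtain ⟨c, rfl⟩ := Submodule.mem_span_singleton.1 hw
    exact hT c hv
  · rintro p ⟨hp, hpT⟩
    obtain ⟨v, hvp, hv0⟩ := Submodule.exists_mem_ne_zero_of_ne_bot
      (p := p) (by rintro rfl; simp at hp)
    have hspan {w : V} (hw : w ∈ p) (hw0 : w ≠ 0) : F ∙ w = p :=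
      Submodule.eq_of_le_of_finrank_eq (by simpa using hw) (by rw [finrank_span_singleton hw0, hp])
    rw [← ncard_image_smul_compl_zero (F := F) hv0]
    congr 1
    ext w
    constructor
    · rintro ⟨⟨hw, hw0⟩, rfl⟩
      obtain ⟨c, rfl⟩ := Submodule.mem_span_singleton.1 ((hspan hvp hv0).ge
        (Submodule.mem_span_singleton_self w))
      exact ⟨c, fun hc => hw0 (by simp_all), rfl⟩
    · rintro ⟨c, hc, rfl⟩
      have hcv := p.smul_mem c hvp
      have hcv0 : c • v ≠ 0 := smul_ne_zero hc hv0
      exact ⟨⟨hpT _ hcv, hcv0⟩, hspan hcv hcv0⟩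

lemma exists_ker_eq [Module.Finite F V] {π : Submodule F V}
    (hπ : finrank F π + 1 = finrank F V) : ∃ e : Dual F V, e ≠ 0 ∧ LinearMap.ker e = π := by
  have hlt : π < ⊤ := by
    rw [lt_top_iff_ne_top]
    rintro rfl
    simp at hπ
  obtain ⟨e, he, hle⟩ := Submodule.exists_le_ker_of_lt_top π hlt
  refine ⟨e, he, (Submodule.eq_of_le_of_finrank_eq hle ?_).symm⟩
  have := Module.Dual.finrank_ker_add_one_of_ne_zero he
  omega

/-- The vectors of the dual space on the points that correspond to the hyperplanes outside `S`,
together with `0`. -/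
def dualCone (S : Set (Submodule F V)) : Set (Dual F V) := {e | LinearMap.ker e ∉ S}

section DualCone
variable {S : Set (Submodule F V)} (hS : ∀ π ∈ S, finrank F π + 1 = finrank F V)
include hS

lemma zero_mem_dualCone : (0 : Dual F V) ∈ dualCone S := by
  intro h0
  have htop := hS _ h0
  rw [LinearMap.ker_zero, finrank_top] at htop
  omega

lemma smul_mem_dualCone (c : F) {e : Dual F V} (he : e ∈ dualCone S) : c • e ∈ dualCone S := by
  rcases eq_or_ne c 0 with rfl | hc
  · simpa using zero_mem_dualCone hS
  · simpa only [dualCone, Set.mem_ofPred_eq, LinearMap.ker_smul e c hc] using he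

variable [Finite F]

lemma ncard_span_pair_sdiff_dualCone_lt {x y : Dual F V} (hx : x ∈ dualCone S)
    (hy : y ∈ dualCone S) (hxy : x + y ∈ dualCone S) :
    {e ∈ (Submodule.span F {x, y} : Submodule F (Dual F V)) | LinearMap.ker e ∈ S}.ncard <
      (Nat.card F - 1) * (Nat.card F - 1) := by
  have hsub : {e | e ∈ (Submodule.span F {x, y} : Submodule F (Dual F V)) ∧ LinearMap.ker e ∈ S} ⊆
      (fun ab : F × F => ab.1 • x + ab.2 • y) '' (({0}ᶜ ×ˢ {0}ᶜ) \ {(1, 1)}) := by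
    rintro e ⟨he, heS⟩
    obtain ⟨a, b, rfl⟩ := Submodule.mem_span_pair.1 he
    refine ⟨(a, b), ⟨⟨?_, ?_⟩, ?_⟩, rfl⟩
    · rintro rfl
      exact smul_mem_dualCone hS b hy (by simpa using heS)
    · rintro rfl
      exact smul_mem_dualCone hS a hx (by simpa using heS)
    · intro hab
      obtain ⟨rfl, rfl⟩ := Prod.mk.inj hab
      exact hxy (by simpa using heS)
  refine ((Set.ncard_le_ncard hsub).trans Set.ncard_image_le).trans_lt ?_
  refine (Set.ncard_sdiff_singleton_lt_of_mem (by simp)).trans_eq ?_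
  rw [Set.ncard_prod, Set.ncard_compl, Set.ncard_singleton]

variable [Finite V]

lemma ncard_setOf_ker_mem :
    {e : Dual F V | LinearMap.ker e ∈ S}.ncard = (Nat.card F - 1) * S.ncard := by
  have : Finite (Dual F V) := DFunLike.finite _
  refine ncard_eq_mul_ncard_of_ncard_fiber (g := LinearMap.ker) (fun e he => he) fun π hπ => ?_
  obtain ⟨e, he, rfl⟩ := exists_ker_eq (hS π hπ)
  rw [← ncard_image_smul_compl_zero he]
  congr 1
  ext e'
  constructor
  · rintro ⟨hmem, hker⟩
    obtain ⟨a, rfl⟩ := exists_eq_smul_of_ker_le_ker hker.ge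
    refine ⟨a, ?_, rfl⟩
    rintro rfl
    exact zero_mem_dualCone hS (by simpa using hmem)
  · rintro ⟨a, ha, rfl⟩
    have hker := LinearMap.ker_smul e a ha
    exact ⟨by simpa only [Set.mem_ofPred_eq, hker] using hπ, hker⟩

lemma ncard_mem_sdiff_dualCone (W : Submodule F (Dual F V)) :
    {e ∈ W | LinearMap.ker e ∈ S}.ncard =
      (Nat.card F - 1) * {π ∈ S | W.dualCoannihilator ≤ π}.ncard := by
  rw [← ncard_setOf_ker_mem fun π hπ => hS π hπ.1]
  congr 1
  ext e
  have hmem : e ∈ W ↔ W.dualCoannihilator ≤ LinearMap.ker e := by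
    conv_lhs => rw [← Subspace.dualCoannihilator_dualAnnihilator_eq (W := W)]
    exact Submodule.mem_dualAnnihilator e
  simp only [Set.mem_ofPred_eq, hmem, and_comm]

/-- If `x + c • y` is not in the dual cone, then the pencil spanned by `x` and `y` contains
fewer than `q - 1` hyperplanes in `S`, and at least one. -/
lemma lineClosedCone_dualCone
    (hS₂ : ∀ W : Submodule F V, finrank F W + 2 = finrank F V → (∃ π ∈ S, W ≤ π) →
      Nat.card F - 1 ≤ {π ∈ S | W ≤ π}.ncard) : LineClosedCone F (dualCone S) where
  zero_mem := zero_mem_dualCone hS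
  smul_mem := smul_mem_dualCone hS
  add_smul_mem {x y} hx hy hxy c := by
    by_contra hc
    replace hc : LinearMap.ker (x + c • y) ∈ S := not_not.1 hc
    have hy0 : y ≠ 0 := by
      rintro rfl
      exact hx (by simpa using hc)
    have hyx (a : F) : a • y ≠ x := by
      rintro rfl
      exact smul_mem_dualCone hS (a + c) hy (by rwa [add_smul])
    set W := (Submodule.span F {x, y} : Submodule F (Dual F V))
    have hW : finrank F W = 2 := by
      have := finrank_span_eq_card ((LinearIndependent.pair_iff' hy0).2 hyx)
      rwa [Matrix.range_cons_cons_empty, Set.pair_comm] at this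
    have hWann := Subspace.finrank_add_finrank_dualCoannihilator_eq W
    have hle : W.dualCoannihilator ≤ LinearMap.ker (x + c • y) := fun v hv =>
      (Submodule.mem_dualCoannihilator v).1 hv _ (Submodule.mem_span_pair.2 ⟨1, c, by simp⟩)
    have hcard := hS₂ W.dualCoannihilator (by omega) ⟨_, hc, hle⟩
    have hlt := ncard_span_pair_sdiff_dualCone_lt hS hx hy hxy
    rw [ncard_mem_sdiff_dualCone hS] at hlt
    exact hlt.not_ge (Nat.mul_le_mul_left _ hcard)

lemma ncard_section_dualCone_add (v : V) :
    {e ∈ dualCone S | e v = 0}.ncard + (Nat.card F - 1) * {π ∈ S | F ∙ v ≤ π}.ncard =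
      Nat.card (LinearMap.ker (Dual.eval F V v)) := by
  have : Finite (Dual F V) := DFunLike.finite _
  rw [← ncard_setOf_ker_mem fun π hπ => hS π hπ.1, ← SetLike.coe_sort_coe,
    Nat.card_coe_set_eq, ← Set.ncard_inter_add_ncard_sdiff_eq_ncard
      (LinearMap.ker (Dual.eval F V v) : Set (Dual F V)) (dualCone S)]
  congr 2 <;> ext e <;> simp [dualCone, and_comm]

end DualCone

end Duality

section Parabolic
variable {F V : Type*} [Field F] [AddCommGroup V] [Module F V] [Finite F] [Finite V] {n q : ℕ}

lemma ellipticCone_dualCone (hn : 2 ≤ n) (hq : Nat.card F = q) (hq2 : 2 < q)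
    (hV : finrank F V = 2 * n + 2) {S : Set (Submodule F V)}
    (hhyp : ∀ π ∈ S, finrank F π = 2 * n + 1)
    (hP1 : ∀ p : Submodule F V, finrank F p = 1 →
      {π ∈ S | p ≤ π}.ncard = q ^ n * (q ^ n + 1) ∨ {π ∈ S | p ≤ π}.ncard = q ^ (2 * n))
    (hP2 : ∀ W : Submodule F V, finrank F W = 2 * n →
      (∃ π ∈ S, W ≤ π) → q - 1 ≤ {π ∈ S | W ≤ π}.ncard) :
    EllipticCone F n q (dualCone S) := by
  have hS : ∀ π ∈ S, finrank F π + 1 = finrank F V := fun π hπ => by rw [hhyp π hπ, hV]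
  have hdual : finrank F (Dual F V) = 2 * n + 2 := by rw [Subspace.dual_finrank_eq, hV]
  refine ⟨lineClosedCone_dualCone hS fun W hW => hq ▸ hP2 W (by omega), hn, hq, hq2, hdual,
    fun l hl => ?_⟩
  obtain ⟨v, rfl⟩ := (evalEquiv F V).surjective l
  have hv : v ≠ 0 := by
    rintro rfl
    simp at hl
  have hker : finrank F (LinearMap.ker (Dual.eval F V v)) = 2 * n + 1 := by
    have := Dual.finrank_ker_add_one_of_ne_zero (f := Dual.eval F V v) hl
    omega
  have hcard := ncard_section_dualCone_add hS v
  rw [natCard_eq_pow_finrank (K := F) (V := LinearMap.ker _), hker, hq] at hcard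
  change ({e ∈ dualCone S | e v = 0}.ncard : ℤ) = _ ∨ ({e ∈ dualCone S | e v = 0}.ncard : ℤ) = _
  rw [tangentSectionCard]
  zify [hq2.le.trans' one_le_two] at hcard
  rcases hP1 _ (finrank_span_singleton hv) with hcount | hcount
  · right
    rw [hcount] at hcard
    push_cast at hcard
    linear_combination hcard
  · left
    rw [hcount] at hcard
    push_cast at hcard
    linear_combination hcard

lemma ncard_points_eq_iff (hq : Nat.card F = q) (φ : QuadraticForm F V) (π : Submodule F V)
    (m : ℕ) :
    {p : Submodule F V | finrank F p = 1 ∧ p ≤ π ∧ ∀ v ∈ p, φ v = 0}.ncard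
      = (q ^ m - 1) / (q - 1) ↔ {v ∈ π | φ v = 0}.ncard = q ^ m := by
  have hq1 : 1 < q := hq ▸ Finite.one_lt_card
  have hcard := ncard_eq_mul_ncard_points_add_one (F := F) (T := {v ∈ π | φ v = 0}) (by simp)
    fun a v hv => ⟨π.smul_mem a hv.1, by rw [QuadraticMap.map_smul, hv.2, smul_zero]⟩
  have hpoints : {p : Submodule F V | finrank F p = 1 ∧ ∀ v ∈ p, v ∈ {v ∈ π | φ v = 0}} =
      {p : Submodule F V | finrank F p = 1 ∧ p ≤ π ∧ ∀ v ∈ p, φ v = 0} := by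
    ext p
    exact and_congr_right fun _ => forall₂_and
  obtain ⟨k, hk⟩ : q - 1 ∣ q ^ m - 1 := by simpa using Nat.sub_dvd_pow_sub_pow q 1 m
  have hpow : q ^ m = (q - 1) * k + 1 := by
    have := Nat.one_le_pow m q (by omega)
    omega
  rw [hcard, hpoints, hq, hpow, Nat.add_sub_cancel, Nat.mul_div_cancel_left _ (by omega),
    Nat.add_right_cancel_iff, Nat.mul_right_inj (by omega)]

namespace EllipticCone
variable {Z : Set (Dual F V)} {Φ : QuadraticForm F (Dual F V)} (h : EllipticCone F n q Z)
  (hΦ : ∀ e, e ∈ Z ↔ Φ e = 0)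
include h hΦ

lemma exists_linearEquiv_polar :
    ∃ ψ : V ≃ₗ[F] Dual F V, ∀ v e, QuadraticMap.polar Φ e (ψ v) = e v := by
  have : Finite (Dual F V) := DFunLike.finite _
  have hinj : Function.Injective Φ.polarBilin :=
    (injective_iff_map_eq_zero _).2 fun e => h.eq_zero_of_polarBilin_eq_zero hΦ
  let B : Dual F V ≃ₗ[F] Dual F (Dual F V) :=
    LinearEquiv.ofInjectiveOfFinrankEq Φ.polarBilin hinj Subspace.dual_finrank_eq.symm
  refine ⟨(evalEquiv F V).trans B.symm, fun v e => ?_⟩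
  have happly : B (B.symm (evalEquiv F V v)) e = e v := by simp
  rwa [QuadraticMap.polar_comm]

variable {ψ : V ≃ₗ[F] Dual F V} (hψ : ∀ v e, QuadraticMap.polar Φ e (ψ v) = e v)
include hψ

lemma notMem_iff_ncard_ker {e : Dual F V} (he : e ≠ 0) :
    e ∉ Z ↔ {v ∈ LinearMap.ker e | Φ.comp ψ.toLinearMap v = 0}.ncard = q ^ (2 * n) := by
  have : Finite (Dual F V) := DFunLike.finite _
  have himage : ψ '' {v | v ∈ LinearMap.ker e ∧ Φ.comp ψ.toLinearMap v = 0} =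
      {z | z ∈ Z ∧ Φ.polarBilin e z = 0} := by
    ext z
    obtain ⟨v, rfl⟩ := ψ.surjective z
    rw [ψ.injective.mem_set_image]
    simp [hΦ, hψ, and_comm]
  rw [← h.ncard_section_polarBilin_eq_iff hΦ he, ← himage,
    Set.ncard_image_of_injective _ ψ.injective, ← pow_mul', mul_comm]
  norm_cast

end EllipticCone

lemma EllipticCone.mem_iff_ncard_points_eq {S : Set (Submodule F V)}
    (h : EllipticCone F n q (dualCone S)) {Φ : QuadraticForm F (Dual F V)}
    (hΦ : ∀ e, e ∈ dualCone S ↔ Φ e = 0) {ψ : V ≃ₗ[F] Dual F V}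
    (hψ : ∀ v e, QuadraticMap.polar Φ e (ψ v) = e v) {π : Submodule F V}
    (hπ : finrank F π + 1 = finrank F V) :
    π ∈ S ↔ {p : Submodule F V | finrank F p = 1 ∧ p ≤ π ∧
      ∀ v ∈ p, Φ.comp ψ.toLinearMap v = 0}.ncard = (q ^ (2 * n) - 1) / (q - 1) := by
  obtain ⟨e, he, rfl⟩ := exists_ker_eq hπ
  rw [ncard_points_eq_iff h.card_eq, ← h.notMem_iff_ncard_ker hΦ hψ he]
  exact not_not.symm

end Parabolic

end EllipticQuadric

open Module EllipticQuadric in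
theorem stmt_1_general {F V : Type*} [Field F] [Finite F] [AddCommGroup V] [Module F V] (n : ℕ)
    (hn : 2 ≤ n) (q : ℕ) (hq : Nat.card F = q) (hq2 : 2 < q) (hV : finrank F V = 2 * n + 2)
    (S : Set (Submodule F V)) (hhyp : ∀ π ∈ S, finrank F π = 2 * n + 1)
    (hP1 : ∀ p : Submodule F V, finrank F p = 1 →
      {π ∈ S | p ≤ π}.ncard = q ^ n * (q ^ n + 1) ∨ {π ∈ S | p ≤ π}.ncard = q ^ (2 * n))
    (hP2 : ∀ W : Submodule F V, finrank F W = 2 * n →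
      (∃ π ∈ S, W ≤ π) → q - 1 ≤ {π ∈ S | W ≤ π}.ncard) :
    ∃ φ : QuadraticForm F V,
      (∀ x, (∀ y, φ (x + y) - φ x - φ y = 0) → x = 0) ∧
      (¬ ∃ W : Submodule F V, finrank F W = n + 1 ∧ ∀ v ∈ W, φ v = 0) ∧
      S = {π : Submodule F V | finrank F π = 2 * n + 1 ∧
        {p : Submodule F V | finrank F p = 1 ∧ p ≤ π ∧ ∀ v ∈ p, φ v = 0}.ncard =
          (q ^ (2 * n) - 1) / (q - 1)} := by
  have : Module.Finite F V := Module.finite_of_finrank_eq_succ hV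
  have : Finite V := Module.finite_of_finite F
  have : Finite (Dual F V) := DFunLike.finite _
  have h := ellipticCone_dualCone hn hq hq2 hV hhyp hP1 hP2
  obtain ⟨Φ, hΦ⟩ := h.exists_quadraticForm
  obtain ⟨ψ, hψ⟩ := h.exists_linearEquiv_polar hΦ
  refine ⟨Φ.comp ψ.toLinearMap, fun x hx => ?_, ?_, ?_⟩
  · refine ψ.map_eq_zero_iff.1 (h.eq_zero_of_polarBilin_eq_zero hΦ ?_)
    ext e
    obtain ⟨y, rfl⟩ := ψ.surjective e
    simpa [QuadraticMap.polar] using hx y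
  · rintro ⟨W, hW, hWφ⟩
    have hle := h.finrank_le_of_subset (W := W.map ψ.toLinearMap) <| by
      rintro _ ⟨v, hv, rfl⟩
      exact (hΦ _).2 (hWφ v hv)
    rw [LinearEquiv.finrank_map_eq ψ W] at hle
    omega
  · ext π
    have hmem (hπ : finrank F π = 2 * n + 1) :=
      h.mem_iff_ncard_points_eq hΦ hψ (π := π) (by rw [hπ, hV])
    exact ⟨fun hπ => ⟨hhyp π hπ, (hmem (hhyp π hπ)).1 hπ⟩, fun hπ => (hmem hπ.1).2 hπ.2⟩

/-- For `n ≥ 2` and prime power `q > 2`, a nonempty family `S` of hyperplanes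
of `PG(2n+1,q)` satisfying (P1⁻) and (P2) is the family of parabolic hyperplanes of some
nonsingular elliptic quadric `Q⁻(2n+1,q)`. -/
theorem stmt_1 (n : ℕ) (hn : 2 ≤ n)
    (F : Type) [Field F] [Fintype F] (q : ℕ) (hq : Fintype.card F = q) (hq2 : 2 < q)
    (S : Set (Submodule F (Fin (2*n+2) → F)))
    (hS : S.Nonempty)
    (hhyp : ∀ π ∈ S, Module.finrank F π = 2*n+1)
    (hP1 : ∀ p : Submodule F (Fin (2*n+2) → F), Module.finrank F p = 1 →
      {π ∈ S | p ≤ π}.ncard = q^n * (q^n + 1) ∨ {π ∈ S | p ≤ π}.ncard = q^(2*n))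
    (hP2 : ∀ W : Submodule F (Fin (2*n+2) → F), Module.finrank F W = 2*n →
      (∃ π ∈ S, W ≤ π) → q - 1 ≤ {π ∈ S | W ≤ π}.ncard) :
    ∃ φ : QuadraticForm F (Fin (2*n+2) → F),
      (∀ x, (∀ y, φ (x + y) - φ x - φ y = 0) → x = 0) ∧
      (¬ ∃ W : Submodule F (Fin (2*n+2) → F), Module.finrank F W = n+1 ∧ ∀ v ∈ W, φ v = 0) ∧
      S = {π : Submodule F (Fin (2*n+2) → F) | Module.finrank F π = 2*n+1 ∧
        {p : Submodule F (Fin (2*n+2) → F) |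
          Module.finrank F p = 1 ∧ p ≤ π ∧ ∀ v ∈ p, φ v = 0}.ncard = (q^(2*n) - 1)/(q - 1)} := by
  exact stmt_1_general n hn q (by rw [Nat.card_eq_fintype_card, hq]) hq2 (by simp) S hhyp hP1 hP2
end
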